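/- For every positive integer n with n ≡ 4 (mod 5) and n ∉ {4, 9, 24}, one has N̄(0,5,n) < N̄(2,5,n). -/

import Mathlib

/-- An overpartition of `n`: a partition of `n` together with a chosen subset of its
distinct part sizes (the overlined parts). -/
def Overpartition (n : ℕ) : Type :=
  {P : n.Partition × Finset ℕ // P.2 ⊆ P.1.parts.toFinset}

/-- The Dyson rank of an overpartition: largest part minus number of parts. -/
def Overpartition.rank {n : ℕ} (P : Overpartition n) : ℤ :=
  (P.1.1.parts.sup : ℤ) - (P.1.1.parts.card : ℤ)

/-- `nbarRank m n` is the number of overpartitions of `n` with rank `m`. -/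
noncomputable def nbarRank (m : ℤ) (n : ℕ) : ℕ :=
  Nat.card {P : Overpartition n // P.rank = m}

/-- `nbar a c n` is the number of overpartitions of `n` with rank congruent to `a` mod `c`. -/
noncomputable def nbar (a : ℤ) (c : ℕ) (n : ℕ) : ℕ :=
  Nat.card {P : Overpartition n // P.rank ≡ a [ZMOD (c : ℤ)]}

/-- `pbar n` is the number of overpartitions of `n`. -/
noncomputable def pbar (n : ℕ) : ℕ := Nat.card (Overpartition n)

section
open Filter Topology
namespace OP

lemma summable_real_th {P x : ℝ} (hP : 0 < P) (hP1 : P < 1) (hx : 0 < x) :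
    Summable (fun r : ℤ => P ^ (r*(r-1)) * x ^ r) := by
  have key : ∀ (y : ℝ), 0 < y → Summable (fun n : ℕ => P ^ ((n:ℤ)*((n:ℤ)-1)) * y ^ n) := by
    intro y hy
    apply summable_of_ratio_test_tendsto_lt_one (l := 0) one_pos
    · exact Eventually.of_forall (fun n => by positivity)
    · have h : ∀ n : ℕ, ‖P ^ (((n+1:ℕ):ℤ)*(((n+1:ℕ):ℤ)-1)) * y ^ (n+1)‖ / ‖P ^ ((n:ℤ)*((n:ℤ)-1)) * y ^ n‖ = (P^2)^n * y := by
        intro n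
        rw [Real.norm_of_nonneg (by positivity), Real.norm_of_nonneg (by positivity)]
        have : (((n+1:ℕ):ℤ)*(((n+1:ℕ):ℤ)-1)) = (n:ℤ)*((n:ℤ)-1) + ((2*n:ℕ):ℤ) := by push_cast; ring
        rw [this, zpow_add₀ hP.ne', zpow_natCast, pow_succ, pow_mul]
        have := zpow_pos hP ((n:ℤ)*((n:ℤ)-1))
        field_simp
      simp_rw [h]
      have := (tendsto_pow_atTop_nhds_zero_of_lt_one (r := P^2) (by positivity) (by nlinarith)).mul_const y
      simpa using this
  apply Summable.of_nat_of_neg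
  · simpa using key x hx
  · refine (key (P^2 * x⁻¹) (by positivity)).congr (fun n => ?_)
    have : (-(n:ℤ))*(-(n:ℤ)-1) = (n:ℤ)*((n:ℤ)-1) + ((2*n:ℕ):ℤ) := by push_cast; ring
    rw [this, zpow_add₀ hP.ne', zpow_natCast, mul_pow, pow_mul, zpow_neg, zpow_natCast, inv_pow]
    ring

/-- theta term -/
noncomputable def tt (p z : ℂ) (r : ℤ) : ℂ := p ^ (r*(r-1)) * (-z) ^ r
noncomputable def th (p z : ℂ) : ℂ := ∑' r : ℤ, tt p z r
noncomputable def Th (p z : ℂ) : ℂ := ∑' r : ℤ, (r:ℂ) * tt p z r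
noncomputable def Lm (p z u : ℂ) : ℂ := ∑' r : ℤ, tt p z r / (1 - u * p ^ (2*r))
noncomputable def Kr (p A b : ℂ) : ℂ := ∑' n : ℤ, A ^ n / (1 - b * p ^ (2*n))

lemma norm_tt (p z : ℂ) (r : ℤ) : ‖tt p z r‖ = ‖p‖ ^ (r*(r-1)) * ‖z‖ ^ r := by
  simp [tt]

lemma summable_norm_tt {p z : ℂ} (hp : p ≠ 0) (hp1 : ‖p‖ < 1) (hz : z ≠ 0) :
    Summable (fun r => ‖tt p z r‖) := by
  simp_rw [norm_tt]
  exact summable_real_th (by positivity) hp1 (by positivity)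

lemma summable_tt {p z : ℂ} (hp : p ≠ 0) (hp1 : ‖p‖ < 1) (hz : z ≠ 0) :
    Summable (tt p z) := (summable_norm_tt hp hp1 hz).of_norm

lemma summable_Th {p z : ℂ} (hp : p ≠ 0) (hp1 : ‖p‖ < 1) (hz : z ≠ 0) :
    Summable (fun r : ℤ => (r:ℂ) * tt p z r) := by
  have h1 := summable_norm_tt hp hp1 (z := 2*z) (by simpa using hz)
  have h2 := summable_norm_tt hp hp1 (z := 2⁻¹*z) (by simpa using hz)
  refine Summable.of_norm_bounded (h1.add h2) (fun r => ?_)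
  rw [norm_mul, norm_tt, norm_tt, norm_tt, norm_mul, norm_mul, mul_zpow, mul_zpow]
  have h3 : ‖(r:ℂ)‖ ≤ ‖(2:ℂ)‖^r + ‖(2⁻¹:ℂ)‖^r := by
    have : ∀ n : ℕ, (n:ℝ) ≤ 2^n := fun n => by exact_mod_cast (Nat.lt_two_pow_self (n := n)).le
    simp only [Complex.norm_intCast, norm_inv, Complex.norm_ofNat]
    rcases le_total 0 r with h | h
    · lift r to ℕ using h
      have := this r
      have h5 : (0:ℝ) ≤ 2⁻¹^(r:ℤ) := by positivity
      simp only [Int.cast_natCast, Nat.abs_cast, zpow_natCast] at *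
      linarith
    · obtain ⟨n, rfl⟩ : ∃ n : ℕ, r = -n := ⟨r.natAbs, by omega⟩
      have := this n
      have h5 : (0:ℝ) ≤ 2^(-(n:ℤ)) := by positivity
      simp only [zpow_neg, inv_zpow, inv_inv, zpow_natCast] at *
      simp
      linarith
  calc _ ≤ (‖(2:ℂ)‖^r + ‖(2⁻¹:ℂ)‖^r) * (‖p‖ ^ (r*(r-1)) * ‖z‖^r) := by gcongr
    _ = _ := by ring

lemma tt_shift {p z : ℂ} (hp : p ≠ 0) (hz : z ≠ 0) (i r : ℤ) :
    tt p (z * p^(2*i)) r = p^(-(i*(i-1))) * (-z)^(-i) * tt p z (r+i) := by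
  have hz' : -z ≠ 0 := neg_ne_zero.mpr hz
  unfold tt
  rw [show -(z * p^(2*i)) = -z * p^(2*i) by ring, mul_zpow, ← zpow_mul]
  rw [show (r+i)*(r+i-1) = r*(r-1) + 2*i*r + i*(i-1) by ring, zpow_add₀ hp, zpow_add₀ hp, zpow_add₀ hz', zpow_neg, zpow_neg]
  have := zpow_ne_zero (i*(i-1)) hp
  have := zpow_ne_zero i hz'
  field_simp

lemma th_shift {p z : ℂ} (hp : p ≠ 0) (hz : z ≠ 0) (i : ℤ) :
    th p (z * p^(2*i)) = p^(-(i*(i-1))) * (-z)^(-i) * th p z := by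
  unfold th
  simp_rw [tt_shift hp hz, tsum_mul_left]
  rw [← (Equiv.addRight i).tsum_eq (tt p z)]
  rfl

noncomputable def chi (s i : ℤ) : ℂ := (if 0 ≤ i ∧ i < s then 1 else 0) - (if s ≤ i ∧ i < 0 then 1 else 0)

lemma chi_succ (s i : ℤ) : chi (s+1) i = chi s i + if i = s then 1 else 0 := by
  unfold chi
  split_ifs <;> first | omega | norm_num

noncomputable def gg (s : ℤ) (y : ℂ) : ℂ := if y = 1 then (s:ℂ) else (1 - y^s)/(1-y)

lemma gg_succ (s : ℤ) {y : ℂ} (hy : y ≠ 0) : gg (s+1) y = gg s y + y^s := by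
  unfold gg
  split_ifs with h
  · simp [h]
  · have : 1 - y ≠ 0 := sub_ne_zero.mpr (Ne.symm h)
    rw [zpow_add₀ hy, zpow_one]
    field_simp
    ring

lemma hasSum_chi (s : ℤ) {y : ℂ} (hy : y ≠ 0) : HasSum (fun i => chi s i * y^i) (gg s y) := by
  have hs : ∀ s : ℤ, HasSum (fun i => (if i = s then 1 else 0) * y^i) (y^s) := by
    intro s
    have := hasSum_single (f := fun i => (if i = s then (1:ℂ) else 0) * y^i) s (by intro b hb; simp [hb])
    simpa using this
  have up : ∀ s : ℤ, HasSum (fun i => chi s i * y^i) (gg s y) → HasSum (fun i => chi (s+1) i * y^i) (gg (s+1) y) := by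
    intro s h
    have := h.add (hs s)
    simp_rw [← add_mul, ← chi_succ, ← gg_succ s hy] at this
    exact this
  have dn : ∀ s : ℤ, HasSum (fun i => chi (s+1) i * y^i) (gg (s+1) y) → HasSum (fun i => chi s i * y^i) (gg s y) := by
    intro s h
    have := h.sub (hs s)
    rw [gg_succ s hy, add_sub_cancel_right] at this
    refine this.congr_fun ?_ |> fun h => h
    intro i
    rw [chi_succ]; ring
  induction s using Int.induction_on with
  | zero =>
    have : (fun i => chi 0 i * y^i) = fun _ => 0 := by
      funext i
      have : chi 0 i = 0 := by
        unfold chi; split_ifs <;> first | omega | norm_num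
      rw [this, zero_mul]
    rw [this]
    have h2 : gg 0 y = 0 := by simp [gg]
    rw [h2]; exact hasSum_zero
  | succ n ih => exact up _ ih
  | pred n ih =>
    apply dn
    simpa using ih

lemma hasSum_psi {a p : ℂ} (hp : p ≠ 0) (hp1 : ‖p‖ < 1) (ha : 1 < ‖a‖) (ha2 : ‖a‖ * ‖p‖^2 < 1) (m : ℤ) :
    HasSum (fun i => chi (m+i) i * (a * p^(2*m))^i) (1 / (1 - a * p^(2*m))) ∧
    Summable (fun i => ‖chi (m+i) i * (a * p^(2*m))^i‖) := by
  have hP : 0 < ‖p‖ := by positivity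
  rcases le_or_gt m 0 with hm | hm
  · set w := a * p^(2*m) with hw
    have hw1 : 1 < ‖w‖ := by
      obtain ⟨k, rfl⟩ : ∃ k : ℕ, m = -k := ⟨m.natAbs, by omega⟩
      rw [hw, norm_mul, norm_zpow, show 2 * (-(k:ℤ)) = -((2*k:ℕ):ℤ) by push_cast; ring, zpow_neg, zpow_natCast]
      have : 1 ≤ (‖p‖^(2*k))⁻¹ := (one_le_inv₀ (by positivity)).2 (pow_le_one₀ hP.le hp1.le)
      nlinarith
    have hw0 : w ≠ 0 := by intro h; simp [h] at hw1; linarith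
    have hinj : Function.Injective (fun k : ℕ => -((k:ℤ)+1)) := by
      intro x y h; simp at h; exact_mod_cast h
    have hc : ∀ i : ℤ, chi (m+i) i = if i < 0 then -1 else 0 := by
      intro i; unfold chi; split_ifs <;> first | omega | norm_num
    have hout : ∀ i ∉ Set.range (fun k : ℕ => -((k:ℤ)+1)), chi (m+i) i * w^i = 0 := by
      intro i hi
      rw [hc, if_neg, zero_mul]
      intro h
      exact hi ⟨(-i-1).toNat, by simp; omega⟩
    have hterm : ∀ k : ℕ, chi (m+(-((k:ℤ)+1))) (-((k:ℤ)+1)) * w^(-((k:ℤ)+1)) = -(w⁻¹) * (w⁻¹)^k := by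
      intro k
      rw [hc, if_pos (by omega), zpow_neg, ← Nat.cast_succ, zpow_natCast, pow_succ, inv_pow, mul_inv]; ring
    have hlt : ‖w⁻¹‖ < 1 := by rw [norm_inv]; exact inv_lt_one_of_one_lt₀ hw1
    constructor
    · rw [← hinj.hasSum_iff hout]
      simp only [Function.comp_def, hterm]
      have := (hasSum_geometric_of_norm_lt_one hlt).mul_left (-(w⁻¹))
      suffices h5 : 1 / (1 - w) = -w⁻¹ * (1 - w⁻¹)⁻¹ by rw [h5]; exact this
      have : 1 - w ≠ 0 := by
        intro h
        have : w = 1 := by linear_combination -h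
        simp [this] at hw1
      have h3 : w - 1 ≠ 0 := by
        intro h; apply this; linear_combination -h
      have h4 : 1 - w⁻¹ = (w-1)/w := by field_simp
      rw [h4]
      field_simp
      ring
    · rw [← hinj.summable_iff (by intro i hi; rw [hout i hi, norm_zero])]
      simp only [Function.comp_def, hterm]
      simp only [norm_mul, norm_pow]
      exact (summable_geometric_of_lt_one (norm_nonneg _) hlt).mul_left _
  · set w := a * p^(2*m) with hw
    have hw1 : ‖w‖ < 1 := by
      obtain ⟨k, rfl⟩ : ∃ k : ℕ, m = k + 1 := ⟨(m-1).toNat, by omega⟩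
      rw [hw, norm_mul, norm_zpow, show 2 * ((k:ℤ)+1) = ((2+2*k:ℕ):ℤ) by push_cast; ring, zpow_natCast, pow_add]
      have : ‖p‖^(2*k) ≤ 1 := (pow_le_one₀ hP.le hp1.le)
      have h2 : 0 < ‖p‖^(2*k) := by positivity
      have : 0 < ‖a‖ * ‖p‖^2 := by positivity
      nlinarith
    have hinj : Function.Injective (fun k : ℕ => (k:ℤ)) := Nat.cast_injective
    have hc : ∀ i : ℤ, chi (m+i) i = if 0 ≤ i then 1 else 0 := by
      intro i; unfold chi; split_ifs <;> first | omega | norm_num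
    have hout : ∀ i ∉ Set.range (fun k : ℕ => (k:ℤ)), chi (m+i) i * w^i = 0 := by
      intro i hi
      rw [hc, if_neg, zero_mul]
      intro h
      exact hi ⟨i.toNat, by simp; omega⟩
    have hterm : ∀ k : ℕ, chi (m+(k:ℤ)) (k:ℤ) * w^(k:ℤ) = w^k := by
      intro k
      rw [hc, if_pos (by omega), zpow_natCast, one_mul]
    constructor
    · rw [← hinj.hasSum_iff hout]
      simp only [Function.comp_def, hterm]
      simpa using (hasSum_geometric_of_norm_lt_one hw1)
    · rw [← hinj.summable_iff (by intro i hi; rw [hout i hi, norm_zero])]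
      simp only [Function.comp_def, hterm, norm_pow]
      exact (summable_geometric_of_lt_one (norm_nonneg _) hw1)
end OP
end

section
open Filter Topology
namespace OP

lemma chi_bound {a p : ℂ} (hp : p ≠ 0) (hp1 : ‖p‖ < 1) (ha : 1 < ‖a‖) (m i : ℤ) :
    ‖chi (m+i) i * (a * p^(2*m))^i‖ ≤ (max (‖a‖⁻¹) (‖a‖ * ‖p‖^2)) ^ i.natAbs := by
  have hP : 0 < ‖p‖ := by positivity
  set ρ := max (‖a‖⁻¹) (‖a‖ * ‖p‖^2)
  have hρ0 : 0 ≤ ρ := le_trans (by positivity) (le_max_left _ _)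
  rcases le_or_gt m 0 with hm | hm
  · have hc : chi (m+i) i = if i < 0 then -1 else 0 := by
      unfold chi; split_ifs <;> first | omega | norm_num
    rw [hc]
    split_ifs with h
    · obtain ⟨k, rfl⟩ : ∃ k : ℕ, m = -k := ⟨m.natAbs, by omega⟩
      obtain ⟨l, rfl⟩ : ∃ k : ℕ, i = -k := ⟨i.natAbs, by omega⟩
      rw [Int.natAbs_neg, Int.natAbs_natCast, zpow_neg, zpow_natCast, ← inv_pow]
      simp only [norm_mul, norm_neg, norm_one, one_mul, norm_pow, norm_inv, norm_zpow]
      apply pow_le_pow_left₀ (by positivity)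
      apply le_trans _ (le_max_left _ _)
      apply inv_anti₀ (by positivity)
      rw [show 2 * (-(k:ℤ)) = -((2*k:ℕ):ℤ) by push_cast; ring, zpow_neg, zpow_natCast]
      have : 1 ≤ (‖p‖^(2*k))⁻¹ := (one_le_inv₀ (by positivity)).2 (pow_le_one₀ hP.le hp1.le)
      nlinarith
    · simp only [zero_mul, norm_zero]; positivity
  · have hc : chi (m+i) i = if 0 ≤ i then 1 else 0 := by
      unfold chi; split_ifs <;> first | omega | norm_num
    rw [hc]
    split_ifs with h
    · obtain ⟨k, rfl⟩ : ∃ k : ℕ, m = k + 1 := ⟨(m-1).toNat, by omega⟩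
      lift i to ℕ using h
      rw [Int.natAbs_natCast, zpow_natCast]
      simp only [norm_mul, norm_one, one_mul, norm_pow, norm_zpow]
      apply pow_le_pow_left₀ (by positivity)
      apply le_trans _ (le_max_right _ _)
      rw [show 2 * ((k:ℤ)+1) = ((2+2*k:ℕ):ℤ) by push_cast; ring, zpow_natCast, pow_add]
      have : ‖p‖^(2*k) ≤ 1 := (pow_le_one₀ hP.le hp1.le)
      have h2 : 0 < ‖p‖^(2*k) := by positivity
      have : 0 < ‖a‖ * ‖p‖^2 := by positivity
      nlinarith
    · simp only [zero_mul, norm_zero]; positivity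

lemma summable_natAbs {ρ : ℝ} (h0 : 0 ≤ ρ) (h1 : ρ < 1) : Summable (fun i : ℤ => ρ ^ i.natAbs) := by
  apply Summable.of_nat_of_neg
  · simpa using summable_geometric_of_lt_one h0 h1
  · simpa using summable_geometric_of_lt_one h0 h1

noncomputable def UU (p a z0 : ℂ) (x : ℤ × ℤ) : ℂ := tt p z0 x.1 * (chi (x.1+x.2) x.2 * (a * p^(2*x.1))^x.2)

lemma summable_UU {a p z0 : ℂ} (hp : p ≠ 0) (hp1 : ‖p‖ < 1) (ha : 1 < ‖a‖) (ha2 : ‖a‖ * ‖p‖^2 < 1) (hz : z0 ≠ 0) :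
    Summable (fun x => ‖UU p a z0 x‖) := by
  have h1 := summable_norm_tt hp hp1 hz
  have h2 := summable_natAbs (ρ := max (‖a‖⁻¹) (‖a‖ * ‖p‖^2)) (le_trans (by positivity) (le_max_left _ _))
    (max_lt (inv_lt_one_of_one_lt₀ ha) ha2)
  refine Summable.of_nonneg_of_le (fun _ => norm_nonneg _) (fun x => ?_)
    (h1.mul_of_nonneg h2 (fun _ => norm_nonneg _) (fun i => pow_nonneg (le_trans (by positivity) (le_max_left _ _)) _))
  rw [UU, norm_mul]
  gcongr
  exact chi_bound hp hp1 ha _ _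

lemma tsum_UU {a p z0 : ℂ} (hp : p ≠ 0) (hp1 : ‖p‖ < 1) (ha : 1 < ‖a‖) (ha2 : ‖a‖ * ‖p‖^2 < 1) (hz : z0 ≠ 0) :
    ∑' x, UU p a z0 x = Lm p z0 a := by
  rw [(summable_UU hp hp1 ha ha2 hz).of_norm.tsum_prod]
  unfold Lm
  congr 1
  funext m
  unfold UU
  simp only
  rw [tsum_mul_left, (hasSum_psi hp hp1 ha ha2 m).1.tsum_eq]
  ring

noncomputable def FF (p z0 z1 b : ℂ) (n : ℤ) (s i : ℤ) : ℂ := tt p z1 n * (tt p z0 s * (chi s i * (b * p^(2*n))^i))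

lemma FF_eq {p z0 z1 a b : ℂ} (hp : p ≠ 0) (hz0 : z0 ≠ 0) (hz1 : z1 ≠ 0) (hb : b ≠ 0)
    (hab : z0 * b = z1 * a) (n m i : ℤ) :
    FF p z0 z1 b n (m+i) i = UU p a z0 (m,i) * tt p z1 (n+i) := by
  unfold FF UU tt
  simp only
  have ha : a = z0 * b / z1 := by field_simp; linear_combination -hab
  have hz0' : -z0 ≠ 0 := neg_ne_zero.mpr hz0
  have hz1' : -z1 ≠ 0 := neg_ne_zero.mpr hz1
  rw [show (n+i)*(n+i-1) = n*(n-1) + 2*n*i + i*(i-1) by ring, zpow_add₀ hp, zpow_add₀ hp, zpow_add₀ hz1',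
    show (m+i)*(m+i-1) = m*(m-1) + 2*m*i + i*(i-1) by ring, zpow_add₀ hp, zpow_add₀ hp, zpow_add₀ hz0',
    mul_zpow, mul_zpow, ← zpow_mul, ← zpow_mul, ha,
    show z0 * b / z1 = (-z0) * b / (-z1) by field_simp, div_zpow, mul_zpow]
  have := zpow_ne_zero i hz1'
  field_simp

lemma summable_FF {p z0 z1 a b : ℂ} (hp : p ≠ 0) (hp1 : ‖p‖ < 1) (hz0 : z0 ≠ 0) (hz1 : z1 ≠ 0) (hb : b ≠ 0)
    (ha : 1 < ‖a‖) (ha2 : ‖a‖ * ‖p‖^2 < 1) (hab : z0 * b = z1 * a) :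
    HasSum (fun x : ℤ × (ℤ × ℤ) => FF p z0 z1 b x.1 x.2.1 x.2.2) (th p z1 * Lm p z0 a) := by
  have hU := summable_UU hp hp1 ha ha2 hz0
  have hV := summable_norm_tt hp hp1 hz1
  have h1 : HasSum (fun x : (ℤ × ℤ) × ℤ => UU p a z0 x.1 * tt p z1 x.2) (Lm p z0 a * th p z1) := by
    have := (summable_mul_of_summable_norm hU hV).hasSum
    rwa [← tsum_mul_tsum_of_summable_norm hU hV, tsum_UU hp hp1 ha ha2 hz0] at this
  let e : ℤ × (ℤ × ℤ) ≃ (ℤ × ℤ) × ℤ :=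
    { toFun := fun x => ((x.2.1 - x.2.2, x.2.2), x.1 + x.2.2)
      invFun := fun y => (y.2 - y.1.2, (y.1.1 + y.1.2, y.1.2))
      left_inv := fun x => by simp
      right_inv := fun y => by simp }
  rw [mul_comm, ← e.hasSum_iff] at h1
  refine h1.congr_fun ?_ |> fun h => h
  rintro ⟨n, s, i⟩
  have := FF_eq hp hz0 hz1 hb hab n (s-i) i
  rw [sub_add_cancel] at this
  simpa [e] using this

lemma base {p z0 z1 a b : ℂ} (hp : p ≠ 0) (hp1 : ‖p‖ < 1) (hz0 : z0 ≠ 0) (hz1 : z1 ≠ 0) (hb : b ≠ 0)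
    (ha : 1 < ‖a‖) (ha2 : ‖a‖ * ‖p‖^2 < 1) (hab : z0 * b = z1 * a) :
    HasSum (fun n => tt p z1 n * ∑' s, tt p z0 s * gg s (b * p^(2*n))) (th p z1 * Lm p z0 a) := by
  have h := summable_FF hp hp1 hz0 hz1 hb ha ha2 hab
  refine (h.prod_fiberwise (fun n => ?_))
  have h2 : Summable (fun x : ℤ × ℤ => FF p z0 z1 b n x.1 x.2) := h.summable.prod_factor n
  have h3 := h2.hasSum
  rw [h2.tsum_prod] at h3
  convert h3 using 1
  simp only [FF]
  simp_rw [tsum_mul_left]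
  congr 2
  funext s
  rw [(hasSum_chi s (mul_ne_zero hb (zpow_ne_zero _ hp))).tsum_eq]

/-- boundedness of `1/(1-b p^{2n})`, `n ≥ 0` -/
lemma bdd_inv {p : ℂ} (hp1 : ‖p‖ < 1) (b c : ℂ) (hc : c ≠ 0) :
    ∃ C : ℝ, 0 ≤ C ∧ ∀ n : ℕ, ‖1 / (c - b * p^(2*n))‖ ≤ C := by
  have h1 : Tendsto (fun n : ℕ => p^(2*n)) atTop (𝓝 0) := by
    have : ‖p^2‖ < 1 := by rw [norm_pow]; exact pow_lt_one₀ (norm_nonneg _) hp1 (by norm_num)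
    simpa [pow_mul] using tendsto_pow_atTop_nhds_zero_of_norm_lt_one this
  have h2 : Tendsto (fun n : ℕ => ‖1 / (c - b * p^(2*n))‖) atTop (𝓝 ‖1/(c - b * 0)‖) := by
    apply Tendsto.norm
    apply Tendsto.div tendsto_const_nhds _ (by simpa using hc)
    exact tendsto_const_nhds.sub (tendsto_const_nhds.mul h1)
  obtain ⟨C, hC⟩ := h2.bddAbove_range
  refine ⟨C, le_trans (norm_nonneg _) (hC ⟨0, rfl⟩), fun n => hC ⟨n, rfl⟩⟩

lemma inv_neg_eq {p : ℂ} (hp : p ≠ 0) (b : ℂ) (n : ℕ) :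
    1 / (1 - b * p^(2*(-(n:ℤ)))) = p^(2*n) * (1 / (-b - (-1) * p^(2*n))) := by
  rw [show 2 * (-(n:ℤ)) = -((2*n:ℕ):ℤ) by push_cast; ring, zpow_neg, zpow_natCast]
  have h : p^(2*n) ≠ 0 := pow_ne_zero _ hp
  have : 1 - b * (p^(2*n))⁻¹ = (-b - (-1) * p^(2*n)) / p^(2*n) := by field_simp; ring
  rw [this]
  by_cases h0 : (-b - (-1) * p^(2*n)) = 0
  · rw [h0]; simp
  · field_simp

lemma bdd_inv_int {p : ℂ} (hp : p ≠ 0) (hp1 : ‖p‖ < 1) (b : ℂ) (hb : b ≠ 0) :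
    ∃ C : ℝ, 0 ≤ C ∧ (∀ n : ℕ, ‖1 / (1 - b * p^(2*(n:ℤ)))‖ ≤ C) ∧
      ∀ n : ℕ, ‖1 / (1 - b * p^(2*(-(n:ℤ))))‖ ≤ C * ‖p‖^(2*n) := by
  obtain ⟨C1, h1, h2⟩ := bdd_inv hp1 b 1 one_ne_zero
  obtain ⟨C2, h3, h4⟩ := bdd_inv hp1 (-1) (-b) (neg_ne_zero.mpr hb)
  refine ⟨max C1 C2, le_max_of_le_left h1, fun n => ?_, fun n => ?_⟩
  · have := h2 n
    rw [show 2 * ((n:ℤ)) = ((2*n:ℕ):ℤ) by push_cast; ring, zpow_natCast]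
    exact this.trans (le_max_left _ _)
  · rw [inv_neg_eq hp, norm_mul, norm_pow, mul_comm]
    gcongr
    exact (h4 n).trans (le_max_right _ _)

lemma summable_Lm {p z b : ℂ} (hp : p ≠ 0) (hp1 : ‖p‖ < 1) (hz : z ≠ 0) (hb : b ≠ 0) :
    Summable (fun n => tt p z n / (1 - b * p^(2*n))) := by
  obtain ⟨C, hC, h1, h2⟩ := bdd_inv_int hp hp1 b hb
  refine Summable.of_norm_bounded ((summable_norm_tt hp hp1 hz).mul_right C) (fun n => ?_)
  rw [div_eq_mul_one_div, norm_mul]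
  gcongr
  rcases le_total 0 n with h | h
  · lift n to ℕ using h; exact h1 n
  · obtain ⟨k, rfl⟩ : ∃ k : ℕ, n = -k := ⟨n.natAbs, by omega⟩
    refine (h2 k).trans ?_
    have : ‖p‖^(2*k) ≤ 1 := pow_le_one₀ (norm_nonneg _) hp1.le
    nlinarith

lemma summable_Kr {p A b : ℂ} (hp : p ≠ 0) (hp1 : ‖p‖ < 1) (hA : ‖A‖ < 1) (hA2 : ‖p‖^2 < ‖A‖) (hb : b ≠ 0) :
    Summable (fun n : ℤ => A^n / (1 - b * p^(2*n))) := by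
  obtain ⟨C, hC, h1, h2⟩ := bdd_inv_int hp hp1 b hb
  have hA0 : 0 < ‖A‖ := lt_of_le_of_lt (by positivity) hA2
  apply Summable.of_nat_of_neg
  · refine Summable.of_norm_bounded ((summable_geometric_of_lt_one (norm_nonneg _) hA).mul_right C) (fun n => ?_)
    rw [div_eq_mul_one_div, norm_mul, zpow_natCast, norm_pow]
    gcongr
    exact h1 n
  · have hr : ‖p‖^2/‖A‖ < 1 := by rw [div_lt_one hA0]; exact hA2
    refine Summable.of_norm_bounded ((summable_geometric_of_lt_one (by positivity) hr).mul_right C) (fun n => ?_)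
    rw [div_eq_mul_one_div, norm_mul, zpow_neg, zpow_natCast, norm_inv, norm_pow]
    have := h2 n
    calc _ ≤ (‖A‖^n)⁻¹ * (C * ‖p‖^(2*n)) := by gcongr
      _ = _ := by rw [div_pow, pow_mul]; ring

lemma inner_ne {p z0 : ℂ} (hp : p ≠ 0) (hp1 : ‖p‖ < 1) (hz0 : z0 ≠ 0) {y : ℂ} (hy0 : y ≠ 0) (hy : y ≠ 1) :
    ∑' s, tt p z0 s * gg s y = (th p z0 - th p (z0 * y)) / (1 - y) := by
  have h : ∀ s, tt p z0 s * gg s y = (tt p z0 s - tt p (z0*y) s) / (1 - y) := by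
    intro s
    rw [gg, if_neg hy]
    unfold tt
    rw [show -(z0*y) = -z0*y by ring, mul_zpow]
    ring
  simp_rw [h]
  rw [tsum_div_const, Summable.tsum_sub (summable_tt hp hp1 hz0) (summable_tt hp hp1 (mul_ne_zero hz0 hy0))]
  rfl

/-- Changing-z identity, double series form. -/
lemma CZ {p z0 z1 a b : ℂ} (hp : p ≠ 0) (hp1 : ‖p‖ < 1) (hz0 : z0 ≠ 0) (hz1 : z1 ≠ 0) (hb : b ≠ 0)
    (ha : 1 < ‖a‖) (ha2 : ‖a‖ * ‖p‖^2 < 1) (hab : z0 * b = z1 * a) (hbp : ∀ n : ℤ, b * p^(2*n) ≠ 1) :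
    th p z0 * Lm p z1 b - th p (z1*a) * Kr p a⁻¹ b = th p z1 * Lm p z0 a := by
  have h := (base hp hp1 hz0 hz1 hb ha ha2 hab).tsum_eq
  have ha0 : a ≠ 0 := by intro h; simp [h] at ha; linarith
  have hterm : ∀ n : ℤ, tt p z1 n * ∑' s, tt p z0 s * gg s (b * p^(2*n)) =
      th p z0 * (tt p z1 n / (1 - b * p^(2*n))) - th p (z1*a) * ((a⁻¹)^n / (1 - b * p^(2*n))) := by
    intro n
    rw [inner_ne hp hp1 hz0 (mul_ne_zero hb (zpow_ne_zero _ hp)) (hbp n), ← mul_assoc, hab,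
      th_shift hp (mul_ne_zero hz1 ha0)]
    have : tt p z1 n * (p^(-(n*(n-1))) * (-(z1*a))^(-n)) = (a⁻¹)^n := by
      unfold tt
      rw [show -(z1*a) = -z1 * a by ring, mul_zpow, zpow_neg, zpow_neg, zpow_neg, inv_zpow]
      have := zpow_ne_zero (n*(n-1)) hp
      have := zpow_ne_zero n (neg_ne_zero.mpr hz1)
      field_simp
    rw [← this]
    ring
  simp_rw [hterm] at h
  have hA : ‖a⁻¹‖ < 1 := by rw [norm_inv]; exact inv_lt_one_of_one_lt₀ ha
  have hA2 : ‖p‖^2 < ‖a⁻¹‖ := by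
    rw [norm_inv, ← one_div, lt_div_iff₀ (by positivity)]; linarith [mul_comm ‖a‖ (‖p‖^2)]
  rw [Summable.tsum_sub ((summable_Lm hp hp1 hz1 hb).mul_left _) ((summable_Kr hp hp1 hA hA2 hb).mul_left _),
    tsum_mul_left, tsum_mul_left] at h
  exact h

/-- Degenerate version, `b = 1`. -/
lemma CZ1 {p z0 z1 a : ℂ} (hp : p ≠ 0) (hp1 : ‖p‖ < 1) (hz0 : z0 ≠ 0) (hz1 : z1 ≠ 0)
    (ha : 1 < ‖a‖) (ha2 : ‖a‖ * ‖p‖^2 < 1) (hab : z0 = z1 * a) :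
    th p z0 * Lm p z1 1 - th p z0 * Kr p a⁻¹ 1 + Th p z0 = th p z1 * Lm p z0 a := by
  have h := (base hp hp1 hz0 hz1 one_ne_zero ha ha2 (by rw [mul_one]; exact hab)).tsum_eq
  have ha0 : a ≠ 0 := by intro h; simp [h] at ha; linarith
  have hterm : ∀ n : ℤ, tt p z1 n * ∑' s, tt p z0 s * gg s (1 * p^(2*n)) =
      th p z0 * (tt p z1 n / (1 - 1 * p^(2*n))) - th p z0 * ((a⁻¹)^n / (1 - 1 * p^(2*n))) + 
       (if n = 0 then Th p z0 else 0) := by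
    intro n
    split_ifs with hn
    · subst hn
      simp [gg, Th, tt, mul_comm]
    rw [inner_ne hp hp1 hz0 (mul_ne_zero one_ne_zero (zpow_ne_zero _ hp)) ?_, ← mul_assoc, mul_one, hab,
      th_shift hp (mul_ne_zero hz1 ha0)]
    · have : tt p z1 n * (p^(-(n*(n-1))) * (-(z1*a))^(-n)) = (a⁻¹)^n := by
        unfold tt
        rw [show -(z1*a) = -z1 * a by ring, mul_zpow, zpow_neg, zpow_neg, zpow_neg, inv_zpow]
        have := zpow_ne_zero (n*(n-1)) hp
        have := zpow_ne_zero n (neg_ne_zero.mpr hz1)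
        field_simp
      rw [← this]
      ring
    · intro h
      rw [one_mul] at h
      have h2 := congrArg norm h
      rw [norm_zpow, norm_one, zpow_eq_one_iff_right₀ (norm_nonneg _) hp1.ne] at h2
      omega
  simp_rw [hterm] at h
  have hA : ‖a⁻¹‖ < 1 := by rw [norm_inv]; exact inv_lt_one_of_one_lt₀ ha
  have hA2 : ‖p‖^2 < ‖a⁻¹‖ := by
    rw [norm_inv, ← one_div, lt_div_iff₀ (by positivity)]; linarith [mul_comm ‖a‖ (‖p‖^2)]
  have hs : HasSum (fun n : ℤ => if n = 0 then Th p z0 else 0) (Th p z0) := by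
    have := hasSum_single (f := fun n : ℤ => if n = 0 then Th p z0 else 0) 0 (by intro b hb; simp [hb])
    simpa using this
  rw [Summable.tsum_add (((summable_Lm hp hp1 hz1 one_ne_zero).mul_left _).sub ((summable_Kr hp hp1 hA hA2 one_ne_zero).mul_left _)) hs.summable,
   Summable.tsum_sub ((summable_Lm hp hp1 hz1 one_ne_zero).mul_left _) ((summable_Kr hp hp1 hA hA2 one_ne_zero).mul_left _),
    tsum_mul_left, tsum_mul_left, hs.tsum_eq] at h
  exact h

end OP
end

section
open Filter Topology
namespace OP

noncomputable def ex (q : ℂ) (k r : ℤ) : ℂ := (-1)^r * q^(5*r*(r-1)+k*r)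
noncomputable def t (q : ℂ) (k : ℤ) : ℂ := th (q^5) (q^k)
noncomputable def L (q : ℂ) (k s : ℤ) : ℂ := Lm (q^5) (q^k) (q^s)

lemma p5 (q : ℂ) (m : ℤ) : (q^5)^m = q^(5*m) := by
  rw [zpow_mul]; norm_cast

lemma tt_ex {q : ℂ} (hq : q ≠ 0) (k r : ℤ) : tt (q^5) (q^k) r = ex q k r := by
  unfold tt ex
  rw [p5, neg_eq_neg_one_mul, mul_zpow, ← zpow_mul, zpow_add₀ hq, ← mul_assoc 5]; ring

lemma t_eq {q : ℂ} (hq : q ≠ 0) (k : ℤ) : t q k = ∑' r : ℤ, ex q k r := by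
  simp only [t, th, tt_ex hq]

lemma den_eq {q : ℂ} (hq : q ≠ 0) (s r : ℤ) : q^s * (q^5)^(2*r) = q^(s+10*r) := by
  rw [p5, zpow_add₀ hq]; congr 2; ring

lemma L_eq {q : ℂ} (hq : q ≠ 0) (k s : ℤ) : L q k s = ∑' r : ℤ, ex q k r / (1 - q^(s+10*r)) := by
  simp only [L, Lm, tt_ex hq, den_eq hq]

lemma p_ne {q : ℂ} (hq : q ≠ 0) : q^5 ≠ 0 := pow_ne_zero _ hq
lemma p_lt {q : ℂ} (hq1 : ‖q‖ < 1) : ‖q^5‖ < 1 := by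
  rw [norm_pow]; exact pow_lt_one₀ (norm_nonneg _) hq1 (by norm_num)

lemma sum_ex {q : ℂ} (hq : q ≠ 0) (hq1 : ‖q‖ < 1) (k : ℤ) : Summable (fun r => ex q k r) := by
  have := summable_tt (p_ne hq) (p_lt hq1) (zpow_ne_zero k hq)
  exact this.congr fun r => (tt_ex hq k r)

lemma sum_L {q : ℂ} (hq : q ≠ 0) (hq1 : ‖q‖ < 1) (k s : ℤ) :
    Summable (fun r => ex q k r / (1 - q^(s+10*r))) := by
  have := summable_Lm (p_ne hq) (p_lt hq1) (zpow_ne_zero k hq) (zpow_ne_zero s hq)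
  simpa only [tt_ex hq, den_eq hq] using this

lemma one_sub_ne {q : ℂ} (hq : q ≠ 0) (hq1 : ‖q‖ < 1) {m : ℤ} (hm : m ≠ 0) : 1 - q^m ≠ 0 := by
  intro h
  have h1 : ‖q^m‖ = 1 := by rw [← sub_eq_zero.mp h]; simp
  rw [norm_zpow] at h1
  have := (zpow_eq_one_iff_right₀ (norm_nonneg q) hq1.ne).mp h1
  exact hm this

lemma ex_sub {q : ℂ} (hq : q ≠ 0) (k r : ℤ) : ex q k (r-1) = -q^(10-k) * ex q (k-10) r := by
  unfold ex
  rw [show 5*(r-1)*(r-1-1)+k*(r-1) = (10-k) + (5*r*(r-1)+(k-10)*r) by ring, zpow_add₀ hq,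
    zpow_sub_one₀ (by norm_num)]; norm_num; ring

lemma ex_one_sub {q : ℂ} (hq : q ≠ 0) (k r : ℤ) : ex q (-k) (1-r) = -q^(-k) * ex q k r := by
  unfold ex
  rw [show 5*(1-r)*(1-r-1)+-k*(1-r) = -k + (5*r*(r-1)+k*r) by ring, zpow_add₀ hq,
    zpow_sub₀ (by norm_num), zpow_one]
  have : (-1:ℂ)^r * (-1)^r = 1 := by rw [← mul_zpow]; norm_num
  have h0 : (-1:ℂ)^r ≠ 0 := zpow_ne_zero _ (by norm_num)
  field_simp
  linear_combination this

lemma ex_neg {q : ℂ} (k r : ℤ) : ex q k (-r) = ex q (10-k) r := by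
  unfold ex
  rw [show 5*(-r)*(-r-1)+k*(-r) = (5*r*(r-1)+(10-k)*r) by ring, zpow_neg]
  congr 1
  rw [← inv_zpow]; norm_num

lemma t_add {q : ℂ} (hq : q ≠ 0) (k : ℤ) : t q (k+10) = -q^(-k) * t q k := by
  rw [t_eq hq, t_eq hq, ← (Equiv.subRight (1:ℤ)).tsum_eq, ← tsum_mul_left]
  refine tsum_congr fun r => ?_
  simp only [Equiv.subRight_apply]
  rw [ex_sub hq]; congr 2 <;> ring_nf

lemma t_neg {q : ℂ} (hq : q ≠ 0) (k : ℤ) : t q (-k) = -q^(-k) * t q k := by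
  rw [t_eq hq, t_eq hq, ← (Equiv.subLeft (1:ℤ)).tsum_eq, ← tsum_mul_left]
  refine tsum_congr fun r => ?_
  simp only [Equiv.subLeft_apply]
  rw [ex_one_sub hq]

lemma t_refl {q : ℂ} (hq : q ≠ 0) (k : ℤ) : t q (10-k) = t q k := by
  rw [show (10-k) = -k+10 by ring, t_add hq, t_neg hq]
  rw [← mul_assoc, neg_mul_neg, ← zpow_add₀ hq]; simp

lemma t_zero {q : ℂ} (hq : q ≠ 0) : t q 0 = 0 := by
  have := t_neg hq 0
  simp at this
  linear_combination this/2

lemma L_s10 {q : ℂ} (hq : q ≠ 0) (k s : ℤ) : L q k (s+10) = -q^(10-k) * L q (k-10) s := by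
  rw [L_eq hq, L_eq hq, ← (Equiv.subRight (1:ℤ)).tsum_eq, ← tsum_mul_left]
  refine tsum_congr fun r => ?_
  simp only [Equiv.subRight_apply]
  rw [ex_sub hq, show s+10+10*(r-1) = s+10*r by ring, mul_div_assoc]

lemma L_flip {q : ℂ} (hq : q ≠ 0) (k s : ℤ) : L q k s = -q^(-s) * L q (20-k) (-s) := by
  rw [L_eq hq, L_eq hq, ← (Equiv.neg ℤ).tsum_eq, ← tsum_mul_left]
  refine tsum_congr fun r => ?_
  simp only [Equiv.neg_apply]
  rw [ex_neg]
  have h1 : 1 - q^(s+10*(-r)) = -q^(s-10*r) * (1 - q^(-s+10*r)) := by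
    rw [show -s+10*r = -(s-10*r) by ring, zpow_neg]
    have := zpow_ne_zero (s-10*r) hq
    field_simp
    rw [show s+10*(-r) = s-10*r by ring]; ring
  have h2 : ex q (20-k) r = q^(10*r) * ex q (10-k) r := by
    unfold ex
    rw [show 5*r*(r-1)+(20-k)*r = 10*r + (5*r*(r-1)+(10-k)*r) by ring, zpow_add₀ hq]; ring
  rw [h1, h2]
  have e : q^(s-10*r) = q^s / q^(10*r) := zpow_sub₀ hq _ _
  have a1 := zpow_ne_zero s hq
  have a2 := zpow_ne_zero (10*r) hq
  rw [e, zpow_neg]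
  by_cases h : 1 - q^(-s+10*r) = 0
  · simp [h]
  · field_simp

lemma ex_add10 {q : ℂ} (hq : q ≠ 0) (k r : ℤ) : ex q (k+10) r = q^(10*r) * ex q k r := by
  unfold ex
  rw [show 5*r*(r-1)+(k+10)*r = 10*r + (5*r*(r-1)+k*r) by ring, zpow_add₀ hq]; ring

lemma L_geo {q : ℂ} (hq : q ≠ 0) (hq1 : ‖q‖ < 1) (k s : ℤ) (hs : ¬ (10 ∣ s)) :
    L q k s = t q k + q^s * L q (k+10) s := by
  rw [L_eq hq, L_eq hq, t_eq hq, ← tsum_mul_left, ← (sum_ex hq hq1 k).tsum_add ((sum_L hq hq1 (k+10) s).mul_left _)]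
  refine tsum_congr fun r => ?_
  have h := one_sub_ne hq hq1 (m := s+10*r) (by omega)
  rw [ex_add10 hq]
  field_simp
  rw [zpow_add₀ hq]; ring

lemma L_geo0 {q : ℂ} (hq : q ≠ 0) (hq1 : ‖q‖ < 1) (k : ℤ) :
    L q k 0 = t q k - 1 + L q (k+10) 0 := by
  have h1 : (1:ℂ) = ∑' r : ℤ, if r = 0 then 1 else 0 := by rw [tsum_ite_eq]
  have hs : Summable (fun r : ℤ => if r = 0 then (1:ℂ) else 0) := (hasSum_ite_eq 0 1).summable
  have h2 : t q k - 1 = (∑' r : ℤ, ex q k r) - ∑' r : ℤ, if r = 0 then 1 else 0 := by rw [← h1, t_eq hq]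
  rw [h2, L_eq hq, L_eq hq, ← (sum_ex hq hq1 k).tsum_sub hs, ← ((sum_ex hq hq1 k).sub hs).tsum_add (sum_L hq hq1 (k+10) 0)]
  refine tsum_congr fun r => ?_
  rw [ex_add10 hq]
  by_cases hr : r = 0
  · subst hr; simp [ex]
  have h := one_sub_ne hq hq1 (m := 0+10*r) (by omega)
  simp only [hr, if_false]
  field_simp
  simp; ring

end OP
end

section
open Filter Topology
namespace OP

noncomputable def K (q : ℂ) (k s : ℤ) : ℂ := Kr (q^5) (q^k) (q^s)
noncomputable def T' (q : ℂ) (k : ℤ) : ℂ := Th (q^5) (q^k)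
noncomputable def ell (q : ℂ) (k : ℤ) : ℂ := T' q k / t q k
noncomputable def kap (q : ℂ) : ℂ := - (L q 0 (-1) * t q 1)

structure Good (q : ℂ) : Prop where
  hq : q ≠ 0
  hq1 : ‖q‖ < 1
  t1 : t q 1 ≠ 0
  t2 : t q 2 ≠ 0
  t3 : t q 3 ≠ 0
  t4 : t q 4 ≠ 0
  t5 : t q 5 ≠ 0

lemma T_eq {q : ℂ} (hq : q ≠ 0) (k : ℤ) : T' q k = ∑' r : ℤ, (r:ℂ) * ex q k r := by
  simp only [T', Th, tt_ex hq]

lemma sum_T {q : ℂ} (hq : q ≠ 0) (hq1 : ‖q‖ < 1) (k : ℤ) : Summable (fun r : ℤ => (r:ℂ) * ex q k r) := by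
  have := summable_Th (p_ne hq) (p_lt hq1) (zpow_ne_zero k hq)
  exact this.congr fun r => by rw [tt_ex hq]

lemma T_neg {q : ℂ} (hq : q ≠ 0) (hq1 : ‖q‖ < 1) (k : ℤ) : T' q (-k) = -q^(-k) * (t q k - T' q k) := by
  rw [T_eq hq, T_eq hq, t_eq hq, ← (sum_ex hq hq1 k).tsum_sub (sum_T hq hq1 k), ← (Equiv.subLeft (1:ℤ)).tsum_eq, ← tsum_mul_left]
  refine tsum_congr fun r => ?_
  simp only [Equiv.subLeft_apply]
  rw [ex_one_sub hq]; push_cast; ring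

lemma T_refl {q : ℂ} (hq : q ≠ 0) (k : ℤ) : T' q (10-k) = - T' q k := by
  rw [T_eq hq, T_eq hq, ← (Equiv.neg ℤ).tsum_eq, ← tsum_neg]
  refine tsum_congr fun r => ?_
  simp only [Equiv.neg_apply]
  rw [ex_neg]; push_cast; rw [show 10-(10-k) = k by ring]; ring

lemma Good.tne {q : ℂ} (g : Good q) {k : ℤ} (h1 : 1 ≤ k) (h9 : k ≤ 9) : t q k ≠ 0 := by
  obtain ⟨hq, hq1, a1, a2, a3, a4, a5⟩ := g
  have : ∀ k, t q k ≠ 0 → t q (10-k) ≠ 0 := fun k h => by rwa [t_refl hq]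
  interval_cases k
  all_goals first | assumption | skip
  · exact this 4 a4
  · exact this 3 a3
  · exact this 2 a2
  · exact this 1 a1

lemma Good.tne' {q : ℂ} (g : Good q) {k : ℤ} (h0 : k ≠ 0) (h1 : -9 ≤ k) (h9 : k ≤ 9) : t q k ≠ 0 := by
  rcases lt_or_gt_of_ne h0 with h | h
  · have := t_neg g.hq (-k)
    rw [neg_neg] at this
    rw [this]
    exact mul_ne_zero (neg_ne_zero.mpr (zpow_ne_zero _ g.hq)) (g.tne (by omega) (by omega))
  · exact g.tne (by omega) h9

lemma CZraw {q : ℂ} (hq : q ≠ 0) (hq1 : ‖q‖ < 1) (b i k : ℤ) (hk : 1 ≤ k) (hk9 : k ≤ 9) (hi : ¬ (10 ∣ i)) :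
    t q (b-k+i) * L q b (-i) - t q (b-k) * K q k (-i) = t q b * L q (b-k+i) (-k) := by
  have hn : 0 < ‖q‖ := norm_pos_iff.mpr hq
  have hb : ∀ n : ℤ, q^(-i) * (q^5)^(2*n) ≠ 1 := fun n h => by
    rw [den_eq hq] at h
    exact one_sub_ne hq hq1 (m := -i+10*n) (by omega) (by rw [h]; ring)
  have ha : 1 < ‖q^(-k)‖ := by
    rw [norm_zpow]; exact one_lt_zpow_of_neg₀ hn hq1 (by omega)
  have ha2 : ‖q^(-k)‖ * ‖q^5‖^2 < 1 := by
    rw [← norm_pow, ← norm_mul, show q^(-k) * (q^5)^2 = q^(10-k) by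
      rw [show (10-k) = -k + 10 by ring, zpow_add₀ hq]; congr 1; rw [← pow_mul]; norm_cast, norm_zpow]
    exact zpow_lt_one₀ hn hq1 (by omega)
  have := CZ (p_ne hq) (p_lt hq1) (zpow_ne_zero (b-k+i) hq) (zpow_ne_zero b hq) (zpow_ne_zero (-i) hq) ha ha2
    (by rw [← zpow_add₀ hq, ← zpow_add₀ hq]; congr 1; ring) hb
  rw [← zpow_add₀ hq, ← zpow_neg, neg_neg] at this
  exact this

lemma CZ1raw {q : ℂ} (hq : q ≠ 0) (hq1 : ‖q‖ < 1) (b k : ℤ) (hk : 1 ≤ k) (hk9 : k ≤ 9) :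
    t q (b-k) * L q b 0 - t q (b-k) * K q k 0 + T' q (b-k) = t q b * L q (b-k) (-k) := by
  have hn : 0 < ‖q‖ := norm_pos_iff.mpr hq
  have ha : 1 < ‖q^(-k)‖ := by
    rw [norm_zpow]; exact one_lt_zpow_of_neg₀ hn hq1 (by omega)
  have ha2 : ‖q^(-k)‖ * ‖q^5‖^2 < 1 := by
    rw [← norm_pow, ← norm_mul, show q^(-k) * (q^5)^2 = q^(10-k) by
      rw [show (10-k) = -k + 10 by ring, zpow_add₀ hq]; congr 1; rw [← pow_mul]; norm_cast, norm_zpow]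
    exact zpow_lt_one₀ hn hq1 (by omega)
  have := CZ1 (p_ne hq) (p_lt hq1) (zpow_ne_zero (b-k) hq) (zpow_ne_zero b hq) ha ha2
    (by rw [← zpow_add₀ hq]; congr 1)
  rw [← zpow_neg, neg_neg] at this
  unfold L K T' t
  rw [zpow_zero]
  exact this

lemma K_anti {q : ℂ} (g : Good q) (i k : ℤ) (hk : 1 ≤ k) (hk9 : k ≤ 9) (hi : 1 ≤ i) (hi9 : i ≤ 9) :
    K q k (-i) = - K q i (-k) := by
  have h1 := CZraw g.hq g.hq1 (k+1) i k hk hk9 (by omega)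
  have h2 := CZraw g.hq g.hq1 (i+1) k i hi hi9 (by omega)
  rw [show k+1-k+i = i+1 by ring, show k+1-k = 1 by ring] at h1
  rw [show i+1-i+k = k+1 by ring, show i+1-i = 1 by ring] at h2
  have : t q 1 * (K q k (-i) + K q i (-k)) = 0 := by linear_combination -h1 - h2
  rcases mul_eq_zero.mp this with h | h
  · exact absurd h g.t1
  · linear_combination h

lemma K_val {q : ℂ} (g : Good q) (i k : ℤ) (hk : 1 ≤ k) (hk9 : k ≤ 9) (hi : 1 ≤ i) (hi9 : i ≤ 9) :
    K q k (-i) = - q^k * t q (i-k) * L q 0 (-i) / t q k := by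
  have h1 := CZraw g.hq g.hq1 0 i k hk hk9 (by omega)
  rw [t_zero g.hq, show 0-k+i = i-k by ring, zero_sub, t_neg g.hq, zpow_neg] at h1
  have := g.tne hk hk9
  have hz := zpow_ne_zero k g.hq
  field_simp
  field_simp at h1
  linear_combination h1

lemma kap_val {q : ℂ} (g : Good q) (i : ℤ) (hi : 1 ≤ i) (hi9 : i ≤ 9) : L q 0 (-i) = - kap q / t q i := by
  by_cases h1 : i = 1
  · subst h1; unfold kap; have := g.t1; field_simp
  have a := K_anti g i 1 (by norm_num) (by norm_num) hi hi9
  rw [K_val g _ _ (by norm_num) (by norm_num) hi hi9, K_val g _ _ hi hi9 (by norm_num) (by norm_num)] at a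
  have e := t_neg g.hq (i-1)
  rw [show -(i-1) = 1-i by ring] at e
  rw [e] at a
  have n1 := g.t1
  have n2 := g.tne hi hi9
  have n3 := g.tne (k := i-1) (by omega) (by omega)
  have hz := zpow_ne_zero i g.hq
  have hq := g.hq
  have e2 : q^(1-i) = q / q^i := by rw [zpow_sub₀ hq, zpow_one]
  rw [e2, zpow_one] at a
  unfold kap
  field_simp at a ⊢
  linear_combination -a

lemma cz {q : ℂ} (g : Good q) (b i k : ℤ) (hk : 1 ≤ k) (hk9 : k ≤ 9) (hi : 1 ≤ i) (hi9 : i ≤ 9) :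
    t q (b-k+i) * L q b (-i) - t q b * L q (b-k+i) (-k) = kap q * q^k * t q (b-k) * t q (i-k) / (t q i * t q k) := by
  have h := CZraw g.hq g.hq1 b i k hk hk9 (by omega)
  rw [K_val g i k hk hk9 hi hi9, kap_val g i hi hi9] at h
  have n2 := g.tne hi hi9
  have n3 := g.tne hk hk9
  field_simp at h ⊢
  linear_combination h

lemma ell_neg {q : ℂ} (g : Good q) (k : ℤ) (hk : 1 ≤ k) (hk9 : k ≤ 9) : ell q (-k) = 1 - ell q k := by
  have n3 := g.tne hk hk9
  have hz := zpow_ne_zero (-k) g.hq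
  unfold ell
  rw [T_neg g.hq g.hq1, t_neg g.hq]
  field_simp

lemma ell_refl {q : ℂ} (g : Good q) (k : ℤ) : ell q (10-k) = - ell q k := by
  unfold ell
  rw [T_refl g.hq, t_refl g.hq, neg_div]

lemma L00 {q : ℂ} (g : Good q) : L q 0 0 = -1 := by
  have h1 := L_geo0 g.hq g.hq1 0
  have h2 := L_flip g.hq 10 0
  rw [t_zero g.hq] at h1
  norm_num at h1 h2
  have : L q 10 0 = 0 := by linear_combination h2/2
  rw [h1, this]; norm_num

lemma cz1 {q : ℂ} (g : Good q) (b k : ℤ) (hk : 1 ≤ k) (hk9 : k ≤ 9) (hb : b ≠ k) (hb1 : -9 ≤ b - k) (hb2 : b - k ≤ 9) :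
    L q b 0 = t q b * L q (b-k) (-k) / t q (b-k) - ell q k - ell q (b-k) := by
  have h0 := CZ1raw g.hq g.hq1 0 k hk hk9
  have h := CZ1raw g.hq g.hq1 b k hk hk9
  have n1 := g.tne' (k := b-k) (by omega) (by omega) (by omega)
  have n2 := g.tne' (k := -k) (by omega) (by omega) (by omega)
  have hK : K q k 0 = - ell q k := by
    rw [L00 g, t_zero g.hq, zero_sub] at h0
    have e := ell_neg g k hk hk9
    have : K q k 0 = ell q (-k) - 1 := by
      unfold ell; field_simp; linear_combination -h0
    rw [this, e]; ring
  rw [hK] at h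
  unfold ell at *
  have n3 := g.tne hk hk9
  field_simp at h ⊢
  linear_combination h

end OP
end

section
open Filter Topology
namespace OP

lemma L10 {q : ℂ} (g : Good q) (i : ℤ) (hi : 1 ≤ i) (hi9 : i ≤ 9) : L q 10 (-i) = - q^i * kap q / t q i := by
  have h := L_geo g.hq g.hq1 0 (-i) (by omega)
  rw [t_zero g.hq, kap_val g i hi hi9, zpow_neg] at h
  have n2 := g.tne hi hi9
  have hz := zpow_ne_zero i g.hq
  norm_num at h
  field_simp at h ⊢
  linear_combination -h

lemma Lr {q : ℂ} (g : Good q) (z s : ℤ) : L q z (-s) = q^(s+z-10) * L q (10-z) (s-10) := by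
  rw [L_flip g.hq, neg_neg, show s = (s-10)+10 by ring, L_s10 g.hq, ← mul_assoc, neg_mul_neg, ← zpow_add₀ g.hq]
  congr 2 <;> ring_nf

lemma tv6 {q : ℂ} (g : Good q) : t q 6 = t q 4 := t_refl g.hq 4
lemma tv7 {q : ℂ} (g : Good q) : t q 7 = t q 3 := t_refl g.hq 3
lemma tv8 {q : ℂ} (g : Good q) : t q 8 = t q 2 := t_refl g.hq 2
lemma tv9 {q : ℂ} (g : Good q) : t q 9 = t q 1 := t_refl g.hq 1
lemma tm1 {q : ℂ} (g : Good q) : t q (-1) = -(q^1)⁻¹ * t q 1 := by rw [t_neg g.hq, zpow_neg]; rfl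
lemma tm2 {q : ℂ} (g : Good q) : t q (-2) = -(q^2)⁻¹ * t q 2 := by rw [t_neg g.hq, zpow_neg]; rfl
lemma tm3 {q : ℂ} (g : Good q) : t q (-3) = -(q^3)⁻¹ * t q 3 := by rw [t_neg g.hq, zpow_neg]; rfl
lemma tm4 {q : ℂ} (g : Good q) : t q (-4) = -(q^4)⁻¹ * t q 4 := by rw [t_neg g.hq, zpow_neg]; rfl
lemma tm5 {q : ℂ} (g : Good q) : t q (-5) = -(q^5)⁻¹ * t q 5 := by rw [t_neg g.hq, zpow_neg]; rfl
lemma tm6 {q : ℂ} (g : Good q) : t q (-6) = -(q^6)⁻¹ * t q 4 := by rw [t_neg g.hq, zpow_neg, tv6 g]; rfl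
lemma tm7 {q : ℂ} (g : Good q) : t q (-7) = -(q^7)⁻¹ * t q 3 := by rw [t_neg g.hq, zpow_neg, tv7 g]; rfl

/- the needed instances, solved for the first L -/
lemma i18_54 {q : ℂ} (g : Good q) : L q 1 (-8) = t q 1 / t q 5 * L q 5 (-4) - kap q * q * t q 3 / (t q 2 * t q 5) := by
  have h := cz g 1 8 4 (by norm_num) (by norm_num) (by norm_num) (by norm_num)
  norm_num [tv6 g, tv7 g, tv8 g, tv9 g, tm1 g, tm2 g, tm3 g, tm4 g, tm5 g, tm6 g, tm7 g, zpow_ofNat] at h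
  obtain ⟨hq, hq1, a1, a2, a3, a4, a5⟩ := g
  field_simp at h ⊢
  linear_combination h

lemma i27_54 {q : ℂ} (g : Good q) : L q 2 (-7) = t q 2 / t q 5 * L q 5 (-4) - kap q * q^2 * t q 2 / (t q 4 * t q 5) := by
  have h := cz g 2 7 4 (by norm_num) (by norm_num) (by norm_num) (by norm_num)
  norm_num [tv6 g, tv7 g, tv8 g, tv9 g, tm1 g, tm2 g, tm3 g, tm4 g, tm5 g, tm6 g, tm7 g, zpow_ofNat] at h
  obtain ⟨hq, hq1, a1, a2, a3, a4, a5⟩ := g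
  field_simp at h ⊢
  linear_combination h

noncomputable def D0 (q : ℂ) : ℂ := kap q * (1/(t q 1 * t q 2) - q/(t q 3 * t q 4))
noncomputable def D1 (q : ℂ) : ℂ := -2/q * (L q 1 (-8)/t q 1 + L q 2 (-7)/t q 2)
noncomputable def D3 (q : ℂ) : ℂ := 2 * kap q / (t q 2 * t q 3)
noncomputable def D4 (q : ℂ) : ℂ := 2/q * L q 3 (-4)/t q 3
noncomputable def W0 (q : ℂ) : ℂ := 1+4*(L q 6 0+L q 11 0-L q 4 (-2)-L q 9 (-2)/q)
  -2*(L q 7 0+L q 12 0+L q 3 (-4)+L q 8 (-4)/q^2)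
noncomputable def W1 (q : ℂ) : ℂ := 4*q*(L q 10 4+q^2*L q 15 4)
noncomputable def W2 (q : ℂ) : ℂ := 4*(-L q 8 2-q*L q 13 2+L q 2 (-4)+L q 7 (-4)/q^2)
noncomputable def W3 (q : ℂ) : ℂ := 2*(L q 9 2+q*L q 14 2+L q 1 (-6)+L q 6 (-6)/q^3)
noncomputable def W4 (q : ℂ) : ℂ := 2/q*(L q 5 (-2)+L q 10 (-2)/q)

lemma e1 {q : ℂ} (g : Good q) : t q 5 * D1 q - 2 * t q 3 * D0 q = W1 q := by
  have f1 := L_flip g.hq 10 4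
  have f2 := L_flip g.hq 15 4
  have f3 := L10 g 4 (by norm_num) (by norm_num)
  norm_num [zpow_ofNat, zpow_neg] at f1 f2 f3
  unfold D1 D0 W1
  rw [f1, f2, f3, i18_54 g, i27_54 g]
  obtain ⟨hq, hq1, a1, a2, a3, a4, a5⟩ := g
  field_simp
  ring

lemma i34_52 {q : ℂ} (g : Good q) : L q 3 (-4) = t q 3 / t q 5 * L q 5 (-2) + kap q * q^2 * t q 1 / (t q 4 * t q 5) := by
  have h := cz g 3 4 2 (by norm_num) (by norm_num) (by norm_num) (by norm_num)
  norm_num [tv6 g, tv7 g, tv8 g, tv9 g, tm1 g, tm2 g, tm3 g, tm4 g, tm5 g, tm6 g, tm7 g, zpow_ofNat] at h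
  obtain ⟨hq, hq1, a1, a2, a3, a4, a5⟩ := g
  field_simp at h ⊢
  linear_combination h

lemma e4 {q : ℂ} (g : Good q) : t q 5 * D4 q - 2 * t q 3 * D3 q + 2 * t q 1 * D0 q = W4 q := by
  have f3 := L10 g 2 (by norm_num) (by norm_num)
  norm_num [zpow_ofNat, zpow_neg] at f3
  unfold D4 D3 D0 W4
  rw [f3, i34_52 g]
  obtain ⟨hq, hq1, a1, a2, a3, a4, a5⟩ := g
  field_simp
  ring

lemma e3 {q : ℂ} (g : Good q) : t q 5 * D3 q + 2 * q * t q 1 * D4 q = W3 q := by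
  have f1 := L_flip g.hq 9 2
  have f2 := L_geo g.hq g.hq1 1 (-2) (by norm_num)
  have f3 := Lr g 11 2
  have f4 := L_flip g.hq 14 2
  have f5 := Lr g 6 6
  have c1 := cz g 4 4 2 (by norm_num) (by norm_num) (by norm_num) (by norm_num)
  have c2 := cz g (-1) 8 6 (by norm_num) (by norm_num) (by norm_num) (by norm_num)
  have c3 := cz g 1 6 4 (by norm_num) (by norm_num) (by norm_num) (by norm_num)
  have c4 := cz g (-1) 8 4 (by norm_num) (by norm_num) (by norm_num) (by norm_num)
  norm_num [tv6 g, tv7 g, tv8 g, tv9 g, tm1 g, tm2 g, tm3 g, tm4 g, tm5 g, tm6 g, tm7 g, zpow_ofNat, zpow_neg] at f1 f2 f3 f4 f5 c1 c2 c3 c4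
  unfold D3 D4 W3
  rw [f1, f4, f5, f3]
  obtain ⟨hq, hq1, a1, a2, a3, a4, a5⟩ := g
  -- express all in terms of x = L(-1,-8), y = L(6,-2)
  have k1 : L q 4 (-4) = L q 6 (-2) + kap q * q^2 * t q 2/ t q 4^2 := by
    field_simp at c1 ⊢; linear_combination c1
  have k2 : L q 1 (-6) = - q * L q (-1) (-8) - kap q * t q 3 / (t q 1 * t q 4) := by
    field_simp at c2 ⊢; linear_combination c2
  have k3 : L q 3 (-4) = - q * t q 3 / t q 1 * L q (-1) (-8) - kap q * t q 5 / (t q 2 * t q 1) := by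
    field_simp at c4 ⊢; linear_combination c4
  rw [k2, k3] at c3
  rw [k1, k2, k3]
  by_cases hk : kap q = 0
  · rw [hk]; field_simp; ring
  have c5 : t q 1 * t q 4^2 * t q 5 + q * t q 1 * t q 2^2 * t q 3 = t q 2 * t q 3^2 * t q 4 := by
    field_simp at c3
    have : kap q * (t q 1 * t q 4^2 * t q 5 + q * t q 1 * t q 2^2 * t q 3 - t q 2 * t q 3^2 * t q 4) = 0 := by
      linear_combination c3
    rcases mul_eq_zero.mp this with h | h
    · exact absurd h hk
    · linear_combination h
  field_simp
  linear_combination (-q * kap q) * c5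

lemma e2 {q : ℂ} (g : Good q) : -2 * t q 3 * D1 q + 2 * q * t q 1 * D3 q = W2 q := by
  have f1 := L_flip g.hq 8 2
  have f2 := L_geo g.hq g.hq1 2 (-2) (by norm_num)
  have f3 := L_geo g.hq g.hq1 2 (-4) (by norm_num)
  have f4 := L_flip g.hq 13 2
  have f5 := Lr g 7 4
  have f6 := Lr g 12 4
  have c1 := cz g 2 2 6 (by norm_num) (by norm_num) (by norm_num) (by norm_num)
  have c2 := cz g 7 2 6 (by norm_num) (by norm_num) (by norm_num) (by norm_num)
  have c3 := cz g 1 8 6 (by norm_num) (by norm_num) (by norm_num) (by norm_num)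
  have c4 := cz g 2 7 6 (by norm_num) (by norm_num) (by norm_num) (by norm_num)
  have c5 := cz g 1 8 7 (by norm_num) (by norm_num) (by norm_num) (by norm_num)
  norm_num [tv6 g, tv7 g, tv8 g, tv9 g, tm1 g, tm2 g, tm3 g, tm4 g, tm5 g, tm6 g, tm7 g, zpow_ofNat, zpow_neg] at f1 f2 f3 f4 f5 f6 c1 c2 c3 c4 c5
  obtain ⟨hq, hq1, a1, a2, a3, a4, a5⟩ := g
  have k0 : L q 12 (-2) = q^2 * (L q 2 (-2) - t q 2) := by rw [f2]; field_simp; ring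
  have k1 : L q 2 (-2) = - q^2 * L q (-2) (-6) - kap q * t q 4 / t q 2^2 := by
    field_simp at c1 ⊢; linear_combination -c1
  have k2 : L q 7 (-2) = L q 3 (-6) - kap q * q^2 * t q 1 / (t q 2 * t q 3) := by
    field_simp at c2 ⊢; linear_combination c2
  have k3 : L q 1 (-8) = t q 1 / t q 3 * L q 3 (-6) - kap q * q * t q 5 / (t q 3 * t q 4) := by
    field_simp at c3 ⊢; linear_combination c3
  have k4 : L q 2 (-7) = t q 2 / t q 3 * L q 3 (-6) - kap q * q^2 * t q 1 / (t q 3 ^ 2) := by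
    field_simp at c4 ⊢; linear_combination c4
  unfold D1 D3 W2
  rw [f1, k0, k1, f3, f6, f4, f5, k2, k3, k4]
  rw [k3, k4] at c5
  by_cases hk : kap q = 0
  · rw [hk]; field_simp; ring
  have c6 : t q 1 * t q 3 * t q 4^2 + q * t q 1^2 * t q 2 * t q 4 = t q 2^2 * t q 3 * t q 5 := by
    field_simp at c5
    have : (kap q * q) * (t q 1 * t q 3 * t q 4^2 + q * t q 1^2 * t q 2 * t q 4 - t q 2^2 * t q 3 * t q 5) = 0 := by
      linear_combination c5
    rcases mul_eq_zero.mp this with h | h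
    · exact absurd h (mul_ne_zero hk hq)
    · linear_combination h
  field_simp
  linear_combination (4 * q * kap q) * c6

lemma e0 {q : ℂ} (g : Good q) : t q 5 * D0 q - 2 * q * t q 3 * D4 q + 2 * q * t q 1 * D1 q = W0 q := by
  have f1 := L_flip g.hq 11 0
  have f2 := L_flip g.hq 12 0
  have f3 := Lr g 9 2
  have f4 := Lr g 8 4
  have l7 := cz1 g 7 4 (by norm_num) (by norm_num) (by norm_num) (by norm_num) (by norm_num)
  have l6 := cz1 g 6 2 (by norm_num) (by norm_num) (by norm_num) (by norm_num) (by norm_num)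
  have l9 := cz1 g 9 7 (by norm_num) (by norm_num) (by norm_num) (by norm_num) (by norm_num)
  have l8 := cz1 g 8 6 (by norm_num) (by norm_num) (by norm_num) (by norm_num) (by norm_num)
  have l51 := cz1 g 5 1 (by norm_num) (by norm_num) (by norm_num) (by norm_num) (by norm_num)
  have l53 := cz1 g 5 3 (by norm_num) (by norm_num) (by norm_num) (by norm_num) (by norm_num)
  have l57 := cz1 g 5 7 (by norm_num) (by norm_num) (by norm_num) (by norm_num) (by norm_num)
  have c1 := cz g 4 1 3 (by norm_num) (by norm_num) (by norm_num) (by norm_num)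
  have c2 := cz g 4 1 7 (by norm_num) (by norm_num) (by norm_num) (by norm_num)
  have v6 : ell q 6 = - ell q 4 := ell_refl g 4
  have v7 : ell q 7 = - ell q 3 := ell_refl g 3
  have vm : ell q (-2) = 1 - ell q 2 := ell_neg g 2 (by norm_num) (by norm_num)
  norm_num [tv6 g, tv7 g, tv8 g, tv9 g, tm1 g, tm2 g, tm3 g, tm4 g, tm5 g, tm6 g, tm7 g, zpow_ofNat, zpow_neg, v6, v7, vm] at f1 f2 f3 f4 l7 l6 l9 l8 l51 l53 l57 c1 c2
  obtain ⟨hq, hq1, a1, a2, a3, a4, a5⟩ := g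
  have k1 : L q 4 (-1) = t q 4 / t q 2 * L q 2 (-3) - kap q * q / t q 3 := by
    field_simp at c1 ⊢; linear_combination c1
  have k2 : L q 4 (-1) = - q^2 * t q 4 / t q 2 * L q (-2) (-7) - kap q * t q 4 / (t q 1 * t q 2) := by
    field_simp at c2 ⊢; linear_combination -c2
  have p1 : ell q 1 + ell q 4 - ell q 3 - ell q 2 = - kap q * q * t q 5 / (t q 3 * t q 4) := by
    have e := l51.symm.trans l53
    rw [k1] at e
    have : t q 5 * (t q 4 / t q 2 * L q 2 (-3) - kap q * q / t q 3) / t q 4 = t q 5 * L q 2 (-3) / t q 2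
      - kap q * q * t q 5 / (t q 3 * t q 4) := by field_simp
    rw [this] at e
    linear_combination -e
  have p2 : ell q 1 + ell q 4 + ell q 3 + ell q 2 - 1 = - kap q * t q 5 / (t q 1 * t q 2) := by
    have e := l51.symm.trans l57
    rw [k2] at e
    have : t q 5 * (- q^2 * t q 4 / t q 2 * L q (-2) (-7) - kap q * t q 4 / (t q 1 * t q 2)) / t q 4 = 
      - q^2 * t q 5 * L q (-2) (-7) / t q 2
      - kap q * t q 5 / (t q 1 * t q 2) := by field_simp
    rw [this] at e
    have h2 : t q 5 * L q (-2) (-7) / (-((q^2)⁻¹ * t q 2)) = - q^2 * t q 5 * L q (-2) (-7) / t q 2 := by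
      field_simp
    try rw [h2] at e
    linear_combination -e
  have p3 : t q 5 * D0 q = 1 - 2 * ell q 2 - 2 * ell q 3 := by
    unfold D0
    linear_combination p2 - p1
  rw [p3]
  unfold D4 D1 W0
  rw [f1, f2, f3, f4, l7, l6, l9, l8]
  field_simp
  ring
end OP
end

section
open Filter Topology
namespace OP

lemma hasSum_split5 {f : ℤ → ℂ} {a0 a1 a2 a3 a4 : ℂ}
    (h0 : HasSum (fun m => f (5*m)) a0) (h1 : HasSum (fun m => f (5*m+1)) a1)
    (h2 : HasSum (fun m => f (5*m+2)) a2) (h3 : HasSum (fun m => f (5*m+3)) a3)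
    (h4 : HasSum (fun m => f (5*m+4)) a4) : HasSum f (a0+a1+a2+a3+a4) := by
  have key : ∀ (j : ℤ) (a : ℂ), 0 ≤ j → j < 5 → HasSum (fun m => f (5*m+j)) a →
      HasSum (fun n => if n % 5 = j then f n else 0) a := by
    intro j a hj0 hj5 h
    have hinj : Function.Injective (fun m : ℤ => 5*m+j) := fun x y h => by simp at h; exact h
    rw [← hinj.hasSum_iff]
    · convert h using 1; funext m; simp only [Function.comp]; rw [if_pos (by omega)]
    · intro n hn
      rw [if_neg]
      intro h
      exact hn ⟨n/5, by simp; omega⟩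
  have := ((((key 0 a0 (by norm_num) (by norm_num) (by simpa using h0)).add
    (key 1 a1 (by norm_num) (by norm_num) h1)).add (key 2 a2 (by norm_num) (by norm_num) h2)).add
    (key 3 a3 (by norm_num) (by norm_num) h3)).add (key 4 a4 (by norm_num) (by norm_num) h4)
  convert this using 1
  funext n
  have : n % 5 = 0 ∨ n % 5 = 1 ∨ n % 5 = 2 ∨ n % 5 = 3 ∨ n % 5 = 4 := by omega
  rcases this with h | h | h | h | h <;> simp [h]

noncomputable def phi (x : ℂ) : ℂ := ∑' n : ℤ, (-1)^n * x^(n*n)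
noncomputable def sb (x : ℂ) (b n : ℤ) : ℂ := (-1)^n * x^(n*n+b*n) / (1 - x^(5*n))

lemma x5 (x : ℂ) (m : ℤ) : (x^5)^m = x^(5*m) := p5 x m

lemma hasSum_t {q : ℂ} (hq : q ≠ 0) (hq1 : ‖q‖ < 1) (k : ℤ) : HasSum (fun r => ex q k r) (t q k) := by
  rw [t_eq hq]; exact (sum_ex hq hq1 k).hasSum

lemma hasSum_L {q : ℂ} (hq : q ≠ 0) (hq1 : ‖q‖ < 1) (k s : ℤ) :
    HasSum (fun r => ex q k r / (1 - q^(s+10*r))) (L q k s) := by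
  rw [L_eq hq]; exact (sum_L hq hq1 k s).hasSum

lemma phi_term {x : ℂ} (hx : x ≠ 0) (j m : ℤ) :
    (-1)^(5*m+j) * x^((5*m+j)*(5*m+j)) = (-1)^j * x^(j*j) * ex (x^5) (5+2*j) m := by
  unfold ex
  rw [x5, zpow_add₀ (by norm_num), show (5*m+j)*(5*m+j) = j*j + 5 * (5*m*(m-1)+(5+2*j)*m) by ring, zpow_add₀ hx,
    zpow_mul (-1) 5 m]
  norm_num; ring

lemma hasSum_phi {x : ℂ} (hx : x ≠ 0) (hx1 : ‖x‖ < 1) :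
    HasSum (fun n : ℤ => (-1)^n * x^(n*n)) (t (x^5) 5 - 2*x*t (x^5) 3 + 2*x^4*t (x^5) 1) := by
  have hq := p_ne hx
  have hq1 := p_lt hx1
  have H : ∀ j : ℤ, HasSum (fun m : ℤ => (-1)^(5*m+j) * x^((5*m+j)*(5*m+j))) ((-1)^j * x^(j*j) * t (x^5) (5+2*j)) := by
    intro j
    simp_rw [phi_term hx]
    exact (hasSum_t hq hq1 _).mul_left _
  have := hasSum_split5 (f := fun n : ℤ => (-1)^n * x^(n*n)) (by simpa using H 0) (H 1) (H 2) (H 3) (H 4)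
  convert this using 1
  have a7 := t_refl hq 3
  have a9 := t_refl hq 1
  have a11 := t_add hq 1
  have a13 := t_add hq 3
  norm_num [zpow_neg, zpow_ofNat] at a7 a9 a11 a13
  norm_num [zpow_ofNat, a7, a9, a11, a13]
  field_simp
  ring

lemma phi_eq {x : ℂ} (hx : x ≠ 0) (hx1 : ‖x‖ < 1) :
    phi x = t (x^5) 5 - 2*x*t (x^5) 3 + 2*x^4*t (x^5) 1 := (hasSum_phi hx hx1).tsum_eq

lemma inv_double {x : ℂ} (hx : x ≠ 0) (hx1 : ‖x‖ < 1) (n : ℤ) :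
    1 / (1 - x^n) = (1 + x^n) / (1 - x^(2*n)) := by
  by_cases h : n = 0
  · subst h; simp
  have h1 := one_sub_ne hx hx1 h
  have h2 := one_sub_ne hx hx1 (m := 2*n) (by omega)
  field_simp
  rw [show 2*n = n+n by ring, zpow_add₀ hx]; ring

lemma sb_term {x : ℂ} (hx : x ≠ 0) (hx1 : ‖x‖ < 1) (b j m : ℤ) :
    sb x b (5*m+j) = (-1)^j * x^(j*j+b*j) *
      (ex (x^5) (5+2*j+b) m / (1 - (x^5)^(2*j+10*m)) + (x^5)^j * (ex (x^5) (10+2*j+b) m / (1 - (x^5)^(2*j+10*m)))) := by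
  unfold sb
  rw [show x^(5*(5*m+j)) = (x^5)^(5*m+j) by rw [x5], div_eq_mul_one_div, inv_double (p_ne hx) (p_lt hx1),
    show 2*(5*m+j) = 2*j+10*m by ring]
  have e1 : (-1)^(5*m+j) * x^((5*m+j)*(5*m+j)+b*(5*m+j)) = (-1)^j * x^(j*j+b*j) * ex (x^5) (5+2*j+b) m := by
    unfold ex
    rw [x5, zpow_add₀ (by norm_num), show (5*m+j)*(5*m+j)+b*(5*m+j) = (j*j+b*j) + 5 * (5*m*(m-1)+(5+2*j+b)*m) by ring, zpow_add₀ hx,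
      zpow_mul (-1) 5 m]
    norm_num; ring
  have e2 : ex (x^5) (10+2*j+b) m = (x^5)^(5*m) * ex (x^5) (5+2*j+b) m := by
    unfold ex
    rw [show 5*m*(m-1)+(10+2*j+b)*m = 5*m + (5*m*(m-1)+(5+2*j+b)*m) by ring, zpow_add₀ (p_ne hx)]; ring
  rw [e1, e2, zpow_add₀ (p_ne hx)]
  ring

lemma hasSum_sb {x : ℂ} (hx : x ≠ 0) (hx1 : ‖x‖ < 1) (b j : ℤ) :
    HasSum (fun m => sb x b (5*m+j)) ((-1)^j * x^(j*j+b*j) * (L (x^5) (5+2*j+b) (2*j) + (x^5)^j * L (x^5) (10+2*j+b) (2*j))) := by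
  simp_rw [sb_term hx hx1]
  exact ((hasSum_L (p_ne hx) (p_lt hx1) _ _).add ((hasSum_L (p_ne hx) (p_lt hx1) _ _).mul_left _)).mul_left _

noncomputable def SB (x : ℂ) (b : ℤ) : ℂ := ∑' n, sb x b n
lemma hasSum_SB {x : ℂ} (hx : x ≠ 0) (hx1 : ‖x‖ < 1) (b : ℤ) : HasSum (sb x b) (SB x b) := by
  have h := hasSum_split5 (f := sb x b) (by simpa using hasSum_sb hx hx1 b 0) (hasSum_sb hx hx1 b 1) (hasSum_sb hx hx1 b 2) (hasSum_sb hx hx1 b 3) (hasSum_sb hx hx1 b 4)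
  exact h.summable.hasSum

lemma W_eq {x : ℂ} (hx : x ≠ 0) (hx1 : ‖x‖ < 1) :
    1 + 4 * SB x 1 - 2 * SB x 2 = W0 (x^5) + x * W1 (x^5) + x^2 * W2 (x^5) + x^3 * W3 (x^5) + x^4 * W4 (x^5) := by
  have h : ∀ b, _ := fun b => hasSum_split5 (f := sb x b) (by simpa using hasSum_sb hx hx1 b 0) (hasSum_sb hx hx1 b 1) (hasSum_sb hx hx1 b 2) (hasSum_sb hx hx1 b 3) (hasSum_sb hx hx1 b 4)
  have hs : ∀ b, _ := fun b => (h b).tsum_eq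
  have hq := p_ne hx
  unfold SB
  rw [hs, hs]
  have c1 := L_s10 hq 14 (-2)
  have c2 := L_s10 hq 19 (-2)
  have c3 := L_s10 hq 12 (-4)
  have c4 := L_s10 hq 17 (-4)
  have d1 := L_s10 hq 11 (-6)
  have d2 := L_s10 hq 16 (-6)
  have d3 := L_s10 hq 13 (-4)
  have d4 := L_s10 hq 18 (-4)
  have d5 := L_s10 hq 15 (-2)
  have d6 := L_s10 hq 20 (-2)
  norm_num [zpow_neg, zpow_ofNat] at c1 c2 c3 c4 d1 d2 d3 d4 d5 d6
  norm_num [zpow_ofNat, c1, c2, c3, c4, d1, d2, d3, d4, d5, d6]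
  unfold W0 W1 W2 W3 W4
  field_simp
  ring

noncomputable def Dst (x : ℂ) : ℂ := D0 (x^5) + x * D1 (x^5) + x^3 * D3 (x^5) + x^4 * D4 (x^5)

theorem phi_Dst {x : ℂ} (hx : x ≠ 0) (hx1 : ‖x‖ < 1) (g : Good (x^5)) :
    phi x * Dst x = 1 + 4 * SB x 1 - 2 * SB x 2 := by
  rw [W_eq hx hx1, phi_eq hx hx1, ← e0 g, ← e1 g, ← e2 g, ← e3 g, ← e4 g]
  unfold Dst
  ring

end OP
end

section
open Finset PowerSeries
namespace OP

def wt {n : ℕ} (P : n.Partition) : ℤ := 2 ^ P.parts.toFinset.card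

lemma parts_le {n : ℕ} (P : n.Partition) {a : ℕ} (h : a ∈ P.parts) : a ≤ n := by
  have := Multiset.le_sum_of_mem h
  rwa [P.parts_sum] at this

lemma sup_le_n {n : ℕ} (P : n.Partition) : P.parts.sup ≤ n := Multiset.sup_le.mpr fun _ h => parts_le P h

lemma card_le_n {n : ℕ} (P : n.Partition) : P.parts.card ≤ n := by
  have : P.parts.card • 1 ≤ P.parts.sum := Multiset.card_nsmul_le_sum fun x hx => P.parts_pos hx
  rw [P.parts_sum] at this; simpa using this

lemma mem_sup {n : ℕ} (P : n.Partition) (h : P.parts.sup ≠ 0) : P.parts.sup ∈ P.parts := by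
  by_contra hn
  have : P.parts.sup ≤ P.parts.sup - 1 := Multiset.sup_le.mpr fun b hb => by
    have h1 := Multiset.le_sup hb
    have : b ≠ P.parts.sup := fun e => hn (e ▸ hb)
    omega
  omega

lemma sup_iff {n l : ℕ} (P : n.Partition) (h : l+1 ∉ P.parts) : P.parts.sup ≤ l+1 ↔ P.parts.sup ≤ l := by
  refine ⟨fun h1 => ?_, fun h1 => by omega⟩
  by_contra h2
  have h3 : P.parts.sup = l+1 := by omega
  exact h (by rw [← h3]; exact mem_sup P (by omega))

noncomputable def B (l k : ℕ) : PowerSeries ℤ :=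
  PowerSeries.mk fun n => ∑ P : n.Partition with P.parts.sup ≤ l ∧ P.parts.card ≤ k, wt P

lemma nbar_eq (a : ℤ) (c n : ℕ) : (nbar a c n : ℤ) =
    ∑ P : n.Partition with ((P.parts.sup : ℤ) - P.parts.card ≡ a [ZMOD c]), wt P := by
  classical
  let F : Finset (n.Partition × Finset ℕ) := (univ.filter fun P : n.Partition => ((P.parts.sup : ℤ) - P.parts.card ≡ a [ZMOD c])).biUnion
    fun P => P.parts.toFinset.powerset.map ⟨fun S => (P, S), fun _ _ h => (Prod.mk.inj h).2⟩
  have e : {P : Overpartition n // P.rank ≡ a [ZMOD (c:ℤ)]} ≃ F := by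
    refine ⟨fun x => ⟨x.1.1, ?_⟩, fun y => ⟨⟨y.1, ?_⟩, ?_⟩, fun x => ?_, fun y => ?_⟩
    · have h1 := x.1.2
      have h2 := x.2
      simp only [F, mem_biUnion, mem_filter, mem_univ, true_and, mem_map, mem_powerset]
      exact ⟨x.1.1.1, h2, x.1.1.2, h1, rfl⟩
    · have := y.2
      simp only [F, mem_biUnion, mem_filter, mem_univ, true_and, mem_map, mem_powerset] at this
      obtain ⟨P, h1, S, h2, h3⟩ := this
      rw [← h3]; exact h2
    · have := y.2
      simp only [F, mem_biUnion, mem_filter, mem_univ, true_and, mem_map, mem_powerset] at this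
      obtain ⟨P, h1, S, h2, h3⟩ := this
      unfold Overpartition.rank
      rw [← h3] at *
      exact h1
    · rfl
    · rfl
  unfold nbar
  rw [Nat.card_congr e, Nat.card_eq_fintype_card, Fintype.card_coe, card_biUnion]
  · simp [wt]
  · intro P _ Q _ hPQ
    rw [Function.onFun, disjoint_left]
    intro x hx hy
    simp only [mem_map] at hx hy
    obtain ⟨_, _, h1⟩ := hx
    obtain ⟨_, _, h2⟩ := hy
    exact hPQ ((congrArg Prod.fst h1).trans (congrArg Prod.fst h2).symm)

def consP {n : ℕ} (l : ℕ) (hl : l + 1 ≤ n) (P : (n-(l+1)).Partition) : n.Partition :=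
  ⟨(l+1) ::ₘ P.parts, by
    intro i hi
    rcases Multiset.mem_cons.mp hi with h | h
    · omega
    · exact P.parts_pos h, by rw [Multiset.sum_cons, P.parts_sum]; omega⟩

def eraseP {n : ℕ} (l : ℕ) (P : n.Partition) (h : l + 1 ∈ P.parts) : (n-(l+1)).Partition :=
  ⟨P.parts.erase (l+1), by
    intro i hi
    exact P.parts_pos (Multiset.mem_of_mem_erase hi), by
    have := Multiset.sum_erase h
    rw [P.parts_sum] at this; omega⟩

lemma rec_sum {n : ℕ} (l k : ℕ) (hl : l + 1 ≤ n) :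
    ∑ P : n.Partition with (l+1 ∈ P.parts ∧ P.parts.sup ≤ l+1 ∧ P.parts.card ≤ k+1), wt P =
    ∑ P : (n-(l+1)).Partition with (P.parts.sup ≤ l+1 ∧ P.parts.card ≤ k), wt P * (if l+1 ∈ P.parts then 1 else 2) := by
  symm
  refine Finset.sum_bij' (fun P _ => consP l hl P) (fun P hP => eraseP l P (by simp at hP; exact hP.1)) ?_ ?_ ?_ ?_ ?_
  · intro P hP
    simp only [mem_filter, mem_univ, true_and] at hP ⊢
    simp only [consP, Multiset.mem_cons_self, true_and, Multiset.sup_cons, Multiset.card_cons]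
    exact ⟨sup_le le_rfl hP.1, by omega⟩
  · intro P hP
    simp only [mem_filter, mem_univ, true_and] at hP ⊢
    refine ⟨?_, ?_⟩
    · simp only [eraseP]
      exact Multiset.sup_le.mpr fun b hb => (Multiset.le_sup (Multiset.mem_of_mem_erase hb)).trans hP.2.1
    · simp only [eraseP]
      rw [Multiset.card_erase_of_mem hP.1]
      have := hP.2.2
      simp; omega
  · intro P hP
    ext1
    simp [consP, eraseP]
  · intro P hP
    simp only [mem_filter, mem_univ, true_and] at hP
    ext1
    simp [consP, eraseP, Multiset.cons_erase hP.1]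
  · intro P hP
    unfold wt
    simp only [consP, Multiset.toFinset_cons]
    split_ifs with h
    · rw [insert_eq_of_mem (by simpa using h)]; ring
    · rw [card_insert_of_notMem (by simpa using h)]; ring

lemma B_zero_left (k : ℕ) : B 0 k = 1 := by
  ext n
  simp only [B, coeff_mk, coeff_one]
  split_ifs with h
  · subst h
    rw [Finset.sum_eq_single (default : Nat.Partition 0)]
    · simp [wt]
    · intro b _ hb; exact absurd (Subsingleton.elim _ _) hb
    · intro h; simp at h
  · apply Finset.sum_eq_zero
    intro P hP
    simp only [mem_filter, mem_univ, true_and] at hP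
    exfalso
    apply h
    rw [← P.parts_sum]
    apply Multiset.sum_eq_zero
    intro x hx
    have := Multiset.le_sup hx
    omega

lemma B_zero_right (l : ℕ) : B l 0 = 1 := by
  ext n
  simp only [B, coeff_mk, coeff_one]
  split_ifs with h
  · subst h
    rw [Finset.sum_eq_single (default : Nat.Partition 0)]
    · simp [wt]
    · intro b _ hb; exact absurd (Subsingleton.elim _ _) hb
    · intro h; simp at h
  · apply Finset.sum_eq_zero
    intro P hP
    simp only [mem_filter, mem_univ, true_and, Nat.le_zero, Multiset.card_eq_zero] at hP
    exfalso
    apply h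
    rw [← P.parts_sum, hP.2]; simp

lemma R1 (l k : ℕ) : B (l+1) (k+1) = B l (k+1) + X^(l+1) * (B (l+1) k + B l k) := by
  ext n
  rw [map_add, coeff_X_pow_mul', map_add]
  simp only [B, coeff_mk]
  have hsplit : ∑ P : n.Partition with (P.parts.sup ≤ l+1 ∧ P.parts.card ≤ k+1), wt P
      = ∑ P : n.Partition with (P.parts.sup ≤ l ∧ P.parts.card ≤ k+1), wt P
      + ∑ P : n.Partition with (l+1 ∈ P.parts ∧ P.parts.sup ≤ l+1 ∧ P.parts.card ≤ k+1), wt P := by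
    rw [Finset.sum_filter, Finset.sum_filter, Finset.sum_filter, ← Finset.sum_add_distrib]
    refine Finset.sum_congr rfl fun P _ => ?_
    by_cases h : l+1 ∈ P.parts
    · have := Multiset.le_sup h
      have h2 : ¬ P.parts.sup ≤ l := by omega
      simp [h, h2]
    · have : P.parts.sup ≤ l+1 ↔ P.parts.sup ≤ l := sup_iff P h
      simp [h, this]
  rw [hsplit]
  congr 1
  split_ifs with hl
  · rw [rec_sum l k hl]
    rw [Finset.sum_filter, Finset.sum_filter, Finset.sum_filter, ← Finset.sum_add_distrib]
    refine Finset.sum_congr rfl fun P _ => ?_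
    by_cases h : l+1 ∈ P.parts
    · have := Multiset.le_sup h
      have h2 : ¬ P.parts.sup ≤ l := by omega
      simp [h, h2]
    · have : P.parts.sup ≤ l+1 ↔ P.parts.sup ≤ l := sup_iff P h
      simp only [h, this, if_false]
      split_ifs <;> ring
  · apply Finset.sum_eq_zero
    intro P hP
    simp only [mem_filter, mem_univ, true_and] at hP
    exact absurd (parts_le P hP.1) hl

lemma R2 : ∀ (l k : ℕ), B (l+1) (k+1) = B (l+1) k + X^(k+1) * (B l (k+1) + B l k) := by
  intro l
  induction l with
  | zero =>
    intro k
    induction k with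
    | zero => rw [R1]; simp only [B_zero_left, B_zero_right]
    | succ k ih =>
      have h1 := R1 0 (k+1)
      have h2 := R1 0 k
      simp only [B_zero_left] at *
      simp only [zero_add] at *
      rw [h1]
      linear_combination (X^1) * ih - h2
  | succ l ihl =>
    intro k
    induction k with
    | zero =>
      have h1 := R1 (l+1) 0
      have h2 := ihl 0
      have h3 := R1 l 0
      simp only [B_zero_right, zero_add] at *
      linear_combination h1 + h2 - X * h3
    | succ k ih =>
      linear_combination R1 (l+1) (k+1) - R1 (l+1) k + ihl (k+1) + X^(l+2) * (ih + ihl k) - X^(k+2) * (R1 l (k+1) + R1 l k)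

lemma B_symm (l k : ℕ) : B l k = B k l := by
  induction l generalizing k with
  | zero => rw [B_zero_left, B_zero_right]
  | succ l ih =>
    induction k with
    | zero => rw [B_zero_left, B_zero_right]
    | succ k ihk =>
      rw [R1, R2, ih, ih, ihk]

end OP
end

section
open Finset PowerSeries
namespace OP

def RR (f : ℕ → ℕ → ℤ) (n : ℕ) : ℤ := ∑ P : n.Partition, wt P * f P.parts.sup P.parts.card
def pb (n : ℕ) : ℤ := RR (fun _ _ => 1) n
def hh (m n : ℕ) : ℤ := RR (fun l k => if k + m ≤ l ∧ 1 ≤ k then 1 else 0) n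
def HH (m n : ℕ) : ℤ := hh m n + hh (m+1) n

lemma sup_pos_iff {n : ℕ} (P : n.Partition) : P.parts.sup = 0 ↔ P.parts.card = 0 := by
  constructor
  · intro h
    rw [Multiset.card_eq_zero, Multiset.eq_zero_iff_forall_notMem]
    intro a ha
    have h1 := Multiset.le_sup ha
    have h2 := P.parts_pos ha
    omega
  · intro h
    rw [Multiset.card_eq_zero] at h
    rw [h]; rfl

lemma card_zero_iff {n : ℕ} (P : n.Partition) : P.parts.card = 0 ↔ n = 0 := by
  constructor
  · intro h
    rw [Multiset.card_eq_zero] at h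
    rw [← P.parts_sum, h]; rfl
  · intro h
    have := card_le_n P
    omega

lemma RR_congr {f g : ℕ → ℕ → ℤ} {n : ℕ} (h : ∀ l k, l ≤ n → k ≤ n → (l = 0 ↔ k = 0) → (k = 0 ↔ n = 0) → f l k = g l k) :
    RR f n = RR g n := by
  unfold RR
  refine Finset.sum_congr rfl fun P _ => ?_
  rw [h _ _ (sup_le_n P) (card_le_n P) (sup_pos_iff P) (card_zero_iff P)]

lemma RR_add (f g : ℕ → ℕ → ℤ) (n : ℕ) : RR (fun l k => f l k + g l k) n = RR f n + RR g n := by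
  unfold RR; rw [← Finset.sum_add_distrib]; refine Finset.sum_congr rfl fun P _ => by ring
lemma RR_sub (f g : ℕ → ℕ → ℤ) (n : ℕ) : RR (fun l k => f l k - g l k) n = RR f n - RR g n := by
  unfold RR; rw [← Finset.sum_sub_distrib]; refine Finset.sum_congr rfl fun P _ => by ring
lemma RR_smul (a : ℤ) (f : ℕ → ℕ → ℤ) (n : ℕ) : RR (fun l k => a * f l k) n = a * RR f n := by
  unfold RR; rw [Finset.mul_sum]; refine Finset.sum_congr rfl fun P _ => by ring
lemma RR_sum {ι : Type} (s : Finset ι) (f : ι → ℕ → ℕ → ℤ) (n : ℕ) :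
    RR (fun l k => ∑ i ∈ s, f i l k) n = ∑ i ∈ s, RR (f i) n := by
  unfold RR; rw [Finset.sum_comm]; refine Finset.sum_congr rfl fun P _ => by rw [Finset.mul_sum]

lemma coeff_B (l k n : ℕ) : coeff n (B l k) = RR (fun a b => if a ≤ l ∧ b ≤ k then 1 else 0) n := by
  unfold RR B
  rw [coeff_mk, Finset.sum_filter]
  refine Finset.sum_congr rfl fun P _ => by rw [mul_ite, mul_one, mul_zero]

lemma coeff_B_large {l k n : ℕ} (hl : n ≤ l) (hk : n ≤ k) : coeff n (B l k) = pb n := by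
  rw [coeff_B]
  exact RR_congr fun a b ha hb _ _ => by rw [if_pos ⟨by omega, by omega⟩]

noncomputable def beta (m N : ℕ) : PowerSeries ℤ := ∑ i ∈ range N, X^i * B (m+i) i
noncomputable def betaS (m : ℕ) : PowerSeries ℤ := PowerSeries.mk fun n => coeff n (beta m (n+1))

lemma coeff_beta {m N n : ℕ} (h : n < N) : coeff n (beta m N) = coeff n (betaS m) := by
  rw [betaS, coeff_mk]
  induction N with
  | zero => omega
  | succ N ih =>
    by_cases h1 : n = N
    · rw [h1]
    · rw [beta, Finset.sum_range_succ, map_add, coeff_X_pow_mul', if_neg (by omega), add_zero]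
      exact ih (by omega)

lemma Tel (M N : ℕ) : B (N+1+M+1) (N+1) = beta M (N+2) + X * beta (M+1) (N+1) + X^(M+3) * (beta (M+3) N + beta (M+2) N) := by
  induction N with
  | zero =>
    have := R2 (M+1) 0
    simp only [beta, Finset.sum_range_succ, Finset.sum_range_zero, B_zero_right, zero_add, Nat.add_zero] at *
    rw [show 1+M+1 = M+1+1 by ring, this]
    ring
  | succ N ih =>
    have h1 := R2 (N+1+M+1) (N+1)
    have h2 := R1 (N+1+M+1) N
    have hb : ∀ m N, beta m (N+1) = beta m N + X^N * B (m+N) N := fun m N => Finset.sum_range_succ _ _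
    rw [hb M (N+2), hb (M+1) (N+1), hb (M+3) N, hb (M+2) N]
    rw [show N+1+1+M+1 = N+1+M+1+1 by ring, show M+(N+2) = N+1+M+1 by ring, show M+1+(N+1)=N+1+M+1 by ring,
      show M+3+N = N+1+M+1+1 by ring, show M+2+N=N+1+M+1 by ring]
    linear_combination h1 + h2 + ih

lemma PS_eq (M : ℕ) : PowerSeries.mk pb = betaS M + X * betaS (M+1) + X^(M+3) * (betaS (M+3) + betaS (M+2)) := by
  ext n
  have h := congrArg (coeff n) (Tel M n)
  rw [coeff_B_large (by omega) (by omega)] at h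
  rw [coeff_mk, h]
  have hX : ∀ b : PowerSeries ℤ, X * b = X^1 * b := fun b => by rw [pow_one]
  rw [hX, hX]
  simp only [map_add, coeff_X_pow_mul']
  rw [coeff_beta (by omega)]
  congr 1
  · congr 1
    split_ifs with h1
    · rw [coeff_beta (by omega)]
    · rfl
  · split_ifs with h1
    · rw [coeff_beta (by omega), coeff_beta (by omega)]
    · rfl

lemma hS_eq (m : ℕ) : PowerSeries.mk (hh m) = X^(m+1) * (betaS (m+1) + betaS m) := by
  ext n
  have e : coeff n (X^(m+1) * (betaS (m+1) + betaS m)) = coeff n (X^(m+1) * (beta (m+1) (n+1) + beta m (n+1))) := by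
    simp only [map_add, coeff_X_pow_mul']
    split_ifs with h1
    · rw [coeff_beta (by omega), coeff_beta (by omega)]
    · rfl
  have e2 : X^(m+1) * (beta (m+1) (n+1) + beta m (n+1)) = ∑ i ∈ range (n+1), (B (m+i+1) (i+1) - B (m+i) (i+1)) := by
    unfold beta
    rw [← Finset.sum_add_distrib, Finset.mul_sum]
    refine Finset.sum_congr rfl fun i _ => ?_
    rw [R1 (m+i) i, show m+1+i = m+i+1 by ring]; ring
  rw [e, e2, coeff_mk, map_sum]
  simp only [map_sub, coeff_B]
  simp only [← RR_sub]
  rw [← RR_sum]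
  unfold hh
  refine RR_congr fun l k hl hk h0 h1 => ?_
  by_cases h : k + m ≤ l ∧ 1 ≤ k
  · rw [if_pos h, Finset.sum_eq_single (l-m-1)]
    · rw [if_pos (by omega), if_neg (by omega)]; rfl
    · intro b _ hb
      by_cases h3 : l ≤ m + b ∧ k ≤ b+1
      · rw [if_pos (by omega), if_pos (by omega)]; rfl
      · rw [if_neg (by omega), if_neg (by omega)]; rfl
    · intro h3; simp at h3; omega
  · rw [if_neg h, Finset.sum_eq_zero]
    intro b _
    by_cases h3 : l ≤ m + b ∧ k ≤ b+1
    · rw [if_pos (by omega), if_pos (by omega)]; rfl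
    · rw [if_neg (by omega), if_neg (by omega)]; rfl

lemma HS_rec (m : ℕ) : PowerSeries.mk (HH m) + X^(m+1) * PowerSeries.mk (HH (m+2)) = 2 * X^(m+1) * PowerSeries.mk pb := by
  have e : ∀ m, PowerSeries.mk (HH m) = PowerSeries.mk (hh m) + PowerSeries.mk (hh (m+1)) := fun m => by
    ext n; simp [HH]
  rw [e, e, hS_eq, hS_eq, hS_eq, hS_eq]
  linear_combination -X^(m+1) * (PS_eq m + PS_eq (m+1))

lemma HH_rec (m n : ℕ) : HH m n + (if m+1 ≤ n then HH (m+2) (n-(m+1)) else 0) = if m+1 ≤ n then 2 * pb (n-(m+1)) else 0 := by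
  have h := congrArg (coeff n) (HS_rec m)
  rw [show 2 * X^(m+1) * PowerSeries.mk pb = X^(m+1) * PowerSeries.mk (fun n => 2 * pb n) by
    have : PowerSeries.mk (fun n => 2 * pb n) = 2 * PowerSeries.mk pb := by
      ext n
      rw [show (2:PowerSeries ℤ) = PowerSeries.C 2 by rfl, coeff_C_mul]; simp
    rw [this]; ring] at h
  simpa only [map_add, coeff_X_pow_mul', coeff_mk] using h

def EE (l k n : ℕ) : ℤ := RR (fun a b => if a = l ∧ b = k then 1 else 0) n

lemma EE_symm (l k n : ℕ) : EE l k n = EE k l n := by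
  have hz : ∀ k, EE 0 (k+1) n = 0 := fun k => by
    unfold EE
    have : RR (fun a b => if a = 0 ∧ b = k+1 then (1:ℤ) else 0) n = RR (fun _ _ => 0) n :=
      RR_congr fun a b _ _ h0 _ => by rw [if_neg (by omega)]
    rw [this]; simp [RR]
  have hz' : ∀ k, EE (k+1) 0 n = 0 := fun k => by
    unfold EE
    have : RR (fun a b => if a = k+1 ∧ b = 0 then (1:ℤ) else 0) n = RR (fun _ _ => 0) n :=
      RR_congr fun a b _ _ h0 _ => by rw [if_neg (by omega)]
    rw [this]; simp [RR]
  have hs : ∀ l k, EE (l+1) (k+1) n = coeff n (B (l+1) (k+1)) - coeff n (B l (k+1)) - (coeff n (B (l+1) k) - coeff n (B l k)) := fun l k => by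
    simp only [coeff_B, ← RR_sub]
    refine RR_congr fun a b _ _ _ _ => ?_
    by_cases h1 : a ≤ l <;> by_cases h2 : b ≤ k <;> by_cases h3 : a = l+1 <;> by_cases h4 : b = k+1 <;>
      simp [h1, h2, h3, h4] <;> (try split_ifs) <;> (try omega)
  cases l with
  | zero => cases k with
    | zero => rfl
    | succ k => rw [hz, hz']
  | succ l => cases k with
    | zero => rw [hz, hz']
    | succ k => rw [hs, hs, B_symm (l+1) (k+1), B_symm l (k+1), B_symm (l+1) k, B_symm l k]; ring

lemma RR_eq_E (f : ℕ → ℕ → ℤ) (n : ℕ) : RR f n = ∑ l ∈ range (n+1), ∑ k ∈ range (n+1), f l k * EE l k n := by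
  unfold EE
  simp only [← RR_smul, ← RR_sum]
  refine RR_congr fun l k hl hk _ _ => ?_
  rw [Finset.sum_eq_single l, Finset.sum_eq_single k]
  · simp
  · intro b _ hb; simp [hb.symm]
  · intro h; simp at h; omega
  · intro b _ hb; apply Finset.sum_eq_zero; intro c _; simp [hb.symm]
  · intro h; simp at h; omega

lemma RR_symm (f : ℕ → ℕ → ℤ) (n : ℕ) : RR f n = RR (fun l k => f k l) n := by
  rw [RR_eq_E, RR_eq_E, Finset.sum_comm]
  refine Finset.sum_congr rfl fun k _ => Finset.sum_congr rfl fun l _ => by rw [EE_symm]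

lemma pb_H0 (n : ℕ) : pb n = (if n = 0 then 1 else 0) + HH 0 n := by
  by_cases hn : n = 0
  · subst hn
    simp only [pb, HH, hh, RR, if_true]
    simp [wt]
  · unfold HH hh pb
    rw [if_neg hn, zero_add, RR_symm (fun l k => if k + (0+1) ≤ l ∧ 1 ≤ k then 1 else 0), ← RR_add]
    refine RR_congr fun l k _ _ h0 h1 => ?_
    by_cases h : k ≤ l
    · rw [if_pos (by omega), if_neg (by omega)]; rfl
    · rw [if_neg (by omega), if_pos (by omega)]; rfl

def dd (n : ℕ) : ℤ := RR (fun l k => (if ((l:ℤ)-k) % 5 = 0 then 1 else 0) - (if ((l:ℤ)-k) % 5 = 2 then 1 else 0)) n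

lemma dd_eq (n : ℕ) : (nbar 0 5 n : ℤ) - nbar 2 5 n = dd n := by
  rw [nbar_eq, nbar_eq]
  unfold dd
  rw [RR_sub, Finset.sum_filter, Finset.sum_filter]
  unfold RR
  congr 1 <;> refine Finset.sum_congr rfl fun P _ => ?_ <;> rw [mul_ite, mul_one, mul_zero] <;> split_ifs with h1 h2 h2 <;> first | rfl | (exfalso; simp [Int.ModEq] at h1 h2; omega)

def ind (m r : ℕ) : ℤ := if m ≤ r then 1 else 0
lemma G_val (K r : ℕ) : ∑ j ∈ range K, (2*(ind (5*j+1) r + ind (5*j+2) r) - (ind (5*j+2) r + ind (5*j+3) r)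
    + (ind (5*j+3) r + ind (5*j+4) r) - 2*(ind (5*j+4) r + ind (5*j+5) r)) =
    if r ≤ 5*K then (if r % 5 = 0 then 0 else if r % 5 = 1 ∨ r % 5 = 4 then 2 else 3) else 0 := by
  induction K with
  | zero => simp; intro h; simp [h]
  | succ K ih =>
    rw [Finset.sum_range_succ, ih]
    rcases lt_or_ge r (5*K+1) with h | h
    · unfold ind
      rw [if_pos (by omega), if_pos (by omega : r ≤ 5*(K+1))]
      repeat rw [if_neg (by omega : ¬ (_ ≤ r))]
      ring
    · rw [if_neg (by omega)]
      rcases lt_or_ge r (5*K+6) with h' | h'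
      · obtain ⟨s, rfl⟩ : ∃ s, r = 5*K+1+s := ⟨r-(5*K+1), by omega⟩
        have : s < 5 := by omega
        unfold ind
        interval_cases s <;> simp <;> omega
      · unfold ind
        rw [if_neg (by omega : ¬ r ≤ 5*(K+1))]
        repeat rw [if_pos (by omega : (_ ≤ r))]
        ring

lemma hh_ind (m n : ℕ) (hm : 1 ≤ m) : hh m n = RR (fun l k => ind m (l-k)) n := by
  refine RR_congr fun l k _ _ h0 h1 => ?_
  unfold ind
  by_cases h : k + m ≤ l
  · rw [if_pos (by omega), if_pos (by omega)]
  · rw [if_neg (by omega), if_neg (by omega)]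

lemma dd_HH (n K : ℕ) (hK : n ≤ 5*K) : dd n = pb n - ∑ j ∈ range K, (2 * HH (5*j+1) n - HH (5*j+2) n + HH (5*j+3) n - 2 * HH (5*j+4) n) := by
  have e : ∑ j ∈ range K, (2 * HH (5*j+1) n - HH (5*j+2) n + HH (5*j+3) n - 2 * HH (5*j+4) n) =
      RR (fun l k => if (l-k) % 5 = 0 then 0 else if (l-k) % 5 = 1 ∨ (l-k) % 5 = 4 then 2 else 3) n := by
    have : ∀ j, 2 * HH (5*j+1) n - HH (5*j+2) n + HH (5*j+3) n - 2 * HH (5*j+4) n = RR (fun l k => 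
      (2*(ind (5*j+1) (l-k) + ind (5*j+2) (l-k)) - (ind (5*j+2) (l-k) + ind (5*j+3) (l-k))
    + (ind (5*j+3) (l-k) + ind (5*j+4) (l-k)) - 2*(ind (5*j+4) (l-k) + ind (5*j+5) (l-k)))) n := fun j => by
      unfold HH
      rw [hh_ind _ _ (by omega), hh_ind _ _ (by omega), hh_ind _ _ (by omega), hh_ind _ _ (by omega), hh_ind _ _ (by omega)]
      rw [RR_sub, RR_add, RR_sub, RR_smul, RR_smul, RR_add, RR_add, RR_add, RR_add]
    simp only [this, ← RR_sum]
    refine RR_congr fun l k _ _ _ _ => ?_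
    rw [G_val, if_pos (by omega)]
  rw [e]
  unfold dd pb
  rw [← RR_sub]
  have h2 : ∀ f g : ℕ → ℕ → ℤ, (∀ l k, f l k + f k l = g l k + g k l) → RR f n = RR g n := by
    intro f g h
    have a : RR f n + RR f n = RR g n + RR g n := by
      nth_rewrite 2 [RR_symm f]
      nth_rewrite 2 [RR_symm g]
      rw [← RR_add, ← RR_add]
      exact RR_congr fun l k _ _ _ _ => h l k
    omega
  apply h2
  intro l k
  wlog hlk : k ≤ l generalizing l k
  · have := this k l (by omega)
    linarith
  obtain ⟨r, rfl⟩ : ∃ r, l = k + r := ⟨l-k, by omega⟩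
  rw [show k + r - k = r by omega, show k - (k+r) = 0 by omega, show (((k+r:ℕ):ℤ) - k) = r by push_cast; ring, show ((k:ℤ) - (k+r:ℕ)) = -r by push_cast; ring]
  have : r % 5 = 0 ∨ r % 5 = 1 ∨ r % 5 = 2 ∨ r % 5 = 3 ∨ r % 5 = 4 := by omega
  rcases this with h | h | h | h | h
  · rw [show (r:ℤ) % 5 = 0 by omega, show (-(r:ℤ)) % 5 = 0 by omega, h]; norm_num
  · rw [show (r:ℤ) % 5 = 1 by omega, show (-(r:ℤ)) % 5 = 4 by omega, h]; norm_num
  · rw [show (r:ℤ) % 5 = 2 by omega, show (-(r:ℤ)) % 5 = 3 by omega, h]; norm_num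
  · rw [show (r:ℤ) % 5 = 3 by omega, show (-(r:ℤ)) % 5 = 2 by omega, h]; norm_num
  · rw [show (r:ℤ) % 5 = 4 by omega, show (-(r:ℤ)) % 5 = 1 by omega, h]; norm_num

end OP
end

section
open Finset Filter Topology
namespace OP

lemma RR_mono {f g : ℕ → ℕ → ℤ} {n : ℕ} (h : ∀ l k, f l k ≤ g l k) : RR f n ≤ RR g n := by
  unfold RR
  refine Finset.sum_le_sum fun P _ => mul_le_mul_of_nonneg_left (h _ _) ?_
  unfold wt; positivity

lemma RR_zero (n : ℕ) : RR (fun _ _ => 0) n = 0 := by simp [RR]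

lemma HH_nonneg (m n : ℕ) : 0 ≤ HH m n := by
  have h : ∀ m, 0 ≤ hh m n := fun m => by
    rw [← RR_zero n]
    exact RR_mono fun l k => by split_ifs <;> norm_num
  exact add_nonneg (h _) (h _)

lemma pb_nonneg (n : ℕ) : 0 ≤ pb n := by
  rw [← RR_zero n]
  exact RR_mono fun l k => by norm_num

lemma pb_le (n : ℕ) : pb n ≤ 2^n := by
  induction n with
  | zero =>
    have h1 := HH_rec 0 0
    rw [pb_H0]
    simp at h1
    simp [h1]
  | succ n ih =>
    have h1 := HH_rec 0 (n+1)
    rw [if_pos (by omega), if_pos (by omega)] at h1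
    simp only [zero_add, Nat.add_sub_cancel] at h1
    have h2 := HH_nonneg 2 n
    rw [pb_H0, if_neg (by omega), pow_succ]
    linarith

lemma HH_zero {m n : ℕ} (h : n ≤ m) : HH m n = 0 := by
  have h1 := HH_rec m n
  rw [if_neg (by omega), if_neg (by omega)] at h1
  linarith

lemma HH_le (m n : ℕ) : HH m n ≤ 2 * 2^n := by
  have h1 := HH_rec m n
  split_ifs at h1 with h
  · have h2 := HH_nonneg (m+2) (n-(m+1))
    have h3 := pb_le (n-(m+1))
    have h4 : (2:ℤ)^(n-(m+1)) ≤ 2^n := pow_le_pow_right₀ (by norm_num) (by omega)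
    linarith
  · have : (0:ℤ) ≤ 2^n := by positivity
    linarith

lemma dd_abs (n : ℕ) : |dd n| ≤ 2^n := by
  refine le_trans ?_ (pb_le n)
  unfold dd pb
  rw [abs_le]
  constructor
  · rw [show -RR (fun _ _ => 1) n = RR (fun _ _ => -1) n by simp [RR]]
    exact RR_mono fun l k => by split_ifs <;> norm_num
  · exact RR_mono fun l k => by split_ifs <;> norm_num

section
variable {x : ℂ}

lemma summ_of_le {a : ℕ → ℤ} (C : ℝ) (ha : ∀ n, |a n| ≤ C * 2^n) (hx : ‖x‖ ≤ 1/16) : Summable (fun n => (a n : ℂ) * x^n) := by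
  have hs : Summable (fun n : ℕ => C * (1/8:ℝ)^n) := (summable_geometric_of_lt_one (by norm_num) (by norm_num)).mul_left _
  refine Summable.of_norm_bounded hs fun n => ?_
  rw [norm_mul, norm_pow, Complex.norm_intCast]
  have h1 := ha n
  have h2 : ‖x‖^n ≤ (1/16)^n := pow_le_pow_left₀ (norm_nonneg _) hx n
  have h3 : (0:ℝ) ≤ |(a n : ℝ)| := abs_nonneg _
  calc |(a n:ℝ)| * ‖x‖^n ≤ (C * 2^n) * (1/16)^n := mul_le_mul (by exact_mod_cast h1) h2 (by positivity) (le_trans h3 (by exact_mod_cast h1))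
    _ = C * (1/8)^n := by rw [mul_assoc, ← mul_pow]; norm_num

lemma norm_of_le {a : ℕ → ℤ} (C : ℝ) (ha : ∀ n, |a n| ≤ C * 2^n) (hx : ‖x‖ ≤ 1/16) : ‖∑' n, (a n : ℂ) * x^n‖ ≤ C * (8/7) := by
  have hs : HasSum (fun n : ℕ => C * (1/8:ℝ)^n) (C * (8/7)) := by
    have := (hasSum_geometric_of_lt_one (r := (1/8:ℝ)) (by norm_num) (by norm_num)).mul_left C
    norm_num at this ⊢; exact this
  refine tsum_of_norm_bounded hs fun n => ?_
  rw [norm_mul, norm_pow, Complex.norm_intCast]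
  have h1 := ha n
  have h2 : ‖x‖^n ≤ (1/16)^n := pow_le_pow_left₀ (norm_nonneg _) hx n
  have h3 : (0:ℝ) ≤ |(a n : ℝ)| := abs_nonneg _
  calc |(a n:ℝ)| * ‖x‖^n ≤ (C * 2^n) * (1/16)^n := mul_le_mul (by exact_mod_cast h1) h2 (by positivity) (le_trans h3 (by exact_mod_cast h1))
    _ = C * (1/8)^n := by rw [mul_assoc, ← mul_pow]; norm_num

lemma HH_bd (m n : ℕ) : (|HH m n| : ℝ) ≤ 2 * 2^n := by
  have h := HH_le m n
  have h0 := HH_nonneg m n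
  rw [abs_of_nonneg (by exact_mod_cast h0)]
  exact_mod_cast h
lemma pb_bd (n : ℕ) : (|pb n| : ℝ) ≤ 1 * 2^n := by
  have h := pb_le n
  have h0 := pb_nonneg n
  rw [abs_of_nonneg (by exact_mod_cast h0), one_mul]
  exact_mod_cast h
lemma dd_bd (n : ℕ) : (|dd n| : ℝ) ≤ 1 * 2^n := by
  rw [one_mul]; exact_mod_cast dd_abs n

noncomputable def PP (x : ℂ) : ℂ := ∑' n, (pb n : ℂ) * x^n
noncomputable def HHf (m : ℕ) (x : ℂ) : ℂ := ∑' n, (HH m n : ℂ) * x^n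
noncomputable def DD (x : ℂ) : ℂ := ∑' n, (dd n : ℂ) * x^n

lemma hasSum_PP (hx : ‖x‖ ≤ 1/16) : HasSum (fun n => (pb n : ℂ) * x^n) (PP x) :=
  (summ_of_le 1 (fun n => by exact_mod_cast pb_bd n) hx).hasSum
lemma hasSum_HHf (m : ℕ) (hx : ‖x‖ ≤ 1/16) : HasSum (fun n => (HH m n : ℂ) * x^n) (HHf m x) :=
  (summ_of_le 2 (fun n => by exact_mod_cast HH_bd m n) hx).hasSum
lemma hasSum_DD (hx : ‖x‖ ≤ 1/16) : HasSum (fun n => (dd n : ℂ) * x^n) (DD x) :=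
  (summ_of_le 1 (fun n => by exact_mod_cast dd_bd n) hx).hasSum
lemma norm_HHf (m : ℕ) (hx : ‖x‖ ≤ 1/16) : ‖HHf m x‖ ≤ 2 * (8/7) :=
  norm_of_le 2 (fun n => by exact_mod_cast HH_bd m n) hx

lemma shift_hasSum {a : ℕ → ℤ} {s : ℂ} (k : ℕ) (h : HasSum (fun n => (a n : ℂ) * x^n) s) :
    HasSum (fun n => ((if k ≤ n then a (n-k) else 0 : ℤ) : ℂ) * x^n) (x^k * s) := by
  have h1 : HasSum (fun n => x^k * ((a n : ℂ) * x^n)) (x^k * s) := h.mul_left _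
  have hinj : Function.Injective (fun n : ℕ => n + k) := fun a b h => by simpa using h
  rw [← hinj.hasSum_iff] 
  · convert h1 using 2 with n
    simp [Function.comp]
    rw [pow_add]; ring
  · intro n hn
    have : ¬ k ≤ n := fun h => hn ⟨n-k, by simp; omega⟩
    simp [this]

lemma HHf_rec (m : ℕ) (hx : ‖x‖ ≤ 1/16) : HHf m x = 2 * x^(m+1) * PP x - x^(m+1) * HHf (m+2) x := by
  have h1 := (hasSum_HHf m hx).add (shift_hasSum (m+1) (hasSum_HHf (m+2) hx))
  have h2 := (shift_hasSum (m+1) (hasSum_PP hx)).mul_left 2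
  have h3 : (fun n => (HH m n : ℂ) * x^n + ((if m+1 ≤ n then HH (m+2) (n-(m+1)) else 0 : ℤ) : ℂ) * x^n)
    = fun n => 2 * (((if m+1 ≤ n then pb (n-(m+1)) else 0 : ℤ) : ℂ) * x^n) := by
    funext n
    have := congrArg (Int.cast (R := ℂ)) (HH_rec m n)
    rw [← add_mul, ← mul_assoc]
    congr 1
    rw [Int.cast_add] at this
    rw [this]
    split_ifs <;> push_cast <;> ring
  rw [h3] at h1
  have := h1.unique h2
  linear_combination this

lemma HHf_iter (m N : ℕ) (hx : ‖x‖ ≤ 1/16) : HHf m x = ∑ n ∈ range N, (-1)^n * (2 * PP x * x^((n+1)^2+m*(n+1)))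
    + (-1)^N * x^(N^2+m*N) * HHf (m+2*N) x := by
  induction N with
  | zero => simp
  | succ N ih =>
    rw [ih, Finset.sum_range_succ, HHf_rec (m+2*N) hx, show m+2*N+2 = m+2*(N+1) by ring,
      show (N+1)^2+m*(N+1) = (N^2+m*N) + (m+2*N+1) by ring, pow_add x]
    ring

lemma summ_sq (m : ℕ) (hx : ‖x‖ ≤ 1/16) : Summable (fun n : ℕ => (-1)^n * x^((n+1)^2+m*(n+1))) := by
  have hs : Summable (fun n : ℕ => (1/16:ℝ)^n) := (summable_geometric_of_lt_one (by norm_num) (by norm_num))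
  refine Summable.of_norm_bounded hs fun n => ?_
  rw [norm_mul, norm_pow, norm_pow]
  simp only [norm_neg, norm_one, one_pow, one_mul]
  calc ‖x‖^((n+1)^2+m*(n+1)) ≤ (1/16)^((n+1)^2+m*(n+1)) := pow_le_pow_left₀ (norm_nonneg _) hx _
    _ ≤ (1/16)^n := pow_le_pow_of_le_one (by norm_num) (by norm_num) (by nlinarith)

lemma HHf_eq (m : ℕ) (hx : ‖x‖ ≤ 1/16) : HHf m x = 2 * PP x * ∑' n : ℕ, (-1)^n * x^((n+1)^2+m*(n+1)) := by
  have h1 := ((summ_sq m hx).hasSum.mul_left (2 * PP x)).tendsto_sum_nat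
  have h2 : Tendsto (fun N : ℕ => (-1)^N * x^(N^2+m*N) * HHf (m+2*N) x) atTop (𝓝 0) := by
    have hz : Tendsto (fun N : ℕ => (1/16:ℝ)^N * (2*(8/7))) atTop (𝓝 0) := by
      have := (tendsto_pow_atTop_nhds_zero_of_lt_one (r := (1/16:ℝ)) (by norm_num) (by norm_num)).mul_const (2*(8/7))
      simpa using this
    refine squeeze_zero_norm (fun N => ?_) hz
    rw [norm_mul, norm_mul, norm_pow, norm_pow]
    simp only [norm_neg, norm_one, one_pow, one_mul]
    refine mul_le_mul ?_ (norm_HHf _ hx) (norm_nonneg _) (by positivity)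
    calc ‖x‖^(N^2+m*N) ≤ (1/16)^(N^2+m*N) := pow_le_pow_left₀ (norm_nonneg _) hx _
      _ ≤ (1/16)^N := pow_le_pow_of_le_one (by norm_num) (by norm_num) (by nlinarith)
  have h3 := h1.add h2
  rw [add_zero] at h3
  refine tendsto_nhds_unique (tendsto_const_nhds.congr fun N => ?_) h3
  rw [HHf_iter m N hx]
  congr 1
  refine Finset.sum_congr rfl fun n _ => by ring

lemma PP_H0 (hx : ‖x‖ ≤ 1/16) : PP x = 1 + HHf 0 x := by
  have h1 : HasSum (fun n => ((if n = 0 then 1 else 0 : ℤ) : ℂ) * x^n) 1 := by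
    convert hasSum_ite_eq (0:ℕ) (1:ℂ) using 2 with n
    split_ifs with h <;> simp [h]
  have h2 := h1.add (hasSum_HHf 0 hx)
  refine (hasSum_PP hx).unique ?_
  convert h2 using 2 with n
  rw [pb_H0]; push_cast; ring

lemma phi_nat (hx0 : x ≠ 0) (hx : ‖x‖ ≤ 1/16) : phi x = 1 - 2 * ∑' n : ℕ, (-1)^n * x^((n+1)^2+0*(n+1)) := by
  obtain ⟨S, hS⟩ : ∃ S, S = ∑' n : ℕ, (-1)^n * x^((n+1)^2+0*(n+1)) := ⟨_, rfl⟩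
  have h1 := (summ_sq 0 hx).hasSum.mul_left (-1)
  rw [← hS] at h1 ⊢
  let f : ℤ → ℂ := fun n => (-1)^n * x^(n*n)
  have hA : ∀ n : ℕ, f ((n:ℤ)+1) = -1 * ((-1)^n * x^((n+1)^2+0*(n+1))) := fun n => by
    simp only [f]
    rw [show ((n:ℤ)+1)*((n:ℤ)+1) = (((n+1)^2+0*(n+1) : ℕ) : ℤ) by push_cast; ring, zpow_natCast,
      show ((n:ℤ)+1) = ((n+1:ℕ):ℤ) by push_cast; ring, zpow_natCast]; ring
  have hB : ∀ n : ℕ, f (-((n:ℤ)+1)) = -1 * ((-1)^n * x^((n+1)^2+0*(n+1))) := fun n => by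
    rw [← hA]
    simp only [f]
    rw [zpow_neg, ← inv_zpow, neg_mul_neg]; norm_num
  have hf : HasSum f (-1 * S + f 0 + -1 * S) :=
    HasSum.of_add_one_of_neg_add_one (by simp_rw [hA]; exact h1) (by simp_rw [hB]; exact h1)
  have h0 : f 0 = 1 := by simp [f]
  have : phi x = -1 * S + f 0 + -1 * S := hf.tsum_eq
  rw [this, h0]; ring

lemma phi_PP (hx0 : x ≠ 0) (hx : ‖x‖ ≤ 1/16) : phi x * PP x = 1 := by
  have h1 := PP_H0 hx
  rw [HHf_eq 0 hx] at h1
  rw [phi_nat hx0 hx]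
  linear_combination h1

end
end OP
end

section
open Finset Filter Topology
namespace OP
lemma hs_of {ι : Type} {f g : ι → ℂ} {a b : ℂ} (h : HasSum f a) (hf : ∀ n, g n = f n) (hb : b = a) : HasSum g b := by
  rw [hb, show g = f from funext hf]; exact h

section
variable {x : ℂ}

noncomputable def vv (x : ℂ) (b k n : ℕ) : ℂ := (-1)^n * x^((n+1)^2+(5*k+b)*(n+1))
noncomputable def Vt (x : ℂ) (b n : ℕ) : ℂ := (-1)^n * x^((n+1)^2+b*(n+1)) / (1 - x^(5*(n+1)))

lemma summ_vv (b : ℕ) (hx : ‖x‖ ≤ 1/16) : Summable (fun p : ℕ × ℕ => vv x b p.1 p.2) := by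
  have hs : Summable (fun n : ℕ => (1/16:ℝ)^n) := (summable_geometric_of_lt_one (by norm_num) (by norm_num))
  have hs2 := hs.mul_of_nonneg hs (fun n => by positivity) (fun n => by positivity)
  refine Summable.of_norm_bounded hs2 fun p => ?_
  obtain ⟨k, n⟩ := p
  unfold vv
  rw [norm_mul, norm_pow, norm_pow]
  simp only [norm_neg, norm_one, one_pow, one_mul]
  rw [← pow_add]
  calc ‖x‖^((n+1)^2+(5*k+b)*(n+1)) ≤ (1/16)^((n+1)^2+(5*k+b)*(n+1)) := pow_le_pow_left₀ (norm_nonneg _) hx _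
    _ ≤ (1/16)^(k+n) := pow_le_pow_of_le_one (by norm_num) (by norm_num) (by nlinarith [Nat.zero_le (k*n), Nat.zero_le (b*n)])

lemma hasSum_vv_k (b n : ℕ) (hx : ‖x‖ ≤ 1/16) : HasSum (fun k => vv x b k n) (Vt x b n) := by
  have h : ‖x^(5*(n+1))‖ < 1 := by
    rw [norm_pow]
    exact pow_lt_one₀ (norm_nonneg _) (by linarith) (by omega)
  have := (hasSum_geometric_of_norm_lt_one h).mul_left ((-1)^n * x^((n+1)^2+b*(n+1)))
  rw [← div_eq_mul_inv] at this
  refine hs_of this (fun k => ?_) rfl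
  unfold vv
  rw [← pow_mul, mul_assoc, ← pow_add]
  congr 2; ring

lemma summ_Vt (b : ℕ) (hx : ‖x‖ ≤ 1/16) : Summable (Vt x b) := by
  have h := (summ_vv b hx).prod_symm.prod
  have e : Vt x b = fun n => ∑' k, vv x b k n := funext fun n => (hasSum_vv_k b n hx).tsum_eq.symm
  rw [e]; exact h

lemma hasSum_HHf_k (b : ℕ) (hx : ‖x‖ ≤ 1/16) : HasSum (fun k => HHf (5*k+b) x) (2 * PP x * ∑' n, Vt x b n) := by
  have hs := summ_vv b hx
  have h1 : HasSum (fun k => ∑' n, vv x b k n) (∑' n, Vt x b n) := by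
    have h2 : Summable (fun k => ∑' n, vv x b k n) := hs.prod
    have h3 : ∑' k, ∑' n, vv x b k n = ∑' n, ∑' k, vv x b k n := (Summable.tsum_comm (f := fun k n => vv x b k n) hs).symm
    have e : ∑' n, Vt x b n = ∑' k, ∑' n, vv x b k n := by
      rw [h3]
      exact tsum_congr fun n => (hasSum_vv_k b n hx).tsum_eq.symm
    rw [e]
    exact h2.hasSum
  have := h1.mul_left (2 * PP x)
  exact hs_of this (fun k => HHf_eq _ hx) rfl

def cF (k n : ℕ) : ℤ := 2 * HH (5*k+1) n - HH (5*k+2) n + HH (5*k+3) n - 2 * HH (5*k+4) n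

lemma cF_bd (k n : ℕ) : |cF k n| ≤ 12 * 2^n := by
  unfold cF
  have h := fun m => HH_le m n
  have h0 := fun m => HH_nonneg m n
  rw [abs_le]
  constructor <;> linarith [h (5*k+1), h (5*k+2), h (5*k+3), h (5*k+4), h0 (5*k+1), h0 (5*k+2), h0 (5*k+3), h0 (5*k+4)]

lemma cF_zero {k n : ℕ} (h : n ≤ k) : cF k n = 0 := by
  unfold cF
  rw [HH_zero (by omega), HH_zero (by omega), HH_zero (by omega), HH_zero (by omega)]; ring

lemma summ_cF (hx : ‖x‖ ≤ 1/16) : Summable (fun p : ℕ × ℕ => (cF p.1 p.2 : ℂ) * x^p.2) := by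
  have hs : Summable (fun n : ℕ => (1/2:ℝ)^n) := (summable_geometric_of_lt_one (by norm_num) (by norm_num))
  have hs2 := (hs.mul_of_nonneg hs (fun n => by positivity) (fun n => by positivity)).mul_left 12
  refine Summable.of_norm_bounded hs2 fun p => ?_
  obtain ⟨k, n⟩ := p
  simp only
  by_cases h : n ≤ k
  · rw [cF_zero h]; simp
  rw [norm_mul, norm_pow, Complex.norm_intCast]
  have h1 : (|cF k n| : ℝ) ≤ 12 * 2^n := by exact_mod_cast cF_bd k n
  calc (|cF k n| : ℝ) * ‖x‖^n ≤ (12 * 2^n) * (1/16)^n := mul_le_mul h1 (pow_le_pow_left₀ (norm_nonneg _) hx n) (by positivity) (by positivity)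
    _ = 12 * (1/8)^n := by rw [mul_assoc, ← mul_pow]; norm_num
    _ ≤ 12 * (1/4)^n := by gcongr; norm_num
    _ = 12 * ((1/2)^n * (1/2)^n) := by rw [← mul_pow]; norm_num
    _ ≤ 12 * ((1/2)^k * (1/2)^n) := by
      gcongr 12 * (?_ * _)
      exact pow_le_pow_of_le_one (by norm_num) (by norm_num) (by omega)

lemma DD_eq1 (hx : ‖x‖ ≤ 1/16) : DD x = PP x - (2 * (2 * PP x * ∑' n, Vt x 1 n) - 2 * PP x * ∑' n, Vt x 2 n
    + 2 * PP x * ∑' n, Vt x 3 n - 2 * (2 * PP x * ∑' n, Vt x 4 n)) := by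
  have hs := summ_cF hx
  have h1 : ∀ k, HasSum (fun n => (cF k n : ℂ) * x^n) (2 * HHf (5*k+1) x - HHf (5*k+2) x + HHf (5*k+3) x - 2 * HHf (5*k+4) x) := fun k => by
    have := ((((hasSum_HHf (5*k+1) hx).mul_left 2).sub (hasSum_HHf (5*k+2) hx)).add (hasSum_HHf (5*k+3) hx)).sub ((hasSum_HHf (5*k+4) hx).mul_left 2)
    refine hs_of this (fun n => ?_) rfl
    unfold cF; push_cast; ring
  have h2 := ((((hasSum_HHf_k 1 hx).mul_left 2).sub (hasSum_HHf_k 2 hx)).add (hasSum_HHf_k 3 hx)).sub ((hasSum_HHf_k 4 hx).mul_left 2)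
  rw [← h2.tsum_eq]
  have h3 : ∑' k, ∑' n, (cF k n : ℂ) * x^n = ∑' n, ∑' k, (cF k n : ℂ) * x^n := (Summable.tsum_comm (f := fun k n => (cF k n : ℂ) * x^n) hs).symm
  simp_rw [fun k => (h1 k).tsum_eq] at h3
  rw [h3]
  have h4 : Summable (fun n => ∑' k, (cF k n : ℂ) * x^n) := hs.prod_symm.prod
  refine (hasSum_DD hx).unique ?_
  refine hs_of ((hasSum_PP hx).sub h4.hasSum) (fun n => ?_) rfl
  rw [tsum_eq_sum (s := range n)]
  · rw [dd_HH n n (by omega), ← Finset.sum_mul]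
    unfold cF
    push_cast; ring
  · intro k hk
    rw [cF_zero (by simpa using hk)]; simp

lemma SB_eq (b c : ℕ) (hbc : b + c = 5) (hx0 : x ≠ 0) (hx : ‖x‖ ≤ 1/16) : SB x b = - ∑' n, Vt x b n + ∑' n, Vt x c n := by
  have hA : ∀ n : ℕ, sb x b ((n:ℤ)+1) = - Vt x b n := fun n => by
    unfold sb Vt
    rw [show ((n:ℤ)+1)*((n:ℤ)+1)+b*((n:ℤ)+1) = (((n+1)^2+b*(n+1) : ℕ) : ℤ) by push_cast; ring, zpow_natCast,
      show (5*((n:ℤ)+1)) = ((5*(n+1):ℕ):ℤ) by push_cast; ring, zpow_natCast,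
      show ((n:ℤ)+1) = ((n+1:ℕ):ℤ) by push_cast; ring, zpow_natCast]; ring
  have hB : ∀ n : ℕ, sb x b (-((n:ℤ)+1)) = Vt x c n := fun n => by
    have hc : (c:ℤ) = 5 - b := by omega
    have hne : 1 - x^(5*(n+1)) ≠ 0 := by
      have := one_sub_ne hx0 (by linarith : ‖x‖ < 1) (m := ((5*(n+1) : ℕ) : ℤ)) (by positivity)
      rwa [zpow_natCast] at this
    have hne2 := one_sub_ne hx0 (by linarith : ‖x‖ < 1) (m := 5 * (-((n:ℤ)+1))) (by omega)
    unfold sb Vt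
    rw [div_eq_div_iff hne2 hne]
    have e1 : x^((n+1)^2+c*(n+1)) = x^((-((n:ℤ)+1))*(-((n:ℤ)+1))+b*(-((n:ℤ)+1))) * x^(5*(n+1)) := by
      rw [← zpow_natCast x (5*(n+1)), ← zpow_add₀ hx0, ← zpow_natCast x]
      congr 1; push_cast; rw [hc]; ring
    have e2 : x^(5 * (-((n:ℤ)+1))) = (x^(5*(n+1)))⁻¹ := by
      rw [← zpow_natCast x (5*(n+1)), ← zpow_neg]; congr 1
    have e3 : (-1:ℂ)^(-((n:ℤ)+1)) = - (-1)^n := by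
      rw [zpow_neg, ← inv_zpow, show ((n:ℤ)+1) = ((n+1:ℕ):ℤ) by push_cast; ring, zpow_natCast, pow_succ]; norm_num
    rw [e1, e2, e3]
    have : x^(5*(n+1)) ≠ 0 := pow_ne_zero _ hx0
    field_simp
    ring
  have h0 : sb x b 0 = 0 := by simp [sb]
  have hf : HasSum (sb x b) (- ∑' n, Vt x b n + sb x b 0 + ∑' n, Vt x c n) :=
    HasSum.of_add_one_of_neg_add_one (by simp_rw [hA]; exact (summ_Vt b hx).hasSum.neg) (by simp_rw [hB]; exact (summ_Vt c hx).hasSum)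
  rw [h0, add_zero] at hf
  exact hf.tsum_eq

lemma phi_DD (hx0 : x ≠ 0) (hx : ‖x‖ ≤ 1/16) : phi x * DD x = 1 + 4 * SB x 1 - 2 * SB x 2 := by
  have h1 := SB_eq 1 4 rfl hx0 hx
  have h2 := SB_eq 2 3 rfl hx0 hx
  push_cast at h1 h2
  rw [h1, h2, DD_eq1 hx]
  linear_combination (1 + 4 * (-∑' n, Vt x 1 n + ∑' n, Vt x 4 n) - 2 * (-∑' n, Vt x 2 n + ∑' n, Vt x 3 n)) * phi_PP hx0 hx

lemma phi_ne (hx0 : x ≠ 0) (hx : ‖x‖ ≤ 1/16) : phi x ≠ 0 := fun h => by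
  have := phi_PP hx0 hx
  rw [h] at this; simp at this

lemma t_ne {q : ℂ} (hq0 : q ≠ 0) (hq : ‖q‖ ≤ 1/16) (k : ℤ) (hk : 1 ≤ k) (hk5 : k ≤ 5) : t q k ≠ 0 := by
  have hq1 : ‖q‖ < 1 := by linarith
  have hs := hasSum_t hq0 hq1 k
  have hsN : Summable (fun n : ℕ => (1/16:ℝ)^(n+1)) := by
    simp_rw [pow_succ]
    exact (summable_geometric_of_lt_one (by norm_num) (by norm_num)).mul_right _
  have hv : HasSum (fun n : ℕ => (1/16:ℝ)^(n+1)) (1/15) := by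
    have := (hasSum_geometric_of_lt_one (r := (1/16:ℝ)) (by norm_num) (by norm_num)).mul_right (1/16)
    simp_rw [pow_succ]
    rw [show (1/15:ℝ) = (1 - 1/16)⁻¹ * (1/16) by norm_num]; exact this
  have hb : ∀ (r : ℤ) (n : ℕ), ((n:ℤ) + 1 ≤ 5*r*(r-1)+k*r) → ‖ex q k r‖ ≤ (1/16)^(n+1) := fun r n h => by
    unfold ex
    rw [norm_mul, norm_zpow, norm_zpow, norm_neg, norm_one, one_zpow, one_mul]
    obtain ⟨e, he⟩ := Int.eq_ofNat_of_zero_le (by omega : 0 ≤ 5*r*(r-1)+k*r)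
    rw [he, zpow_natCast]
    calc ‖q‖^e ≤ (1/16)^e := pow_le_pow_left₀ (norm_nonneg _) hq _
      _ ≤ (1/16)^(n+1) := pow_le_pow_of_le_one (by norm_num) (by norm_num) (by omega)
  have hA : ∀ n : ℕ, ‖ex q k ((n:ℤ)+1)‖ ≤ (1/16)^(n+1) := fun n => hb _ n (by nlinarith [Int.natCast_nonneg n, mul_nonneg (Int.natCast_nonneg n) (Int.natCast_nonneg n)])
  have hB : ∀ n : ℕ, ‖ex q k (-((n:ℤ)+1))‖ ≤ (1/16)^(n+1) := fun n => hb _ n (by nlinarith [Int.natCast_nonneg n, mul_nonneg (Int.natCast_nonneg n) (Int.natCast_nonneg n)])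
  have h0 : ex q k 0 = 1 := by simp [ex]
  have hf := HasSum.of_add_one_of_neg_add_one (f := ex q k) (Summable.of_norm_bounded hsN hA).hasSum (Summable.of_norm_bounded hsN hB).hasSum
  have e := hs.unique hf
  have a1 := tsum_of_norm_bounded hv hA
  have a2 := tsum_of_norm_bounded hv hB
  intro ht
  rw [ht, h0] at e
  have : (1:ℂ) = -(∑' n : ℕ, ex q k ((n:ℤ)+1)) - ∑' n : ℕ, ex q k (-((n:ℤ)+1)) := by linear_combination -e
  have h3 := congrArg norm this
  have h4 := norm_sub_le (-(∑' n : ℕ, ex q k ((n:ℤ)+1))) (∑' n : ℕ, ex q k (-((n:ℤ)+1)))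
  rw [norm_neg] at h4
  rw [norm_one] at h3
  linarith

lemma good_small {q : ℂ} (hq0 : q ≠ 0) (hq : ‖q‖ ≤ 1/16) : Good q :=
  ⟨hq0, by linarith, t_ne hq0 hq 1 (by norm_num) (by norm_num), t_ne hq0 hq 2 (by norm_num) (by norm_num), t_ne hq0 hq 3 (by norm_num) (by norm_num),
   t_ne hq0 hq 4 (by norm_num) (by norm_num), t_ne hq0 hq 5 (by norm_num) (by norm_num)⟩

lemma DD_Dst (hx0 : x ≠ 0) (hx : ‖x‖ ≤ 1/16) : DD x = Dst x := by
  have h5 : ‖x^5‖ ≤ 1/16 := by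
    rw [norm_pow]
    calc ‖x‖^5 ≤ (1/16)^5 := pow_le_pow_left₀ (norm_nonneg _) hx _
      _ ≤ 1/16 := by norm_num
  have h := phi_Dst hx0 (by linarith) (good_small (pow_ne_zero 5 hx0) h5)
  rw [← phi_DD hx0 hx] at h
  exact (mul_left_cancel₀ (phi_ne hx0 hx) h).symm
end
end OP
end

section
open Finset Filter Topology
namespace OP

lemma geo5 {w : ℂ} (h5 : w^5 = 1) (h1 : w ≠ 1) : 1 + w + w^2 + w^3 + w^4 = 0 := by
  have : (w - 1) * (1 + w + w^2 + w^3 + w^4) = 0 := by linear_combination h5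
  exact (mul_eq_zero.mp this).resolve_left (sub_ne_zero.mpr h1)

lemma extract {x : ℂ} (hx0 : x ≠ 0) (hx : ‖x‖ ≤ 1/16) :
    HasSum (fun m : ℕ => (dd (5*m+4) : ℂ) * x^(5*m+4)) (x^4 * D4 (x^5)) := by
  obtain ⟨z, hz⟩ : ∃ z : ℂ, IsPrimitiveRoot z 5 := ⟨_, Complex.isPrimitiveRoot_exp 5 (by norm_num)⟩
  have hz5 := hz.pow_eq_one
  have hzn : ‖z‖ = 1 := hz.norm'_eq_one (by norm_num)
  have hz0 : z ≠ 0 := fun h => by rw [h] at hzn; simp at hzn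
  have hj : ∀ j : ℕ, HasSum (fun n => (dd n : ℂ) * (z^j * x)^n) (Dst (z^j * x)) := fun j => by
    have h0 : z^j * x ≠ 0 := mul_ne_zero (pow_ne_zero _ hz0) hx0
    have hn : ‖z^j * x‖ ≤ 1/16 := by rw [norm_mul, norm_pow, hzn, one_pow, one_mul]; exact hx
    rw [← DD_Dst h0 hn]; exact hasSum_DD hn
  have hx5 : ∀ j : ℕ, (z^j * x)^5 = x^5 := fun j => by
    rw [mul_pow, ← pow_mul, mul_comm j, pow_mul, hz5, one_pow, one_mul]
  have hs := ((((hj 0).add ((hj 1).mul_left z)).add ((hj 2).mul_left (z^2))).add ((hj 3).mul_left (z^3))).add ((hj 4).mul_left (z^4))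
  unfold Dst at hs
  simp only [hx5] at hs
  have hg := fun k (hk : ¬ 5 ∣ k) => geo5 (w := z^k) (by rw [← pow_mul, mul_comm, pow_mul, hz5, one_pow])
    (fun h => hk ((hz.pow_eq_one_iff_dvd k).mp h))
  have g1 := hg 1 (by norm_num)
  have g2 := hg 2 (by norm_num)
  have g4 := hg 4 (by norm_num)
  have hs2 := hs.div_const 5
  have hs3 : HasSum (fun n => if n % 5 = 4 then (dd n : ℂ) * x^n else 0) (x^4 * D4 (x^5)) := by
    refine hs_of hs2 (fun n => ?_) ?_
    · have e : ∀ j : ℕ, (z^j * x)^n = (z^n)^j * x^n := fun j => by rw [mul_pow, ← pow_mul, ← pow_mul, mul_comm j]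
      simp only [e]
      have e2 : ∀ j : ℕ, z^j * (z^n)^j = (z^(n+1))^j := fun j => by rw [pow_succ, mul_pow]; ring
      have e3 : ((dd n : ℂ) * ((z^n)^0 * x^n) + z * ((dd n : ℂ) * ((z^n)^1 * x^n)) + z^2 * ((dd n : ℂ) * ((z^n)^2 * x^n))
        + z^3 * ((dd n : ℂ) * ((z^n)^3 * x^n)) + z^4 * ((dd n : ℂ) * ((z^n)^4 * x^n))) =
        (dd n : ℂ) * x^n * (1 + z^(n+1) + (z^(n+1))^2 + (z^(n+1))^3 + (z^(n+1))^4) := by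
        rw [← e2 2, ← e2 3, ← e2 4]; ring
      rw [e3]
      split_ifs with h
      · have : z^(n+1) = 1 := (hz.pow_eq_one_iff_dvd _).mpr (by omega)
        rw [this]; ring
      · rw [hg (n+1) (by omega)]; ring
    · have z8 : z^8 = z^3 := by linear_combination z^3 * hz5
      linear_combination (-(1/5:ℂ)) * (D0 (x^5) * g1 + x * D1 (x^5) * g2 + x^3 * D3 (x^5) * g4)
       + (-(1/5:ℂ)) * x^4 * D4 (x^5) * ((1 + (z^5+1) + (z^10+z^5+1) + (z^15+z^10+z^5+1)) * hz5)
  have hinj : Function.Injective (fun m : ℕ => 5*m+4) := fun a b h => by simpa using h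
  have h5 := (hinj.hasSum_iff (f := fun n => if n % 5 = 4 then (dd n : ℂ) * x^n else 0) (fun n hn => by
    have : ¬ n % 5 = 4 := fun h => hn ⟨n/5, by simp; omega⟩
    simp [this])).mpr hs3
  refine hs_of h5 (fun m => ?_) rfl
  simp only [Function.comp]
  rw [if_pos (by omega)]

noncomputable def Af (q : ℂ) : ℂ := ∑' m : ℕ, ((- dd (5*m+4) : ℤ) : ℂ) * q^m

noncomputable abbrev rho : ℝ := (1/16)^5

lemma main_an {q : ℂ} (hq0 : q ≠ 0) (hq : ‖q‖ ≤ rho) :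
    HasSum (fun m : ℕ => ((- dd (5*m+4) : ℤ) : ℂ) * q^m) (Af q) ∧ q * Af q * t q 3 = - 2 * L q 3 (-4) := by
  obtain ⟨x, hxq⟩ := IsAlgClosed.exists_pow_nat_eq q (by norm_num : 0 < 5)
  have hx0 : x ≠ 0 := fun h => hq0 (by rw [← hxq, h]; norm_num)
  have hx : ‖x‖ ≤ 1/16 := by
    rw [← hxq, norm_pow] at hq
    exact le_of_pow_le_pow_left₀ (by norm_num) (by norm_num) hq
  have hq16 : ‖q‖ ≤ 1/16 := le_trans hq (by norm_num)
  have h := (extract hx0 hx).mul_left (-(x^4)⁻¹)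
  have hx4 : x^4 ≠ 0 := pow_ne_zero _ hx0
  have h2 : HasSum (fun m : ℕ => ((- dd (5*m+4) : ℤ) : ℂ) * q^m) (- D4 q) := by
    refine hs_of h (fun m => ?_) ?_
    · rw [← hxq, ← pow_mul, pow_add]
      push_cast; field_simp
    · rw [hxq]; field_simp
  have h3 : Af q = - D4 q := h2.tsum_eq
  refine ⟨by rw [h3]; exact h2, ?_⟩
  rw [h3]
  have ht : t q 3 ≠ 0 := t_ne hq0 hq16 3 (by norm_num) (by norm_num)
  unfold D4
  field_simp

lemma Af_bd {q : ℂ} (hq : ‖q‖ ≤ rho) : ‖Af q‖ ≤ 32 := by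
  have hs : HasSum (fun n : ℕ => (16:ℝ) * (1/2:ℝ)^n) (16*2) := by
    have := (hasSum_geometric_of_lt_one (r := (1/2:ℝ)) (by norm_num) (by norm_num)).mul_left 16
    norm_num at this ⊢; exact this
  have := tsum_of_norm_bounded (f := fun m : ℕ => ((- dd (5*m+4) : ℤ) : ℂ) * q^m) hs (fun m => by
    rw [norm_mul, norm_pow, Complex.norm_intCast]
    have h1 : |((-dd (5*m+4) : ℤ) : ℝ)| ≤ 2^(5*m+4) := by
      push_cast; rw [abs_neg]; have := dd_bd (5*m+4); rwa [one_mul] at this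
    calc |((-dd (5*m+4) : ℤ) : ℝ)| * ‖q‖^m ≤ 2^(5*m+4) * (rho)^m := mul_le_mul h1 (pow_le_pow_left₀ (norm_nonneg _) hq m) (by positivity) (by positivity)
      _ = 16 * ((2^5 * rho)^m) := by rw [pow_add, pow_mul, mul_pow]; ring
      _ ≤ 16 * (1/2)^m := by gcongr; norm_num)
  unfold Af
  linarith

end OP
end

section
open Finset Polynomial
namespace OP

noncomputable def gb : ℕ → ℕ → ℤ[X]
  | 0, 0 => 1
  | 0, _+1 => 0
  | _+1, 0 => 1
  | n+1, k+1 => gb n k + X^(10*(k+1)) * gb n (k+1)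

noncomputable def poc (n : ℕ) : ℤ[X] := ∏ i ∈ range n, (1 - X^(10*(i+1)))

lemma gb_zero (n : ℕ) : gb n 0 = 1 := by cases n <;> simp [gb]
lemma gb_gt {n k : ℕ} (h : n < k) : gb n k = 0 := by
  induction n generalizing k with
  | zero => cases k with
    | zero => omega
    | succ k => simp [gb]
  | succ n ih => cases k with
    | zero => omega
    | succ k => rw [gb, ih (by omega), ih (by omega)]; ring

lemma poc_succ (n : ℕ) : poc (n+1) = poc n * (1 - X^(10*(n+1))) := by
  unfold poc; rw [prod_range_succ]

lemma gb_prod (k l : ℕ) : gb (k+l) k * poc k * poc l = poc (k+l) := by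
  suffices H : ∀ n k l, k + l = n → gb n k * poc k * poc l = poc n from H _ k l rfl
  intro n
  induction n with
  | zero =>
    intro k l h
    obtain rfl : k = 0 := by omega
    obtain rfl : l = 0 := by omega
    simp [gb, poc]
  | succ n ih =>
    intro k l h
    cases k with
    | zero =>
      obtain rfl : l = n+1 := by omega
      simp [gb_zero, poc]
    | succ k =>
      rw [gb]
      cases l with
      | zero =>
        obtain rfl : k = n := by omega
        have := ih k 0 rfl
        rw [gb_gt (by omega : k < k+1), poc_succ]
        linear_combination (1 - X^(10*(k+1))) * this
      | succ l =>
        have h1 := ih k (l+1) (by omega)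
        have h2 := ih (k+1) l (by omega)
        have e : (X:ℤ[X])^(10*(n+1)) = X^(10*(k+1)) * X^(10*(l+1)) := by rw [← pow_add]; congr 1; omega
        rw [poc_succ n, e]
        have h3 := poc_succ k
        have h4 := poc_succ l
        linear_combination (1 - X^(10*(k+1))) * h1 + X^(10*(k+1)) * (1 - X^(10*(l+1))) * h2
          + gb n k * poc (l+1) * h3 + X^(10*(k+1)) * gb n (k+1) * poc (k+1) * h4

lemma poc_ne (n : ℕ) : poc n ≠ 0 := by
  unfold poc
  rw [prod_ne_zero_iff]
  intro i _ h
  have := congrArg (eval 0) h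
  simp at this

lemma gb_pascal {n k : ℕ} (h : k ≤ n) : gb (n+1) (k+1) = X^(10*(n-k)) * gb n k + gb n (k+1) := by
  obtain ⟨l, rfl⟩ := Nat.exists_eq_add_of_le h
  rw [show k + l - k = l by omega]
  cases l with
  | zero => rw [gb, gb_gt (by omega : k + 0 < k+1)]; simp [gb_gt (lt_add_one k)]
  | succ l =>
    have h1 := gb_prod k (l+1)
    have h2 := gb_prod (k+1) l
    have h0 := gb_prod (k+1) (l+1)
    rw [show k+1+l = k+(l+1) by ring] at h2
    rw [show k+1+(l+1) = k+(l+1)+1 by ring] at h0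
    apply mul_right_cancel₀ (mul_ne_zero (poc_ne (k+1)) (poc_ne (l+1)))
    have h3 := poc_succ k
    have h4 := poc_succ l
    have h5 := poc_succ (k+(l+1))
    have e : (X:ℤ[X])^(10*(k+(l+1)+1)) = X^(10*(k+1)) * X^(10*(l+1)) := by rw [← pow_add]; congr 1; omega
    rw [e] at h5
    linear_combination h0 + h5 - X^(10*(l+1)) * (1 - X^(10*(k+1))) * h1 - (1 - X^(10*(l+1))) * h2
      - X^(10*(l+1)) * gb (k+(l+1)) k * poc (l+1) * h3 - gb (k+(l+1)) (k+1) * poc (k+1) * h4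

def ee (r : ℤ) : ℕ := (5*r*(r-1)+3*r).toNat
lemma ee_cast (r : ℤ) : (ee r : ℤ) = 5*r*(r-1)+3*r := by
  unfold ee
  rw [Int.toNat_of_nonneg]
  rcases le_or_gt r 0 with h | h
  · nlinarith [mul_nonneg_of_nonpos_of_nonpos h h]
  · nlinarith

def sg (r : ℤ) : ℤ := (-1)^r.natAbs
lemma sg_succ (r : ℤ) : sg (r+1) = - sg r := by
  unfold sg
  rcases le_or_gt 0 r with h | h
  · rw [show (r+1).natAbs = r.natAbs + 1 by omega, pow_succ]; ring
  · rw [show r.natAbs = (r+1).natAbs + 1 by omega, pow_succ]; ring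

noncomputable def aa (r : ℤ) : ℤ[X] := C (sg r) * X^(ee r)

lemma aa1 (r : ℤ) (N j : ℕ) (h : (j:ℤ) = N - r) : X^(10*N+3) * aa r = - X^(10*j) * aa (r+1) := by
  unfold aa
  rw [sg_succ, C_neg]
  have : 10*N+3 + ee r = 10*j + ee (r+1) := by
    zify
    rw [ee_cast, ee_cast, h]; ring
  have h2 : (X:ℤ[X])^(10*N+3) * X^(ee r) = X^(10*j) * X^(ee (r+1)) := by rw [← pow_add, ← pow_add, this]
  linear_combination C (sg r) * h2

lemma aa2 (r : ℤ) (M j : ℕ) (h : (j:ℤ) = M + r + 1) : X^(10*M+7) * aa (r+1) = - X^(10*j) * aa r := by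
  unfold aa
  rw [sg_succ, C_neg]
  have : 10*M+7 + ee (r+1) = 10*j + ee r := by
    zify
    rw [ee_cast, ee_cast, h]; ring
  have h2 : (X:ℤ[X])^(10*M+7) * X^(ee (r+1)) = X^(10*j) * X^(ee r) := by rw [← pow_add, ← pow_add, this]
  linear_combination -C (sg r) * h2

noncomputable def SS (N M : ℕ) : ℤ[X] := ∑ k ∈ range (N+M+1), aa ((k:ℤ)-M) * gb (N+M) k

lemma SS_N (N M : ℕ) : SS (N+1) M = (1 - X^(10*N+3)) * SS N M := by
  have e1 : SS N M = aa (-(M:ℤ)) + ∑ k ∈ range (N+M+1), aa ((k:ℤ)-M+1) * gb (N+M) (k+1) := by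
    have : SS N M = ∑ k ∈ range (N+M+1+1), aa ((k:ℤ)-M) * gb (N+M) k := by
      rw [sum_range_succ, gb_gt (by omega : N+M < N+M+1)]; simp [SS]
    rw [this, sum_range_succ', gb_zero, add_comm]
    congr 1
    · simp
    · refine sum_congr rfl fun k _ => by rw [show ((k+1:ℕ):ℤ)-M = (k:ℤ)-M+1 by push_cast; ring]
  have e2 : SS (N+1) M = aa (-(M:ℤ)) + ∑ k ∈ range (N+M+1), aa ((k:ℤ)-M+1) * gb (N+M+1) (k+1) := by
    unfold SS
    rw [show N+1+M = N+M+1 by ring, sum_range_succ', gb_zero, add_comm]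
    congr 1
    · simp
    · refine sum_congr rfl fun k _ => by rw [show ((k+1:ℕ):ℤ)-M = (k:ℤ)-M+1 by push_cast; ring]
  have e3 : X^(10*N+3) * SS N M = - ∑ k ∈ range (N+M+1), aa ((k:ℤ)-M+1) * (X^(10*(N+M-k)) * gb (N+M) k) := by
    unfold SS
    rw [mul_sum, ← sum_neg_distrib]
    refine sum_congr rfl fun k hk => ?_
    have hk := mem_range.mp hk
    have := aa1 ((k:ℤ)-M) N (N+M-k) (by omega)
    linear_combination gb (N+M) k * this
  have e4 : ∑ k ∈ range (N+M+1), aa ((k:ℤ)-M+1) * gb (N+M+1) (k+1) =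
      ∑ k ∈ range (N+M+1), aa ((k:ℤ)-M+1) * (X^(10*(N+M-k)) * gb (N+M) k) + ∑ k ∈ range (N+M+1), aa ((k:ℤ)-M+1) * gb (N+M) (k+1) := by
    rw [← sum_add_distrib]
    refine sum_congr rfl fun k hk => ?_
    rw [gb_pascal (by have := mem_range.mp hk; omega)]; ring
  rw [e2, e4, sub_mul, one_mul, e3]
  rw [e1]
  ring

lemma SS_M (N M : ℕ) : SS N (M+1) = (1 - X^(10*M+7)) * SS N M := by
  have e1 : SS N M = aa (-(M:ℤ)) + ∑ k ∈ range (N+M+1), aa ((k:ℤ)-M+1) * gb (N+M) (k+1) := by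
    have : SS N M = ∑ k ∈ range (N+M+1+1), aa ((k:ℤ)-M) * gb (N+M) k := by
      rw [sum_range_succ, gb_gt (by omega : N+M < N+M+1)]; simp [SS]
    rw [this, sum_range_succ', gb_zero, add_comm]
    congr 1
    · simp
    · refine sum_congr rfl fun k _ => by rw [show ((k+1:ℕ):ℤ)-M = (k:ℤ)-M+1 by push_cast; ring]
  have e2 : SS N (M+1) = aa (-(M:ℤ)-1) + ∑ k ∈ range (N+M+1), aa ((k:ℤ)-M) * gb (N+M+1) (k+1) := by
    unfold SS
    rw [show N+(M+1) = N+M+1 by ring, sum_range_succ', gb_zero, add_comm]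
    congr 1
    · rw [mul_one]; congr 1; push_cast; ring
    · refine sum_congr rfl fun k _ => by rw [show ((k+1:ℕ):ℤ)-(M+1:ℕ) = (k:ℤ)-M by push_cast; ring]
  have e3 : X^(10*M+7) * SS N M = - (aa (-(M:ℤ)-1) + ∑ k ∈ range (N+M+1), aa ((k:ℤ)-M) * (X^(10*(k+1)) * gb (N+M) (k+1))) := by
    have e4 : X^(10*M+7) * aa (-(M:ℤ)) = - aa (-(M:ℤ)-1) := by
      have := aa2 (-(M:ℤ)-1) M 0 (by push_cast; ring)
      rw [show -(M:ℤ)-1+1 = -(M:ℤ) by ring] at this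
      rw [this]; simp
    have e5 : X^(10*M+7) * ∑ k ∈ range (N+M+1), aa ((k:ℤ)-M+1) * gb (N+M) (k+1) =
        - ∑ k ∈ range (N+M+1), aa ((k:ℤ)-M) * (X^(10*(k+1)) * gb (N+M) (k+1)) := by
      rw [mul_sum, ← sum_neg_distrib]
      refine sum_congr rfl fun k hk => ?_
      have := aa2 ((k:ℤ)-M) M (k+1) (by push_cast; ring)
      linear_combination gb (N+M) (k+1) * this
    rw [e1, mul_add, e4, e5, neg_add]
  have e6 : ∑ k ∈ range (N+M+1), aa ((k:ℤ)-M) * gb (N+M+1) (k+1) =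
      SS N M + ∑ k ∈ range (N+M+1), aa ((k:ℤ)-M) * (X^(10*(k+1)) * gb (N+M) (k+1)) := by
    unfold SS
    rw [← sum_add_distrib]
    refine sum_congr rfl fun k hk => ?_
    rw [gb]; ring
  rw [e2, e6, sub_mul, one_mul, e3]
  ring

lemma SS_prod (N M : ℕ) : SS N M = (∏ i ∈ range N, (1 - X^(10*i+3))) * ∏ i ∈ range M, (1 - X^(10*i+7)) := by
  induction M with
  | zero =>
    induction N with
    | zero => simp [SS, gb, aa, sg, ee]
    | succ N ih => rw [SS_N, ih, prod_range_succ]; ring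
  | succ M ih => rw [SS_M, ih, prod_range_succ]; ring

noncomputable def QQ (N : ℕ) : ℤ[X] := (∏ i ∈ range N, (1 - X^(10*i+3))) * (∏ i ∈ range N, (1 - X^(10*i+7))) * ∏ i ∈ range N, (1 - X^(10*(i+1)))

lemma cop (n m : ℕ) : IsCoprime ((X:ℤ[X])^m) (poc n) := by
  apply IsCoprime.pow_left
  unfold poc
  refine IsCoprime.prod_right fun i _ => ⟨X^(10*i+9), 1, ?_⟩
  rw [show 10*(i+1) = 10*i+9+1 by ring, pow_succ]; ring

lemma poc_cong {m j : ℕ} (h : m ≤ j) : (X:ℤ[X])^(10*(m+1)) ∣ poc j - poc m := by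
  induction j, h using Nat.le_induction with
  | base => simp
  | succ j hj ih =>
    rw [poc_succ]
    have : (X:ℤ[X])^(10*(m+1)) ∣ X^(10*(j+1)) := pow_dvd_pow _ (by omega)
    have h2 := dvd_sub ih (this.mul_left (poc j))
    convert h2 using 1; ring

lemma u_cong {N k m : ℕ} (h1 : m ≤ k) (h2 : m + k ≤ 2*N) (h3 : m ≤ N) : (X:ℤ[X])^(10*(m+1)) ∣ poc N * gb (N+N) k - 1 := by
  obtain ⟨l, hl⟩ : ∃ l, k + l = N + N := ⟨N+N-k, by omega⟩
  have hp := gb_prod k l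
  rw [hl] at hp
  apply ((cop k _).mul_right (cop l _)).dvd_of_dvd_mul_right
  have a := poc_cong h1
  have b := poc_cong (by omega : m ≤ l)
  have c := poc_cong h3
  have d := poc_cong (by omega : m ≤ N+N)
  have e : (poc N * gb (N+N) k - 1) * (poc k * poc l) = (poc N - poc m) * poc (N+N) + poc m * (poc (N+N) - poc m)
     - (poc k - poc m) * poc l - poc m * (poc l - poc m) := by linear_combination poc N * hp
  rw [e]
  exact ((((c.mul_right _).add (d.mul_left _)).sub (a.mul_right _)).sub (b.mul_left _))

lemma QQ_cong (N : ℕ) : (X:ℤ[X])^N ∣ QQ N - ∑ k ∈ range (N+N+1), aa ((k:ℤ)-N) := by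
  have e : QQ N = ∑ k ∈ range (N+N+1), poc N * (aa ((k:ℤ)-N) * gb (N+N) k) := by
    rw [← mul_sum]
    change _ = poc N * SS N N
    rw [SS_prod]; unfold QQ poc; ring
  rw [e, ← sum_sub_distrib]
  refine dvd_sum fun k hk => ?_
  have hk := mem_range.mp hk
  rw [show poc N * (aa ((k:ℤ)-N) * gb (N+N) k) - aa ((k:ℤ)-N) = C (sg ((k:ℤ)-N)) * (X^(ee ((k:ℤ)-N)) * (poc N * gb (N+N) k - 1)) by unfold aa; ring]
  apply Dvd.dvd.mul_left
  have h := u_cong (N := N) (k := k) (m := min k (2*N-k)) (by omega) (by omega) (by omega)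
  have h2 := mul_dvd_mul (dvd_refl ((X:ℤ[X])^(ee ((k:ℤ)-N)))) h
  rw [← pow_add] at h2
  refine dvd_trans (pow_dvd_pow _ ?_) h2
  zify
  rw [ee_cast]
  have hc : ((2*N-k:ℕ):ℤ) = 2*N-k := by omega
  rw [hc]
  rcases le_total k N with h | h
  · rw [min_eq_left (by omega)]
    obtain ⟨s, rfl⟩ := Nat.exists_eq_add_of_le h
    push_cast
    nlinarith [sq_nonneg ((s:ℤ)-1), Int.natCast_nonneg k, Int.natCast_nonneg s]
  · rw [min_eq_right (by omega)]
    obtain ⟨s, rfl⟩ := Nat.exists_eq_add_of_le h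
    push_cast
    have : (s:ℤ) ≤ N := by omega
    nlinarith [sq_nonneg ((s:ℤ)-1), Int.natCast_nonneg s]
end OP
end

section
open Finset Filter Topology Polynomial
namespace OP

lemma vanish {a : ℕ → ℤ} {F : ℂ → ℂ} (N : ℕ) (C : ℝ)
    (ha : ∀ q : ℂ, q ≠ 0 → ‖q‖ ≤ rho → HasSum (fun n => (a n : ℂ) * q^n) (F q))
    (hF : ∀ q : ℂ, q ≠ 0 → ‖q‖ ≤ rho → ‖F q‖ ≤ C * ‖q‖^N) : ∀ n < N, a n = 0 := by
  have hr0 : (0:ℝ) < rho := by positivity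
  have hr1 : rho ≤ 1 := by norm_num
  have hnr : ‖((rho:ℝ):ℂ)‖ = rho := by rw [Complex.norm_real, Real.norm_of_nonneg hr0.le]
  intro n
  induction n using Nat.strong_induction_on with
  | _ n ih =>
  intro hn
  have hC : 0 ≤ C := by
    have := hF (rho:ℝ) (by exact_mod_cast hr0.ne') (by rw [hnr])
    rw [hnr] at this
    have h2 : 0 ≤ C * rho^N := le_trans (norm_nonneg _) this
    exact nonneg_of_mul_nonneg_left h2 (by positivity)
  have hsum : Summable (fun m => |(a (m+(n+1)) : ℝ)| * rho^m) := by
    have h1 := (ha (rho:ℝ) (by exact_mod_cast hr0.ne') (by rw [hnr])).summable.norm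
    have h2 := ((summable_nat_add_iff (n+1)).mpr h1).mul_right ((rho^(n+1))⁻¹)
    refine h2.congr fun m => ?_
    rw [norm_mul, norm_pow, hnr, Complex.norm_intCast, pow_add]
    have : rho^(n+1) ≠ 0 := by positivity
    rw [← mul_assoc, mul_assoc, mul_inv_cancel₀ this, mul_one]
  obtain ⟨B, hB⟩ := hsum
  have hB0 : 0 ≤ B := hB.nonneg fun m => by positivity
  have key : ∀ q : ℂ, q ≠ 0 → ‖q‖ ≤ rho → |(a n : ℝ)| ≤ ‖q‖ * (C + B) := by
    intro q hq hqr
    have hpos : 0 < ‖q‖ := by positivity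
    have h1 := ha q hq hqr
    have h2 := (hasSum_nat_add_iff' (n+1)).mpr h1
    rw [sum_range_succ, Finset.sum_eq_zero (fun k hk => by rw [ih k (mem_range.mp hk) (by have := mem_range.mp hk; omega)]; simp), zero_add] at h2
    have h3 : ‖F q - (a n:ℂ) * q^n‖ ≤ B * ‖q‖^(n+1) := by
      rw [← h2.tsum_eq]
      refine tsum_of_norm_bounded (hB.mul_right (‖q‖^(n+1))) fun m => ?_
      rw [norm_mul, norm_pow, Complex.norm_intCast, pow_add, ← mul_assoc]
      gcongr
    have h4 : ‖(a n:ℂ) * q^n‖ ≤ C * ‖q‖^N + B * ‖q‖^(n+1) := by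
      have := norm_sub_le (F q) (F q - (a n:ℂ) * q^n)
      rw [sub_sub_cancel] at this
      linarith [hF q hq hqr]
    rw [norm_mul, norm_pow, Complex.norm_intCast] at h4
    have h5 : ‖q‖^N ≤ ‖q‖^(n+1) := pow_le_pow_of_le_one (norm_nonneg _) (by linarith) (by omega)
    have h6 : |(a n:ℝ)| * ‖q‖^n ≤ (‖q‖ * (C + B)) * ‖q‖^n := by
      calc _ ≤ _ := h4
        _ ≤ C * ‖q‖^(n+1) + B * ‖q‖^(n+1) := by gcongr
        _ = _ := by ring
    exact le_of_mul_le_mul_right h6 (by positivity)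
  set s : ℝ := min rho (1/(2*(C+B+1))) with hs
  have hs0 : 0 < s := by apply lt_min hr0; positivity
  have hns : ‖((s:ℝ):ℂ)‖ = s := by rw [Complex.norm_real, Real.norm_of_nonneg hs0.le]
  have h := key (s:ℝ) (by exact_mod_cast hs0.ne') (by rw [hns]; exact min_le_left _ _)
  rw [hns] at h
  have h7 : s * (C+B) < 1 := by
    calc s * (C+B) ≤ 1/(2*(C+B+1)) * (C+B) := by gcongr; exact min_le_right _ _
      _ < 1 := by rw [div_mul_eq_mul_div, div_lt_one (by positivity)]; linarith
  have h8 : |(a n:ℝ)| < 1 := by linarith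
  have h9 : |a n| < 1 := by exact_mod_cast h8
  exact Int.abs_lt_one_iff.mp h9

def Rep (f : PowerSeries ℤ) (F : ℂ → ℂ) : Prop :=
  ∀ q : ℂ, q ≠ 0 → ‖q‖ ≤ rho → HasSum (fun n : ℕ => ((PowerSeries.coeff n f : ℤ) : ℂ) * q^n) (F q)

lemma Rep.add {f g : PowerSeries ℤ} {F G : ℂ → ℂ} (hf : Rep f F) (hg : Rep g G) : Rep (f+g) (fun q => F q + G q) :=
  fun q h0 h1 => hs_of ((hf q h0 h1).add (hg q h0 h1)) (fun n => by rw [map_add]; push_cast; ring) rfl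

lemma Rep.poly {f : PowerSeries ℤ} {F : ℂ → ℂ} (hf : Rep f F) (p : ℤ[X]) : Rep ((p : PowerSeries ℤ) * f) (fun q => aeval q p * F q) := by
  induction p using Polynomial.induction_on' with
  | add p r hp hr =>
    have := hp.add hr
    rw [Polynomial.coe_add, add_mul]
    simp only [map_add, add_mul]
    exact this
  | monomial k c =>
    intro q h0 h1
    refine hs_of ((shift_hasSum (a := fun n => PowerSeries.coeff n f) k (hf q h0 h1)).mul_left (c:ℂ)) (fun n => ?_) ?_
    · rw [← C_mul_X_pow_eq_monomial, Polynomial.coe_mul, Polynomial.coe_pow, Polynomial.coe_X, Polynomial.coe_C, mul_assoc,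
        PowerSeries.coeff_C_mul, PowerSeries.coeff_X_pow_mul']
      push_cast; ring
    · simp only [aeval_monomial]
      simp
      ring

lemma Rep_one : Rep 1 (fun _ => 1) := fun q _ _ => by
  refine hs_of (hasSum_ite_eq (0:ℕ) (1:ℂ)) (fun n => ?_) rfl
  rw [PowerSeries.coeff_one]
  split_ifs with h <;> simp [h]

lemma aeval_bd (p : ℤ[X]) : ∃ C : ℝ, ∀ q : ℂ, ‖q‖ ≤ 1 → ‖aeval q p‖ ≤ C := by
  obtain ⟨C, hC⟩ := (isCompact_closedBall (0:ℂ) 1).exists_bound_of_continuousOn (f := fun q => aeval q p) (by fun_prop)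
  exact ⟨C, fun q hq => hC q (by simpa using hq)⟩

lemma sg_cast (r : ℤ) : ((sg r : ℤ) : ℂ) = (-1)^r := by
  unfold sg
  push_cast
  rcases Int.natAbs_eq r with h | h
  · conv_rhs => rw [h]
    rw [zpow_natCast]
  · conv_rhs => rw [h]
    rw [zpow_neg, zpow_natCast, ← inv_pow]; norm_num

lemma aeval_aa (q : ℂ) (r : ℤ) : aeval q (aa r) = ex q 3 r := by
  unfold aa ex
  rw [map_mul, aeval_C, map_pow, aeval_X, ← ee_cast, zpow_natCast, ← sg_cast]; simp

lemma ee_ge (r : ℤ) : 2 * r.natAbs ≤ ee r := by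
  zify
  rw [ee_cast]
  rcases lt_trichotomy r 0 with h | h | h
  · rw [abs_of_neg h]; nlinarith
  · subst h; norm_num
  · rw [abs_of_pos h]; nlinarith

lemma t_tail (N : ℕ) : ∃ C : ℝ, ∀ q : ℂ, q ≠ 0 → ‖q‖ ≤ rho → ‖t q 3 - aeval q (QQ N)‖ ≤ C * ‖q‖^N := by
  obtain ⟨p, hp⟩ := QQ_cong N
  obtain ⟨C1, hC1⟩ := aeval_bd p
  have hsN := (summable_natAbs (ρ := (1/2:ℝ)) (by norm_num) (by norm_num)).hasSum
  obtain ⟨C2, hC2⟩ : ∃ C2, C2 = ∑' i : ℤ, (1/2:ℝ)^i.natAbs := ⟨_, rfl⟩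
  rw [← hC2] at hsN
  refine ⟨C2 + C1, fun q hq0 hq => ?_⟩
  have hr : rho ≤ 1/2 := by norm_num
  have hq2 : ‖q‖ ≤ 1/2 := le_trans hq hr
  have e1 : aeval q (QQ N) = ∑ k ∈ range (N+N+1), ex q 3 ((k:ℤ)-N) + q^N * aeval q p := by
    have := congrArg (aeval q) hp
    rw [map_sub, map_mul, map_pow, aeval_X, map_sum] at this
    simp only [aeval_aa] at this
    linear_combination this
  set s : Finset ℤ := (range (N+N+1)).image (fun k : ℕ => (k:ℤ)-N) with hs
  have e2 : ∑ k ∈ range (N+N+1), ex q 3 ((k:ℤ)-N) = ∑ r ∈ s, ex q 3 r := by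
    rw [hs, sum_image]
    intro a _ b _ h
    simpa using h
  have h1 : HasSum (fun r => if r ∈ s then ex q 3 r else 0) (∑ r ∈ s, ex q 3 r) := by
    have : HasSum (fun r => if r ∈ s then ex q 3 r else 0) (∑ r ∈ s, if r ∈ s then ex q 3 r else 0) :=
      hasSum_sum_of_ne_finset_zero (fun b hb => by simp [hb])
    rwa [Finset.sum_congr rfl (fun r hr => if_pos hr)] at this
  have h2 := (hasSum_t hq0 (by linarith : ‖q‖ < 1) 3).sub h1
  have h3 : ‖t q 3 - ∑ r ∈ s, ex q 3 r‖ ≤ C2 * ‖q‖^N := by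
    rw [← h2.tsum_eq]
    refine tsum_of_norm_bounded (hsN.mul_right _) fun r => ?_
    split_ifs with h
    · rw [sub_self, norm_zero]; positivity
    · rw [sub_zero, ← aeval_aa]
      have hN : N < r.natAbs := by
        by_contra hcon
        apply h
        rw [hs, mem_image]
        exact ⟨(r+N).toNat, by simp; omega, by omega⟩
      have h4 := ee_ge r
      unfold aa
      rw [map_mul, aeval_C, map_pow, aeval_X, norm_mul, norm_pow]
      have : ‖(algebraMap ℤ ℂ) (sg r)‖ = 1 := by simp [sg]
      rw [this, one_mul]
      calc ‖q‖^(ee r) ≤ ‖q‖^(r.natAbs + N) := pow_le_pow_of_le_one (norm_nonneg _) (by linarith) (by omega)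
        _ = ‖q‖^r.natAbs * ‖q‖^N := pow_add _ _ _
        _ ≤ (1/2)^r.natAbs * ‖q‖^N := by gcongr
  rw [e1, e2]
  have h5 := norm_sub_le (t q 3 - ∑ r ∈ s, ex q 3 r) (q^N * aeval q p)
  rw [norm_mul, norm_pow] at h5
  have h6 := hC1 q (by linarith)
  have h7 : ‖q‖^N * ‖aeval q p‖ ≤ ‖q‖^N * C1 := by gcongr
  rw [← sub_sub]
  linarith

noncomputable def uu (q : ℂ) (A B D n : ℕ) : ℂ := (-1)^n * q^(5*n^2+A*n+B) / (1 - q^(10*n+D))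
noncomputable def TT (A B D M : ℕ) : ℤ[X] := ∑ s ∈ range (2*M), (-1)^s * X^(5*s^2+A*s+B) * ∑ k ∈ range M, X^((10*s+D)*k)

lemma inv_bd {q : ℂ} (hq : ‖q‖ ≤ 1/2) {d : ℕ} (hd : 1 ≤ d) : 1 - q^d ≠ 0 ∧ ‖(1 - q^d)⁻¹‖ ≤ 2 := by
  have h1 : ‖q^d‖ ≤ 1/2 := by
    rw [norm_pow]
    calc ‖q‖^d ≤ ‖q‖^1 := pow_le_pow_of_le_one (norm_nonneg _) (by linarith) hd
      _ ≤ 1/2 := by rw [pow_one]; exact hq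
  have h2 : 1/2 ≤ ‖1 - q^d‖ := by
    have := norm_sub_norm_le (1:ℂ) (q^d)
    rw [norm_one] at this
    linarith
  refine ⟨fun h => ?_, ?_⟩
  · rw [h, norm_zero] at h2; linarith
  · rw [norm_inv, inv_le_comm₀ (by linarith) (by norm_num)]; linarith

lemma uu_bd {q : ℂ} (hq : ‖q‖ ≤ 1/2) {A B D : ℕ} (hA : 2 ≤ A) (hD : 1 ≤ D) (n : ℕ) : ‖uu q A B D n‖ ≤ 2 * (1/2)^n := by
  unfold uu
  rw [div_eq_mul_inv, norm_mul, norm_mul, norm_pow, norm_pow, norm_neg, norm_one, one_pow, one_mul, mul_comm]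
  have h1 := (inv_bd hq (d := 10*n+D) (by omega)).2
  have h2 : ‖q‖^(5*n^2+A*n+B) ≤ (1/2)^n := calc
    ‖q‖^(5*n^2+A*n+B) ≤ ‖q‖^n := pow_le_pow_of_le_one (norm_nonneg _) (by linarith) (by nlinarith)
    _ ≤ (1/2)^n := by gcongr
  gcongr

lemma uu_summ {q : ℂ} (hq : ‖q‖ ≤ 1/2) {A B D : ℕ} (hA : 2 ≤ A) (hD : 1 ≤ D) : Summable (uu q A B D) :=
  Summable.of_norm_bounded ((summable_geometric_of_lt_one (by norm_num) (by norm_num)).mul_left 2) (uu_bd hq hA hD)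

lemma uu_tail {A B D : ℕ} (hA : 2 ≤ A) (hD : 1 ≤ D) (M : ℕ) {q : ℂ} (hq : ‖q‖ ≤ 1/2) :
    ‖∑' n, uu q A B D n - aeval q (TT A B D M)‖ ≤ 4 * ‖q‖^M := by
  have e1 : aeval q (TT A B D M) = ∑ s ∈ range (2*M), uu q A B D s * (1 - q^((10*s+D)*M)) := by
    unfold TT uu
    rw [map_sum]
    refine sum_congr rfl fun s _ => ?_
    simp only [map_mul, map_pow, map_neg, map_one, aeval_X, map_sum]
    have h := (inv_bd hq (d := 10*s+D) (by omega)).1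
    simp_rw [pow_mul q (10*s+D)]
    rw [geom_sum_eq (fun h' => h (by rw [h']; ring))]
    have h' : q^(10*s+D) - 1 ≠ 0 := fun h'' => h (by linear_combination -h'')
    field_simp
    ring
  let g : ℕ → ℂ := fun s => if s ∈ range (2*M) then uu q A B D s * (1 - q^((10*s+D)*M)) else 0
  have h1 : HasSum g (aeval q (TT A B D M)) := by
    have : HasSum g (∑ s ∈ range (2*M), g s) := hasSum_sum_of_ne_finset_zero (fun b hb => if_neg hb)
    rwa [Finset.sum_congr rfl (fun r hr => if_pos hr), ← e1] at this
  have h2 := (uu_summ (B := B) hq hA hD).hasSum.sub h1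
  rw [← h2.tsum_eq]
  have hv : HasSum (fun n : ℕ => 2 * (1/2:ℝ)^n * ‖q‖^M) (4 * ‖q‖^M) := by
    have := ((hasSum_geometric_of_lt_one (r := (1/2:ℝ)) (by norm_num) (by norm_num)).mul_left 2).mul_right (‖q‖^M)
    rw [show 2 * (1 - 1/2:ℝ)⁻¹ = 4 by norm_num] at this
    exact this
  refine tsum_of_norm_bounded hv fun n => ?_
  by_cases h : n ∈ range (2*M)
  · simp only [g]
    rw [if_pos h, show uu q A B D n - uu q A B D n * (1 - q^((10*n+D)*M)) = uu q A B D n * q^((10*n+D)*M) by ring, norm_mul, norm_pow]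
    have h3 := uu_bd (B := B) hq hA hD n
    have h4 : ‖q‖^((10*n+D)*M) ≤ ‖q‖^M := pow_le_pow_of_le_one (norm_nonneg _) (by linarith) (by nlinarith [Nat.zero_le (n*M)])
    gcongr
  · simp only [g]
    rw [if_neg h, sub_zero]
    have hn : 2*M ≤ n := by simpa using h
    unfold uu
    rw [div_eq_mul_inv, norm_mul, norm_mul, norm_pow, norm_pow, norm_neg, norm_one, one_pow, one_mul, mul_comm]
    have h1 := (inv_bd hq (d := 10*n+D) (by omega)).2
    have h2 : ‖q‖^(5*n^2+A*n+B) ≤ (1/2)^n * ‖q‖^M := calc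
      ‖q‖^(5*n^2+A*n+B) ≤ ‖q‖^(n+M) := pow_le_pow_of_le_one (norm_nonneg _) (by linarith) (by nlinarith)
      _ = ‖q‖^n * ‖q‖^M := pow_add _ _ _
      _ ≤ (1/2)^n * ‖q‖^M := by gcongr
    rw [mul_assoc]
    gcongr

lemma L_split {q : ℂ} (hq0 : q ≠ 0) (hq : ‖q‖ ≤ 1/2) : L q 3 (-4) = - (∑' n, uu q 12 4 4 n + ∑' n, uu q 8 3 6 n) := by
  have hL := hasSum_L hq0 (by linarith : ‖q‖ < 1) 3 (-4)
  let f : ℤ → ℂ := fun r => ex q 3 r / (1 - q^(-4+10*r))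
  have hf : HasSum (fun r => f (-r)) (L q 3 (-4)) := (Equiv.neg ℤ).hasSum_iff.mpr hL
  have hA : ∀ n : ℕ, f (-(n:ℤ)) = - uu q 12 4 4 n := fun n => by
    simp only [f, uu, ex]
    have hne := (inv_bd hq (d := 10*n+4) (by omega)).1
    have hne2 := one_sub_ne hq0 (by linarith : ‖q‖ < 1) (m := -4+10*(-(n:ℤ))) (by omega)
    have e1 : q^(5*n^2+12*n+4) = q^(5*(-(n:ℤ))*(-(n:ℤ)-1)+3*(-(n:ℤ))) * q^(10*n+4) := by
      rw [← zpow_natCast q (10*n+4), ← zpow_add₀ hq0, ← zpow_natCast q]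
      congr 1; push_cast; ring
    have e2 : q^(-4+10*(-(n:ℤ))) = (q^(10*n+4))⁻¹ := by
      rw [← zpow_natCast q (10*n+4), ← zpow_neg]; congr 1; push_cast; ring
    have e3 : (-1:ℂ)^(-(n:ℤ)) = (-1)^n := by
      rw [zpow_neg, ← inv_zpow, zpow_natCast]; norm_num
    rw [e2] at hne2
    rw [e1, e2, e3, ← neg_div, div_eq_div_iff hne2 hne]
    have : q^(10*n+4) ≠ 0 := pow_ne_zero _ hq0
    field_simp
    ring
  have hB : ∀ n : ℕ, f (- -((n:ℤ)+1)) = - uu q 8 3 6 n := fun n => by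
    simp only [f, uu, ex, neg_neg]
    have e1 : q^(5*((n:ℤ)+1)*((n:ℤ)+1-1)+3*((n:ℤ)+1)) = q^(5*n^2+8*n+3) := by
      rw [← zpow_natCast q]; congr 1; push_cast; ring
    have e2 : q^(-4+10*((n:ℤ)+1)) = q^(10*n+6) := by
      rw [← zpow_natCast q]; congr 1; push_cast; ring
    rw [e1, e2, show ((n:ℤ)+1) = ((n+1:ℕ):ℤ) by push_cast; ring, zpow_natCast]; ring
  have h := HasSum.of_nat_of_neg_add_one (f := fun r => f (-r)) (m := -∑' n, uu q 12 4 4 n) (m' := -∑' n, uu q 8 3 6 n)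
    (by simp_rw [hA]; exact (uu_summ hq (by norm_num) (by norm_num)).hasSum.neg)
    (by simp_rw [hB]; exact (uu_summ hq (by norm_num) (by norm_num)).hasSum.neg)
  rw [hf.unique h]; ring

noncomputable def AA : PowerSeries ℤ := PowerSeries.mk fun m => - dd (5*m+4)

lemma AA_dvd (N : ℕ) : (PowerSeries.X : PowerSeries ℤ)^N ∣
    PowerSeries.X * AA * (QQ N : PowerSeries ℤ) - 2 * ((TT 12 4 4 N + TT 8 3 6 N : ℤ[X]) : PowerSeries ℤ) := by
  have hA : Rep AA Af := fun q h0 h1 => hs_of (main_an h0 h1).1 (fun n => by simp [AA]) rfl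
  have h1 := (hA.poly (X * QQ N)).add (Rep_one.poly (-2 * (TT 12 4 4 N + TT 8 3 6 N)))
  have e : ((X * QQ N : ℤ[X]) : PowerSeries ℤ) * AA + ((-2 * (TT 12 4 4 N + TT 8 3 6 N) : ℤ[X]) : PowerSeries ℤ) * 1 =
      PowerSeries.X * AA * (QQ N : PowerSeries ℤ) - 2 * ((TT 12 4 4 N + TT 8 3 6 N : ℤ[X]) : PowerSeries ℤ) := by
    have h2 : ((-2 : ℤ[X]) : PowerSeries ℤ) = -2 := by
      rw [show (-2:ℤ[X]) = Polynomial.C (-2) by simp, Polynomial.coe_C]; simp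
    simp only [Polynomial.coe_mul, Polynomial.coe_X, h2]
    ring
  rw [e] at h1
  obtain ⟨C, hC⟩ := t_tail N
  rw [PowerSeries.X_pow_dvd_iff]
  refine vanish N (32 * C + 16) h1 fun q h0 hq => ?_
  have hq2 : ‖q‖ ≤ 1/2 := le_trans hq (by norm_num)
  have hm := (main_an h0 hq).2
  rw [L_split h0 hq2] at hm
  have b1 := hC q h0 hq
  have b2 := uu_tail (A := 12) (B := 4) (D := 4) (by norm_num) (by norm_num) N hq2
  have b3 := uu_tail (A := 8) (B := 3) (D := 6) (by norm_num) (by norm_num) N hq2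
  have b4 := Af_bd hq
  have e2 : aeval q (X * QQ N) * Af q + aeval q (-2 * (TT 12 4 4 N + TT 8 3 6 N)) * 1 =
     - (q * Af q * (t q 3 - aeval q (QQ N))) + 2 * (∑' n, uu q 12 4 4 n - aeval q (TT 12 4 4 N)) + 2 * (∑' n, uu q 8 3 6 n - aeval q (TT 8 3 6 N)) := by
    simp only [map_mul, aeval_X, map_add, map_neg, map_ofNat]
    linear_combination hm
  rw [e2]
  have n1 : ‖-(q * Af q * (t q 3 - aeval q (QQ N)))‖ ≤ 32 * (C * ‖q‖^N) := by
    rw [norm_neg, norm_mul, norm_mul]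
    have : ‖q‖ * ‖Af q‖ ≤ 1 * 32 := mul_le_mul (by linarith) b4 (norm_nonneg _) (by norm_num)
    exact mul_le_mul (by linarith) b1 (norm_nonneg _) (by norm_num)
  have n2 := norm_add_le (-(q * Af q * (t q 3 - aeval q (QQ N))) + 2 * (∑' n, uu q 12 4 4 n - aeval q (TT 12 4 4 N))) (2 * (∑' n, uu q 8 3 6 n - aeval q (TT 8 3 6 N)))
  have n3 := norm_add_le (-(q * Af q * (t q 3 - aeval q (QQ N)))) (2 * (∑' n, uu q 12 4 4 n - aeval q (TT 12 4 4 N)))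
  rw [norm_mul] at n2 n3
  rw [Complex.norm_ofNat] at n2 n3
  linarith

end OP
end

section
open Finset Polynomial
namespace OP

def NN (f : PowerSeries ℤ) : Prop := ∀ n, 0 ≤ PowerSeries.coeff n f

lemma NN.add {f g : PowerSeries ℤ} (hf : NN f) (hg : NN g) : NN (f+g) := fun n => by
  rw [map_add]; exact add_nonneg (hf n) (hg n)

lemma NN.mul {f g : PowerSeries ℤ} (hf : NN f) (hg : NN g) : NN (f*g) := fun n => by
  rw [PowerSeries.coeff_mul]; exact sum_nonneg fun i _ => mul_nonneg (hf _) (hg _)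

lemma NN_X (k : ℕ) : NN (PowerSeries.X^k) := fun n => by
  rw [PowerSeries.coeff_X_pow]; split_ifs <;> norm_num

lemma NN_one : NN 1 := fun n => by
  rw [PowerSeries.coeff_one]; split_ifs <;> norm_num

lemma NN_prod (f : ℕ → PowerSeries ℤ) (hf : ∀ i, NN (f i)) (N : ℕ) : NN (∏ i ∈ range N, f i) := by
  induction N with
  | zero => rw [prod_range_zero]; exact NN_one
  | succ n ih => rw [prod_range_succ]; exact ih.mul (hf n)

lemma pos_mul {f g : PowerSeries ℤ} (hf : NN f) (hg : NN g) {a b : ℕ} (ha : 0 < PowerSeries.coeff a f)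
    (hb : 0 < PowerSeries.coeff b g) : 0 < PowerSeries.coeff (a+b) (f*g) := by
  rw [PowerSeries.coeff_mul]
  exact sum_pos' (fun i _ => mul_nonneg (hf _) (hg _)) ⟨(a,b), by simp, mul_pos ha hb⟩

noncomputable def geo (k : ℕ) : PowerSeries ℤ := PowerSeries.mk fun n => if k ∣ n then 1 else 0

lemma geo_mul (k : ℕ) (hk : 0 < k) : geo k * (1 - PowerSeries.X^k) = 1 := by
  ext n
  rw [mul_sub, mul_one, map_sub, PowerSeries.coeff_mul_X_pow', PowerSeries.coeff_one]
  simp only [geo, PowerSeries.coeff_mk]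
  by_cases h : k ≤ n
  · have h1 : (k ∣ n - k) ↔ k ∣ n := ⟨fun hd => by have := Nat.dvd_add hd (dvd_refl k); rwa [Nat.sub_add_cancel h] at this,
      fun hd => Nat.dvd_sub hd (dvd_refl k)⟩
    have h2 : n ≠ 0 := by omega
    simp [h, h1, h2]
  · have h1 : k ∣ n ↔ n = 0 := ⟨fun hd => Nat.eq_zero_of_dvd_of_lt hd (by omega), fun e => by simp [e]⟩
    simp [h, h1]

lemma geo_NN (k : ℕ) : NN (geo k) := fun n => by
  simp only [geo, PowerSeries.coeff_mk]; split_ifs <;> norm_num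

lemma geo_pos (k a : ℕ) : 0 < PowerSeries.coeff (k*a) (geo k) := by
  simp [geo]

noncomputable def Rst (M : ℕ) : PowerSeries ℤ :=
  (∏ i ∈ range M, geo (10*(i+1)+3)) * (∏ i ∈ range M, geo (10*(i+1)+7)) * ∏ i ∈ range M, geo (10*(i+1+1))

lemma Rst_NN (M : ℕ) : NN (Rst M) :=
  ((NN_prod _ (fun _ => geo_NN _) M).mul (NN_prod _ (fun _ => geo_NN _) M)).mul (NN_prod _ (fun _ => geo_NN _) M)

lemma prod_geo_zero (f : ℕ → ℕ) (M : ℕ) : 0 < PowerSeries.coeff 0 (∏ i ∈ range M, geo (f i)) := by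
  induction M with
  | zero => simp
  | succ n ih =>
    rw [prod_range_succ]
    exact pos_mul (a := 0) (b := 0) (NN_prod _ (fun _ => geo_NN _) n) (geo_NN _) ih (geo_pos (f n) 0)

lemma Rst_zero (M : ℕ) : 0 < PowerSeries.coeff 0 (Rst M) :=
  pos_mul (a := 0) (b := 0) ((NN_prod _ (fun _ => geo_NN _) M).mul (NN_prod _ (fun _ => geo_NN _) M)) (NN_prod _ (fun _ => geo_NN _) M)
    (pos_mul (a := 0) (b := 0) (NN_prod _ (fun _ => geo_NN _) M) (NN_prod _ (fun _ => geo_NN _) M)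
      (prod_geo_zero (fun i => 10*(i+1)+3) M) (prod_geo_zero (fun i => 10*(i+1)+7) M)) (prod_geo_zero (fun i => 10*(i+1+1)) M)

noncomputable def Prd (M : ℕ) : PowerSeries ℤ := geo 3 * geo 7 * geo 10 * Rst M

lemma prod_geo_mul (f : ℕ → ℕ) (hf : ∀ i, 0 < f i) (N : ℕ) :
    (∏ i ∈ range N, geo (f i)) * (∏ i ∈ range N, (1 - PowerSeries.X^(f i))) = 1 := by
  rw [← prod_mul_distrib]
  exact prod_eq_one fun i _ => geo_mul _ (hf i)

lemma coe_prod (f : ℕ → ℕ) (N : ℕ) : ((∏ i ∈ range N, (1 - X^(f i)) : ℤ[X]) : PowerSeries ℤ) = ∏ i ∈ range N, (1 - PowerSeries.X^(f i)) := by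
  induction N with
  | zero => simp
  | succ n ih => rw [prod_range_succ, prod_range_succ, Polynomial.coe_mul, ih]; simp

lemma Prd_mul (M : ℕ) : Prd M * (QQ (M+1) : PowerSeries ℤ) = 1 := by
  have e : Prd M = (∏ i ∈ range (M+1), geo (10*i+3)) * (∏ i ∈ range (M+1), geo (10*i+7)) * ∏ i ∈ range (M+1), geo (10*(i+1)) := by
    rw [prod_range_succ', prod_range_succ', prod_range_succ']
    unfold Prd Rst
    norm_num
    ring
  have h1 := prod_geo_mul (fun i => 10*i+3) (fun i => by omega) (M+1)
  have h2 := prod_geo_mul (fun i => 10*i+7) (fun i => by omega) (M+1)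
  have h3 := prod_geo_mul (fun i => 10*(i+1)) (fun i => by omega) (M+1)
  have c1 := coe_prod (fun i => 10*i+3) (M+1)
  have c2 := coe_prod (fun i => 10*i+7) (M+1)
  have c3 := coe_prod (fun i => 10*(i+1)) (M+1)
  rw [e]
  unfold QQ
  rw [Polynomial.coe_mul, Polynomial.coe_mul, c1, c2, c3, mul_mul_mul_comm, mul_mul_mul_comm (∏ i ∈ range (M+1), geo (10*i+3)), h1, h2, h3]
  ring

lemma Prd_3 (M : ℕ) : (1 - PowerSeries.X^3) * Prd M = geo 7 * geo 10 * Rst M := by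
  unfold Prd; linear_combination (geo 7 * geo 10 * Rst M) * geo_mul 3 (by norm_num)
lemma Prd_7 (M : ℕ) : (1 - PowerSeries.X^7) * Prd M = geo 3 * geo 10 * Rst M := by
  unfold Prd; linear_combination (geo 3 * geo 10 * Rst M) * geo_mul 7 (by norm_num)
lemma Prd_10 (M : ℕ) : (1 - PowerSeries.X^10) * Prd M = geo 3 * geo 7 * Rst M := by
  unfold Prd; linear_combination (geo 3 * geo 7 * Rst M) * geo_mul 10 (by norm_num)

lemma GG_add (M : ℕ) {a b : ℕ} (ha : NN ((1 - PowerSeries.X^a) * Prd M)) (hb : NN ((1 - PowerSeries.X^b) * Prd M)) :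
    NN ((1 - PowerSeries.X^(a+b)) * Prd M) := by
  have : (1 - PowerSeries.X^(a+b)) * Prd M = (1 - PowerSeries.X^a) * Prd M + PowerSeries.X^a * ((1 - PowerSeries.X^b) * Prd M) := by ring
  rw [this]
  exact ha.add ((NN_X a).mul hb)

lemma GG_mul (M : ℕ) {a : ℕ} (ha : NN ((1 - PowerSeries.X^a) * Prd M)) (k : ℕ) : NN ((1 - PowerSeries.X^(a*k)) * Prd M) := by
  induction k with
  | zero => intro n; simp
  | succ k ih => rw [mul_add, mul_one]; exact GG_add M ih ha

lemma rep37 (g : ℕ) (hg : 12 ≤ g) : ∃ a b, g = 3*a+7*b := by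
  have : g % 3 = 0 ∨ g % 3 = 1 ∨ g % 3 = 2 := by omega
  rcases this with h | h | h
  · exact ⟨g/3, 0, by omega⟩
  · exact ⟨(g-7)/3, 1, by omega⟩
  · exact ⟨(g-14)/3, 2, by omega⟩

lemma GG_all (M g : ℕ) (hg : 12 ≤ g) : NN ((1 - PowerSeries.X^g) * Prd M) := by
  obtain ⟨a, b, rfl⟩ := rep37 g hg
  refine GG_add M (GG_mul M ?_ a) (GG_mul M ?_ b)
  · rw [Prd_3]; exact ((geo_NN _).mul (geo_NN _)).mul (Rst_NN M)
  · rw [Prd_7]; exact ((geo_NN _).mul (geo_NN _)).mul (Rst_NN M)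

lemma pos3 {k l M a b : ℕ} : 0 < PowerSeries.coeff (k*a+l*b) (geo k * geo l * Rst M) :=
  pos_mul (a := k*a+l*b) (b := 0) ((geo_NN _).mul (geo_NN _)) (Rst_NN M) (pos_mul (geo_NN _) (geo_NN _) (geo_pos k a) (geo_pos l b)) (Rst_zero M)

lemma NN3 (k l M : ℕ) : NN (geo k * geo l * Rst M) := ((geo_NN _).mul (geo_NN _)).mul (Rst_NN M)

lemma X_pos {f : PowerSeries ℤ} {n k : ℕ} (h : 0 < PowerSeries.coeff n f) : 0 < PowerSeries.coeff (k+n) (PowerSeries.X^k * f) := by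
  rw [PowerSeries.coeff_X_pow_mul']
  simpa using h

lemma pos13 (M a b : ℕ) : 0 < PowerSeries.coeff (3*a+7*b) ((1 - PowerSeries.X^13) * Prd M) := by
  have e : (1 - PowerSeries.X^13) * Prd M = geo 7 * geo 10 * Rst M + PowerSeries.X^3 * (geo 3 * geo 7 * Rst M) := by
    rw [← Prd_3, ← Prd_10]; ring
  rw [e, map_add]
  rcases a with _ | a
  · have h1 := pos3 (k := 7) (l := 10) (M := M) (a := b) (b := 0)
    have h2 := ((NN_X 3).mul (NN3 3 7 M)) (3*0+7*b)
    rw [show 3*0+7*b = 7*b+10*0 by ring] at *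
    exact add_pos_of_pos_of_nonneg h1 h2
  · have h1 := X_pos (k := 3) (pos3 (k := 3) (l := 7) (M := M) (a := a) (b := b))
    rw [show 3 + (3*a+7*b) = 3*(a+1)+7*b by ring] at h1
    exact add_pos_of_nonneg_of_pos (NN3 7 10 M _) h1

lemma pos17 (M a b : ℕ) : 0 < PowerSeries.coeff (3*a+7*b) ((1 - PowerSeries.X^17) * Prd M) := by
  have e : (1 - PowerSeries.X^17) * Prd M = geo 3 * geo 10 * Rst M + PowerSeries.X^7 * (geo 3 * geo 7 * Rst M) := by
    rw [← Prd_7, ← Prd_10]; ring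
  rw [e, map_add]
  rcases b with _ | b
  · have h1 := pos3 (k := 3) (l := 10) (M := M) (a := a) (b := 0)
    have h2 := ((NN_X 7).mul (NN3 3 7 M)) (3*a+7*0)
    rw [show 3*a+7*0 = 3*a+10*0 by ring] at *
    exact add_pos_of_pos_of_nonneg h1 h2
  · have h1 := X_pos (k := 7) (pos3 (k := 3) (l := 7) (M := M) (a := a) (b := b))
    rw [show 7 + (3*a+7*b) = 3*a+7*(b+1) by ring] at h1
    exact add_pos_of_nonneg_of_pos (NN3 3 10 M _) h1

noncomputable def ww (A B D M j k : ℕ) : PowerSeries ℤ :=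
  PowerSeries.X^(20*j^2+2*A*j+B+(20*j+D)*k) * ((1 - PowerSeries.X^(20*j+5+A+10*k)) * Prd M)

lemma ww_NN {A : ℕ} (hA : 7 ≤ A) (B D M j k : ℕ) : NN (ww A B D M j k) :=
  (NN_X _).mul (GG_all _ _ (by omega))

lemma sum_pair (g : ℕ → ℤ[X]) (M : ℕ) : ∑ s ∈ range (2*M), g s = ∑ j ∈ range M, (g (2*j) + g (2*j+1)) := by
  induction M with
  | zero => simp
  | succ n ih => rw [mul_add, mul_one, sum_range_succ, sum_range_succ, ih, sum_range_succ]; ring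

lemma TT_eq (A B D M : ℕ) : TT A B D M =
    ∑ j ∈ range M, ∑ k ∈ range M, X^(20*j^2+2*A*j+B+(20*j+D)*k) * (1 - X^(20*j+5+A+10*k)) := by
  unfold TT
  rw [sum_pair]
  refine sum_congr rfl fun j _ => ?_
  rw [mul_sum, mul_sum, ← sum_add_distrib]
  refine sum_congr rfl fun k _ => ?_
  have h1 : (-1:ℤ[X])^(2*j) = 1 := by rw [pow_mul]; norm_num
  rw [pow_succ (-1:ℤ[X]), h1]
  ring

lemma TT_mul (A B D M N : ℕ) : (TT A B D N : PowerSeries ℤ) * Prd M = ∑ j ∈ range N, ∑ k ∈ range N, ww A B D M j k := by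
  have h : ∀ p : ℤ[X], (p : PowerSeries ℤ) = Polynomial.coeToPowerSeries.ringHom p := fun p => rfl
  rw [TT_eq, h, map_sum, sum_mul]
  refine sum_congr rfl fun j _ => ?_
  rw [map_sum, sum_mul]
  refine sum_congr rfl fun k _ => ?_
  rw [← h]
  unfold ww
  rw [Polynomial.coe_mul, Polynomial.coe_pow, Polynomial.coe_sub, Polynomial.coe_pow, Polynomial.coe_X, Polynomial.coe_one, mul_assoc]

lemma TT_ge {A : ℕ} (hA : 7 ≤ A) (B D M N n j k : ℕ) (hj : j < N) (hk : k < N) :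
    PowerSeries.coeff n (ww A B D M j k) ≤ PowerSeries.coeff n ((TT A B D N : PowerSeries ℤ) * Prd M) := by
  rw [TT_mul, map_sum]
  simp_rw [map_sum]
  calc PowerSeries.coeff n (ww A B D M j k) ≤ ∑ k ∈ range N, PowerSeries.coeff n (ww A B D M j k) :=
        single_le_sum (f := fun k => PowerSeries.coeff n (ww A B D M j k)) (fun k _ => ww_NN hA B D M j k n) (mem_range.mpr hk)
    _ ≤ _ := single_le_sum (f := fun j => ∑ k ∈ range N, PowerSeries.coeff n (ww A B D M j k))
        (fun j _ => sum_nonneg fun k _ => ww_NN hA B D M j k n) (mem_range.mpr hj)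

lemma main_coeff (m M : ℕ) (h : m < M) : - dd (5*m+4) = 2 * PowerSeries.coeff (m+1) ((TT 12 4 4 (M+1) : PowerSeries ℤ) * Prd M)
    + 2 * PowerSeries.coeff (m+1) ((TT 8 3 6 (M+1) : PowerSeries ℤ) * Prd M) := by
  have h1 := (AA_dvd (M+1)).mul_right (Prd M)
  have h2 := PowerSeries.X_pow_dvd_iff.mp h1 (m+1) (by omega)
  have e : (PowerSeries.X * AA * (QQ (M+1) : PowerSeries ℤ) - 2 * ((TT 12 4 4 (M+1) + TT 8 3 6 (M+1) : ℤ[X]) : PowerSeries ℤ)) * Prd M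
     = PowerSeries.X * AA - ((TT 12 4 4 (M+1) : PowerSeries ℤ) * Prd M + (TT 12 4 4 (M+1) : PowerSeries ℤ) * Prd M
      + ((TT 8 3 6 (M+1) : PowerSeries ℤ) * Prd M + (TT 8 3 6 (M+1) : PowerSeries ℤ) * Prd M)) := by
    rw [Polynomial.coe_add]
    linear_combination (PowerSeries.X * AA) * Prd_mul M
  rw [e, map_sub, map_add, map_add, map_add, PowerSeries.coeff_succ_X_mul] at h2
  simp only [AA, PowerSeries.coeff_mk] at h2
  linarith

lemma main_pos (m : ℕ) (h0 : m ≠ 0) (h1 : m ≠ 1) (h4 : m ≠ 4) : dd (5*m+4) < 0 := by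
  have hm := main_coeff m (m+1) (by omega)
  have g1 : ∀ k, k < m+1+1 → PowerSeries.coeff (m+1) (ww 12 4 4 (m+1) 0 k) ≤ _ := fun k hk => TT_ge (A := 12) (by norm_num) 4 4 (m+1) (m+1+1) (m+1) 0 k (by omega) hk
  have g2 := TT_ge (A := 8) (by norm_num) 3 6 (m+1) (m+1+1) (m+1) 0 0 (by omega) (by omega)
  have n2 := ww_NN (A := 8) (by norm_num) 3 6 (m+1) 0 0 (m+1)
  have n1 := ww_NN (A := 12) (by norm_num) 4 4 (m+1) 0 0 (m+1)
  have c2 : (∃ a b, m + 1 = 3 + (3*a+7*b)) → dd (5*m+4) < 0 := by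
    rintro ⟨a, b, h⟩
    have : 0 < PowerSeries.coeff (m+1) (ww 8 3 6 (m+1) 0 0) := by
      have := X_pos (k := 3) (pos13 (m+1) a b)
      rw [← h] at this
      simpa [ww] using this
    have := g1 0 (by omega)
    linarith
  have c1 : (∃ a b, m + 1 = 4 + (3*a+7*b)) → dd (5*m+4) < 0 := by
    rintro ⟨a, b, h⟩
    have : 0 < PowerSeries.coeff (m+1) (ww 12 4 4 (m+1) 0 0) := by
      have := X_pos (k := 4) (pos17 (m+1) a b)
      rw [← h] at this
      simpa [ww] using this
    have := g1 0 (by omega)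
    linarith
  by_cases hbig : 14 ≤ m
  · obtain ⟨a, b, h⟩ := rep37 (m-2) (by omega)
    exact c2 ⟨a, b, by omega⟩
  · by_cases h7 : m = 7
    · have : 0 < PowerSeries.coeff (m+1) (ww 12 4 4 (m+1) 0 1) := by
        have hz : 0 < PowerSeries.coeff 0 ((1 - PowerSeries.X^27) * Prd (m+1)) := by
          have e : PowerSeries.coeff 0 ((1 - PowerSeries.X^27) * Prd (m+1)) = PowerSeries.coeff 0 ((1 - PowerSeries.X^13) * Prd (m+1)) := by
            simp
          rw [e]
          exact pos13 (m+1) 0 0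
        have := X_pos (k := 8) hz
        subst h7
        simpa [ww] using this
      have := g1 1 (by omega)
      linarith
    · have : m = 2 ∨ m = 5 ∨ m = 8 ∨ m = 9 ∨ m = 11 ∨ m = 12 ∨ m = 3 ∨ m = 6 ∨ m = 10 ∨ m = 13 := by omega
      rcases this with h | h | h | h | h | h | h | h | h | h
      · exact c2 ⟨0, 0, by omega⟩
      · exact c2 ⟨1, 0, by omega⟩
      · exact c2 ⟨2, 0, by omega⟩
      · exact c2 ⟨0, 1, by omega⟩
      · exact c2 ⟨3, 0, by omega⟩
      · exact c2 ⟨1, 1, by omega⟩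
      · exact c1 ⟨0, 0, by omega⟩
      · exact c1 ⟨1, 0, by omega⟩
      · exact c1 ⟨0, 1, by omega⟩
      · exact c1 ⟨1, 1, by omega⟩

lemma final (n : ℕ) (h5 : n % 5 = 4) (hex : n ∉ ({4, 9, 24} : Set ℕ)) : nbar 0 5 n < nbar 2 5 n := by
  simp only [Set.mem_insert_iff, Set.mem_singleton_iff, not_or] at hex
  have h := main_pos (n/5) (by omega) (by omega) (by omega)
  rw [show 5*(n/5)+4 = n by omega, ← dd_eq] at h
  omega

end OP
end

theorem stmt6 (n : ℕ) (hn : 0 < n) (h5 : n % 5 = 4)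
    (hex : n ∉ ({4, 9, 24} : Set ℕ)) :
    nbar 0 5 n < nbar 2 5 n := by exact OP.final n h5 hex
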